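/- arXiv:1808.04805 — 3 statements merged into one kernel-verified Lean document; each statement's English description precedes it below -/
import Mathlib

section
/- Let k be a field, n > 1 and d > 1 natural numbers, and let I be an ideal of k[x_1,…,x_n] generated by polynomials of total degree at most d. Let r ≤ n and suppose that the only polynomial in I involving only the variables x_1,…,x_r is 0. If I is prime up to (2nd)^(n·2^(4n+8)), then for every irreducible polynomial f involving only the variables x_1,…,x_r and of total degree at most (n−1)·2^(n·2^(2n+6))·d^(n·2^(3n+2)), the quotient ideal satisfies I : (f) = I. -/
/-!
Writing `E` for the bound on the degree of `f`, the colon ideal `I : (f)` turns out to be generated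
by polynomials of degree at most `(2E)^(2^n)`, which is at most the bound up to which `I` is prime.
As `f ∉ I` (it is nonzero and involves only `x₁,…,x_r`), each of these generators lies in `I`,
and hence so does `I : (f)`.

The degree bound is Hermann's theorem (`hermann`): over `k[x₁,…,x_n]` the solutions of a
homogeneous linear system of `p` equations with coefficients of degree at most `d` are generated by
solutions of degree at most `(2pd)^(2^n)`, whatever the number of unknowns. It is applied to the
single equation `f·g = Σ aᵢ sᵢ` with `sᵢ` among the generators of `I`.

Over an infinite field Hermann's theorem (`hermann_infinite`) is proved by induction on `n`. Let `Δ`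
be a nonzero minor of maximal size and, for its rows, of maximal degree `δ ≤ pd`. Cramer's rule
gives solutions of degree at most `δ`, each with `Δ` in one coordinate outside the columns of the
minor (`exists_cramer_vectors`). After a linear change of coordinates `Δ` is monic up to a scalar in
one variable (`exists_coordinates`), so by division every solution is, modulo the Cramer solutions,
of degree less than `δ` in that variable (`exists_reduction`). Comparing coefficients of its powers
makes such solutions the solutions of a system of `p(δ + d)` equations in one variable fewer, still
with coefficients of degree at most `d` (`mulVec_assemble_eq_zero_iff`).

A general field is embedded into its algebraic closure `K`; applying `k`-linear functionals `K → k`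
to coefficients transports generation by solutions of bounded degree back to `k`
(`hermann_descent`).
-/

open MvPolynomial

/-! ### Maximal minors and Cramer solutions -/

/-- A nonzero minor of maximal size whose degree is maximal among the minors with the same rows.
The last clause says that bordering the minor by one more row and column gives determinant zero. -/
theorem exists_maximal_minor {R : Type*} [CommRing R] [IsDomain R] {ρ γ : Type}
    [Fintype ρ] [Fintype γ] [DecidableEq γ] (A : Matrix ρ γ R) (deg : R → ℕ) (h0 : deg 0 = 0) :
    ∃ (s : ℕ) (e : Fin s → ρ) (c : Fin s → γ), s ≤ Fintype.card ρ ∧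
      (A.submatrix e c).det ≠ 0 ∧
      (∀ c' : Fin s → γ, deg (A.submatrix e c').det ≤ deg (A.submatrix e c).det) ∧
      ∀ i j, (A.submatrix e c).det * A i j =
        ∑ l, A i (c l) * (A.submatrix e c).cramer (fun l' => A (e l') j) l := by
  classical
  let P : ℕ → Prop := fun s => ∃ (e : Fin s → ρ) (c : Fin s → γ), (A.submatrix e c).det ≠ 0
  have hP0 : P 0 := ⟨Fin.elim0, Fin.elim0, by simp⟩
  have hPle : ∀ s, P s → s ≤ Fintype.card ρ := by
    rintro s ⟨e, c, h⟩
    have : Function.Injective e := by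
      intro a b hab
      by_contra hne
      exact h (Matrix.det_zero_of_row_eq hne (by ext x; simp [hab]))
    simpa using Fintype.card_le_of_injective e this
  obtain ⟨s, hs, hmax⟩ : ∃ s, P s ∧ ∀ t, P t → t ≤ s :=
    ⟨Nat.findGreatest P (Fintype.card ρ), Nat.findGreatest_spec (Nat.zero_le _) hP0,
      fun t ht => Nat.le_findGreatest (hPle t ht) ht⟩
  obtain ⟨e, c₀, hec⟩ := id hs
  obtain ⟨c, hc, hcmax⟩ := Finset.exists_max_image
    (Finset.univ.filter fun c : Fin s → γ => (A.submatrix e c).det ≠ 0)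
    (fun c => deg (A.submatrix e c).det) ⟨c₀, by simpa using hec⟩
  have hc' : (A.submatrix e c).det ≠ 0 := by simpa using hc
  refine ⟨s, e, c, hPle s hs, hc', ?_, ?_⟩
  · intro c'
    by_cases h : (A.submatrix e c').det = 0
    · simp [h, h0]
    · exact hcmax c' (by simpa using h)
  · intro i j
    have hz : (A.submatrix (Sum.elim e fun _ : Fin 1 => i) (Sum.elim c fun _ : Fin 1 => j)).det
        = 0 := by
      by_contra h
      have : P (s + 1) := by
        refine ⟨(Sum.elim e fun _ : Fin 1 => i) ∘ finSumFinEquiv.symm,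
          (Sum.elim c fun _ : Fin 1 => j) ∘ finSumFinEquiv.symm, ?_⟩
        rw [← Matrix.submatrix_submatrix, Matrix.det_submatrix_equiv_self]
        exact h
      have := hmax _ this
      omega
    -- A null vector `(a, b)` of the bordered minor has `b ≠ 0`, and `M a = -b (A (e ·) j)`
    -- determines `det M • a` by Cramer's rule.
    obtain ⟨w, hw0, hw⟩ := Matrix.exists_mulVec_eq_zero_iff.mpr hz
    set M := A.submatrix e c with hM
    set a : Fin s → R := fun l => w (Sum.inl l) with ha
    set b : R := w (Sum.inr 0) with hb
    have h1 : M.mulVec a = -(b • fun l' => A (e l') j) := by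
      ext l
      have := congrFun hw (Sum.inl l)
      simp [Matrix.mulVec, dotProduct, Fintype.sum_sum_type] at this
      simp only [Matrix.mulVec, dotProduct, hM, Matrix.submatrix_apply, Pi.neg_apply, Pi.smul_apply,
        smul_eq_mul]
      linear_combination this
    have h2 : ∑ l, A i (c l) * a l + A i j * b = 0 := by
      have := congrFun hw (Sum.inr 0)
      simpa [Matrix.mulVec, dotProduct, Fintype.sum_sum_type] using this
    have h3 : ∀ l, M.det * a l = -(b * M.cramer (fun l' => A (e l') j) l) := by
      intro l
      have := congrArg (M.adjugate.mulVec) h1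
      rw [Matrix.mulVec_mulVec, Matrix.adjugate_mul, Matrix.mulVec_neg, Matrix.mulVec_smul,
        ← Matrix.cramer_eq_adjugate_mulVec] at this
      simpa [Matrix.smul_mulVec] using congrFun this l
    have hb0 : b ≠ 0 := by
      intro hb0
      apply hw0
      ext x
      rcases x with l | l
      · have := h3 l
        simp only [hb0, zero_mul, neg_zero] at this
        exact (mul_eq_zero.mp this).resolve_left hc'
      · fin_cases l
        exact hb0
    apply mul_left_cancel₀ hb0
    have h4 : ∑ l, A i (c l) * (M.det * a l)
        = -(b * ∑ l, A i (c l) * M.cramer (fun l' => A (e l') j) l) := by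
      simp only [h3]
      rw [Finset.mul_sum, ← Finset.sum_neg_distrib]
      exact Finset.sum_congr rfl fun l _ => by ring
    have h5 : ∑ l, A i (c l) * (M.det * a l) = M.det * ∑ l, A i (c l) * a l := by
      rw [Finset.mul_sum]
      exact Finset.sum_congr rfl fun l _ => by ring
    linear_combination M.det * h2 - h4 + h5

theorem totalDegree_det_le {σ k : Type*} [CommRing k] {s d : ℕ}
    (M : Matrix (Fin s) (Fin s) (MvPolynomial σ k)) (h : ∀ i j, (M i j).totalDegree ≤ d) :
    M.det.totalDegree ≤ s * d := by
  rw [Matrix.det_apply]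
  refine totalDegree_finsetSum_le fun τ _ => ?_
  refine (totalDegree_smul_le _ _).trans ?_
  refine (totalDegree_finsetProd _ _).trans ?_
  refine (Finset.sum_le_sum fun i _ => h _ _).trans ?_
  simp

/-- The Cramer solutions `v j` of `A y = 0` attached to a maximal minor `Δ` with columns `c`: for
`j` outside the columns of the minor, `v j` has `Δ` at `j` and vanishes at the other indices outside
these columns; for `j` among them it is zero. Up to the factor `Δ`, every solution is a combination
of the `v j`. -/
theorem exists_cramer_vectors {R : Type*} [CommRing R] [IsDomain R] {ρ γ : Type}
    [Fintype ρ] [Fintype γ] [DecidableEq γ] (A : Matrix ρ γ R) (deg : R → ℕ) (h0 : deg 0 = 0)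
    (hneg : ∀ x, deg (-x) = deg x) :
    ∃ (s : ℕ) (e : Fin s → ρ) (c : Fin s → γ) (v : γ → γ → R), s ≤ Fintype.card ρ ∧
      (A.submatrix e c).det ≠ 0 ∧
      (∀ j, A.mulVec (v j) = 0) ∧
      (∀ j i, deg (v j i) ≤ deg (A.submatrix e c).det) ∧
      (∀ j, j ∉ Set.range c → ∀ i, i ∉ Set.range c →
        v j i = if i = j then (A.submatrix e c).det else 0) ∧
      (∀ j, j ∈ Set.range c → v j = 0) ∧
      ∀ y, A.mulVec y = 0 → (A.submatrix e c).det • y = ∑ j, y j • v j := by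
  classical
  obtain ⟨s, e, c, hs, hdet, hmax, hA⟩ := exists_maximal_minor A deg h0
  set M := A.submatrix e c with hM
  have hcinj : Function.Injective c := by
    intro a b hab
    by_contra hne
    exact hdet (Matrix.det_zero_of_column_eq hne (by intro x; simp [hM, hab]))
  let u : γ → γ → R := fun j i =>
    ∑ l, if c l = i then M.cramer (fun l' => A (e l') j) l else 0
  have hu_not : ∀ j i, i ∉ Set.range c → u j i = 0 := by
    intro j i hi
    refine Finset.sum_eq_zero fun l _ => if_neg fun h => hi ⟨l, h⟩
  have hu_mem : ∀ j l, u j (c l) = M.cramer (fun l' => A (e l') j) l := by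
    intro j l
    simp [u, hcinj.eq_iff]
  have hv_mem : ∀ j, j ∈ Set.range c → (fun i => (if i = j then M.det else 0) - u j i) = 0 := by
    rintro _ ⟨l, rfl⟩
    ext i
    have hc1 := Matrix.cramer_row_self M (fun l' => A (e l') (c l)) l (fun _ => rfl)
    by_cases hi : i ∈ Set.range c
    · obtain ⟨l', rfl⟩ := hi
      simp only [hu_mem, hc1, Pi.zero_apply, hcinj.eq_iff, Pi.single_apply, sub_self]
    · have : i ≠ c l := fun h => hi ⟨l, h.symm⟩
      simp [hu_not _ _ hi, this]
  refine ⟨s, e, c, fun j i => (if i = j then M.det else 0) - u j i, hs, hdet, ?_, ?_, ?_, hv_mem, ?_⟩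
  · intro j
    ext r
    have : ∑ i, A r i * u j i = ∑ l, A r (c l) * M.cramer (fun l' => A (e l') j) l := by
      simp only [u, Finset.mul_sum]
      rw [Finset.sum_comm]
      simp
    simp only [Matrix.mulVec, dotProduct, mul_sub, Finset.sum_sub_distrib, this, ← hA]
    simp [mul_comm]
  · intro j i
    by_cases hj : j ∈ Set.range c
    · have := congrFun (hv_mem j hj) i
      simp only [Pi.zero_apply] at this
      simp [this, h0]
    by_cases hi : i ∈ Set.range c
    · obtain ⟨l, rfl⟩ := hi
      have hne : c l ≠ j := fun h => hj ⟨l, h⟩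
      simp only [hne, if_false, zero_sub, hneg, hu_mem]
      rw [Matrix.cramer_apply]
      convert hmax (Function.update c l j) using 3
      ext a b
      by_cases hb : b = l
      · subst hb; simp
      · simp [hM, hb]
    · simp only [hu_not _ _ hi, sub_zero]
      split_ifs
      · exact le_rfl
      · simp [h0]
  · intro j hj i hi
    simp [hu_not _ _ hi, hM]
  · intro y hy
    ext i
    simp only [Pi.smul_apply, smul_eq_mul, Finset.sum_apply, mul_sub, Finset.sum_sub_distrib]
    have : ∑ j, y j * u j i = 0 := by
      simp only [u, Finset.mul_sum]
      rw [Finset.sum_comm]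
      refine Finset.sum_eq_zero fun l _ => ?_
      by_cases h : c l = i
      · simp only [h, if_true]
        have h1 : ∑ j, y j • M.cramer (fun l' => A (e l') j) = 0 := by
          simp only [← map_smul]
          rw [← map_sum]
          have : (∑ j, y j • fun l' => A (e l') j) = 0 := by
            ext l'
            have := congrFun hy (e l')
            simpa [Matrix.mulVec, dotProduct, mul_comm] using this
          rw [this, map_zero]
        simpa using congrFun h1 l
      · simp [h]
    rw [this]
    simp [mul_comm, hM]

/-- Division of the coordinates outside `C` by the monic `Δ` reduces every solution, modulo the
Cramer solutions `v j`, to one all of whose coordinates have degree less than that of `Δ`. The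
coordinates in `C` obey the bound because `Δ • z` is a combination of the `v j` with `j ∉ C`. -/
theorem exists_reduction {T : Type*} [CommRing T] {ρ γ : Type} [Fintype γ]
    [DecidableEq γ] (A : Matrix ρ γ (Polynomial T)) (Δ : Polynomial T) (hΔ : Δ.Monic)
    (C : Set γ) (v : γ → γ → Polynomial T)
    (hv : ∀ j, A.mulVec (v j) = 0)
    (hdeg : ∀ j i, (v j i).natDegree ≤ Δ.natDegree)
    (hnot : ∀ j, j ∉ C → ∀ i, i ∉ C → v j i = if i = j then Δ else 0)
    (hmem : ∀ j, j ∈ C → v j = 0)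
    (hker : ∀ y, A.mulVec y = 0 → Δ • y = ∑ j, y j • v j)
    (y : γ → Polynomial T) (hy : A.mulVec y = 0) :
    ∃ (q z : γ → Polynomial T), y = ∑ j, q j • v j + z ∧ A.mulVec z = 0 ∧
      ∀ i, (z i).degree < Δ.natDegree := by
  classical
  nontriviality T
  set q : γ → Polynomial T := fun j => y j /ₘ Δ
  set z : γ → Polynomial T := y - ∑ j, q j • v j with hz
  have hz0 : A.mulVec z = 0 := by
    rw [hz, Matrix.mulVec_sub, hy, ← Matrix.mulVecLin_apply, map_sum]
    simp [hv]
  have hΔdeg : Δ.degree = Δ.natDegree := Polynomial.degree_eq_natDegree hΔ.ne_zero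
  have hzn : ∀ i, i ∉ C → (z i).degree < Δ.natDegree := by
    intro i hi
    have : z i = y i %ₘ Δ := by
      have h1 : ∑ j, q j * v j i = q i * Δ := by
        rw [Finset.sum_eq_single i]
        · rw [hnot i hi i hi, if_pos rfl]
        · intro j _ hj
          by_cases hjC : j ∈ C
          · simp [hmem j hjC]
          · rw [hnot j hjC i hi, if_neg hj.symm, mul_zero]
        · simp
      simp only [hz, Pi.sub_apply, Finset.sum_apply, Pi.smul_apply, smul_eq_mul, h1]
      rw [Polynomial.modByMonic_eq_sub_mul_div]
      ring
    rw [this, ← hΔdeg]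
    exact Polynomial.degree_modByMonic_lt _ hΔ
  refine ⟨q, z, by simp [hz], hz0, fun i => ?_⟩
  have h1 := congrFun (hker z hz0) i
  simp only [Pi.smul_apply, smul_eq_mul, Finset.sum_apply] at h1
  have h2 : (∑ j, z j * v j i).degree < (Δ.natDegree + Δ.natDegree : ℕ) := by
    refine lt_of_le_of_lt (Polynomial.degree_sum_le _ _) ?_
    rw [Finset.sup_lt_iff (by exact WithBot.bot_lt_coe _)]
    intro j _
    by_cases hjC : j ∈ C
    · simp only [hmem j hjC, Pi.zero_apply, mul_zero, Polynomial.degree_zero]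
      exact WithBot.bot_lt_coe _
    · by_cases h0 : z j = 0
      · simp only [h0, zero_mul, Polynomial.degree_zero]
        exact WithBot.bot_lt_coe _
      have h3 := hzn j hjC
      rw [Polynomial.degree_eq_natDegree h0] at h3
      have h3' : (z j).natDegree < Δ.natDegree := by exact_mod_cast h3
      refine lt_of_le_of_lt Polynomial.degree_le_natDegree ?_
      have h4 := Polynomial.natDegree_mul_le (p := z j) (q := v j i)
      have h5 := hdeg j i
      exact_mod_cast (by omega : (z j * v j i).natDegree < Δ.natDegree + Δ.natDegree)
  rw [← h1] at h2
  by_cases h0 : z i = 0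
  · simp only [h0, Polynomial.degree_zero]
    exact WithBot.bot_lt_coe _
  have h6 : Δ * z i ≠ 0 := by rw [mul_comm]; exact hΔ.mul_left_ne_zero h0
  rw [Polynomial.degree_eq_natDegree h6, hΔ.natDegree_mul' h0] at h2
  rw [Polynomial.degree_eq_natDegree h0]
  have h2' : Δ.natDegree + (z i).natDegree < Δ.natDegree + Δ.natDegree := by exact_mod_cast h2
  exact_mod_cast (by omega : (z i).natDegree < Δ.natDegree)

/-! ### Linear changes of coordinates -/

/-- `P ∈ k[x₁,…,x_n][X]`, regarded as a polynomial in `n + 1` variables, has total degree at most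
`N`. The zero coefficients have to be excluded since their `totalDegree` is `0`. -/
def DegLE {k : Type*} [CommRing k] {n : ℕ} (N : ℕ) (P : Polynomial (MvPolynomial (Fin n) k)) :
    Prop :=
  ∀ i, P.coeff i ≠ 0 → (P.coeff i).totalDegree + i ≤ N

theorem totalDegree_le_iff_degLE {k : Type*} [CommRing k] {n : ℕ} (N : ℕ)
    (p : MvPolynomial (Fin (n + 1)) k) :
    p.totalDegree ≤ N ↔ DegLE N (finSuccEquiv k n p) := by
  constructor
  · intro h i hi
    exact (totalDegree_coeff_finSuccEquiv_add_le p i hi).trans h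
  · intro h
    refine Finset.sup_le fun m hm => ?_
    have h1 : Finsupp.cons (m 0) (Finsupp.tail m) ∈ p.support := by
      rwa [Finsupp.cons_tail]
    rw [← mem_support_coeff_finSuccEquiv] at h1
    have h2 := h (m 0) (by intro h0; rw [h0] at h1; simp at h1)
    have h3 := le_totalDegree h1
    rw [← Finsupp.cons_tail m, Finsupp.sum_cons]
    omega

theorem totalDegree_aeval_le_of_linear {k σ τ : Type*} [CommRing k]
    (f : σ → MvPolynomial τ k) (hf : ∀ i, (f i).totalDegree ≤ 1) (p : MvPolynomial σ k) :
    (aeval f p).totalDegree ≤ p.totalDegree := by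
  rw [aeval_def, eval₂_eq]
  refine totalDegree_finsetSum_le fun m hm => ?_
  refine (totalDegree_mul _ _).trans ?_
  rw [algebraMap_eq, totalDegree_C, zero_add]
  refine (totalDegree_finsetProd _ _).trans ?_
  refine le_trans ?_ (le_totalDegree hm)
  refine Finset.sum_le_sum fun i _ => (totalDegree_pow _ _).trans ?_
  simpa using Nat.mul_le_mul_left (m i) (hf i)

/-- The coefficient of `T ^ N` in the restriction `p(a T)` of `p` to the line through `a`. -/
theorem coeff_aeval_line {k σ : Type*} [Field k] (a : σ → k) (N : ℕ)
    (p : MvPolynomial σ k) :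
    (aeval (fun i => Polynomial.C (a i) * Polynomial.X) p : Polynomial k).coeff N =
      eval a (homogeneousComponent N p) := by
  induction p using MvPolynomial.induction_on' with
  | monomial m c =>
    rw [homogeneousComponent_of_mem (isHomogeneous_monomial (n := m.degree) c rfl),
      aeval_monomial]
    simp only [mul_pow, Finsupp.prod_mul, ← map_pow]
    have h1 : (m.prod fun _ e => (Polynomial.X : Polynomial k) ^ e)
        = Polynomial.X ^ m.degree := by
      rw [Finsupp.prod, Finset.prod_pow_eq_pow_sum]; rfl
    have h2 : (m.prod fun i e => Polynomial.C (a i ^ e))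
        = Polynomial.C (m.prod fun i e => a i ^ e) := by
      rw [Finsupp.prod, Finsupp.prod, map_prod]
    rw [h1, h2, Polynomial.algebraMap_eq, ← mul_assoc, ← map_mul, Polynomial.coeff_C_mul_X_pow]
    split_ifs with h
    · simp [eval_monomial]
    · simp
  | add p q hp hq => simp only [map_add, Polynomial.coeff_add, hp, hq]

/-- The substitution `x₀ ↦ a₀ x₀`, `xᵢ₊₁ ↦ xᵢ₊₁ + aᵢ x₀`. -/
noncomputable def shear {k : Type*} [Field k] {n : ℕ} (a₀ : k) (a : Fin n → k) :
    MvPolynomial (Fin (n + 1)) k →ₐ[k] MvPolynomial (Fin (n + 1)) k :=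
  aeval (Fin.cases (C a₀ * X 0) fun i => X i.succ + C (a i) * X 0)

theorem totalDegree_shear_le {k : Type*} [Field k] {n : ℕ} (a₀ : k) (a : Fin n → k)
    (p : MvPolynomial (Fin (n + 1)) k) : (shear a₀ a p).totalDegree ≤ p.totalDegree := by
  have hX : ∀ c : k, (C c * X 0 : MvPolynomial (Fin (n + 1)) k).totalDegree ≤ 1 := fun c =>
    (isHomogeneous_C_mul_X c 0).totalDegree_le
  refine totalDegree_aeval_le_of_linear _ (fun i => ?_) p
  refine Fin.cases (hX a₀) (fun j => ?_) i
  refine (totalDegree_add _ _).trans (max_le (isHomogeneous_X k _).totalDegree_le (hX _))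

theorem shear_comp_shear {k : Type*} [Field k] {n : ℕ} (a₀ b₀ : k) (a b : Fin n → k)
    (h₀ : a₀ * b₀ = 1) (h : ∀ i, a i + b i * a₀ = 0) :
    (shear a₀ a).comp (shear b₀ b) = AlgHom.id k (MvPolynomial (Fin (n + 1)) k) := by
  ext1 i
  refine Fin.cases ?_ (fun j => ?_) i
  · simp only [shear, AlgHom.comp_apply, aeval_X, Fin.cases_zero, map_mul, AlgHom.id_apply]
    rw [← algebraMap_eq, AlgHom.commutes, ← mul_assoc, ← map_mul, mul_comm b₀, h₀]
    simp
  · simp only [shear, AlgHom.comp_apply, aeval_X, Fin.cases_succ, Fin.cases_zero, map_mul, map_add,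
      AlgHom.id_apply]
    rw [← algebraMap_eq, AlgHom.commutes, add_assoc, ← mul_assoc, ← map_mul, ← add_mul, ← map_add, h]
    simp

/-- Linear coordinates in which `Δ` is, up to a nonzero scalar, monic in the polynomial variable
with degree equal to its total degree. -/
theorem exists_coordinates {k : Type*} [Field k] [Infinite k] {n : ℕ}
    (Δ : MvPolynomial (Fin (n + 1)) k) (hΔ : Δ ≠ 0) :
    ∃ ψ : MvPolynomial (Fin (n + 1)) k ≃ₐ[k] Polynomial (MvPolynomial (Fin n) k),
      (∀ N p, p.totalDegree ≤ N ↔ DegLE N (ψ p)) ∧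
      ∃ c : k, c ≠ 0 ∧ (ψ Δ).coeff Δ.totalDegree = C c := by
  set P := homogeneousComponent Δ.totalDegree Δ with hP
  have hP0 : P ≠ 0 := by
    obtain ⟨m, hm, hm2⟩ := Finset.exists_mem_eq_sup Δ.support (support_nonempty.mpr hΔ)
      (fun s => s.degree)
    intro h0
    have := congrArg (coeff m) h0
    rw [hP, coeff_homogeneousComponent, if_pos] at this
    · exact (mem_support_iff.mp hm) (by simpa using this)
    · exact hm2.symm
  -- The factor `X 0` forces `a 0 ≠ 0`, which makes the substitution invertible.
  obtain ⟨a, ha⟩ : ∃ a, eval a (X 0 * P) ≠ 0 := by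
    by_contra! h
    exact mul_ne_zero (X_ne_zero 0) hP0 (MvPolynomial.funext fun x => by simpa using h x)
  rw [map_mul, eval_X] at ha
  have ha0 : a 0 ≠ 0 := left_ne_zero_of_mul ha
  have haP : eval a P ≠ 0 := right_ne_zero_of_mul ha
  let φ : MvPolynomial (Fin (n + 1)) k ≃ₐ[k] MvPolynomial (Fin (n + 1)) k :=
    AlgEquiv.ofAlgHom (shear (a 0) fun i => a i.succ)
      (shear (a 0)⁻¹ fun i => -(a i.succ * (a 0)⁻¹))
      (shear_comp_shear _ _ _ _ (mul_inv_cancel₀ ha0) fun i => by field_simp; ring)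
      (shear_comp_shear _ _ _ _ (inv_mul_cancel₀ ha0) fun i => by ring)
  have hφ : ∀ p, (φ p).totalDegree = p.totalDegree := by
    intro p
    apply le_antisymm (totalDegree_shear_le _ _ p)
    have h1 : (φ.symm (φ p)).totalDegree ≤ (φ p).totalDegree := totalDegree_shear_le _ _ (φ p)
    rwa [AlgEquiv.symm_apply_apply] at h1
  let ψ := φ.trans (finSuccEquiv k n)
  have hψ : ∀ N p, p.totalDegree ≤ N ↔ DegLE N (ψ p) := by
    intro N p
    rw [← hφ p]
    exact totalDegree_le_iff_degLE N (φ p)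
  refine ⟨ψ, hψ, eval a P, haP, ?_⟩
  have h1 : ((ψ Δ).coeff Δ.totalDegree).totalDegree = 0 := by
    by_cases h : (ψ Δ).coeff Δ.totalDegree = 0
    · simp [h]
    · have := (hψ _ Δ).mp le_rfl _ h
      omega
  rw [totalDegree_eq_zero_iff_eq_C] at h1
  rw [h1]
  congr 1
  -- Setting the other variables to zero restricts `Δ` to the line through `a`, and the scalar
  -- `eval a P` is the coefficient of degree `Δ.totalDegree` there.
  have h2 : (Polynomial.mapAlgHom (aeval (fun _ : Fin n => (0 : k)))).comp ψ.toAlgHom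
      = (aeval (fun i => Polynomial.C (a i) * Polynomial.X) :
        MvPolynomial (Fin (n + 1)) k →ₐ[k] Polynomial k) := by
    have hC : ∀ c : k, finSuccEquiv k n (C c) = Polynomial.C (C c) := fun c => by
      simp [finSuccEquiv_apply]
    ext1 i
    refine Fin.cases ?_ (fun j => ?_) i
    · simp [ψ, φ, shear, hC, finSuccEquiv_X_zero]
    · simp [ψ, φ, shear, hC, finSuccEquiv_X_zero, finSuccEquiv_X_succ]
  have h3 := congrArg (fun q => Polynomial.coeff q Δ.totalDegree) (DFunLike.congr_fun h2 Δ)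
  simp only [coeff_aeval_line, ← hP] at h3
  rw [← h3]
  change _ = (Polynomial.map _ (ψ Δ)).coeff _
  rw [Polynomial.coeff_map, h1]
  simp

/-! ### Elimination of one variable -/

/-- The vector of polynomials of degree less than `δ` with the coefficients `w`. -/
noncomputable def assemble {T : Type*} [CommRing T] {γ : Type} {δ : ℕ} (w : γ × Fin δ → T) :
    γ → Polynomial T :=
  fun j => ∑ i : Fin δ, Polynomial.C (w (j, i)) * Polynomial.X ^ (i : ℕ)

/-- The system satisfied by the coefficients of `y` when `A y = 0`, `A` has entries of degree at
most `d` and `y` has entries of degree less than `δ`: the equation `(r, t)` says that the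
coefficient of `X ^ t` in the `r`-th entry of `A y` vanishes. -/
def unfoldMatrix {T : Type*} [CommRing T] {ρ γ : Type} (δ d : ℕ)
    (A : Matrix ρ γ (Polynomial T)) : Matrix (ρ × Fin (δ + d)) (γ × Fin δ) T :=
  fun r c => if (c.2 : ℕ) ≤ r.2 then (A r.1 c.1).coeff (r.2 - c.2) else 0

theorem coeff_mulVec_assemble {T : Type*} [CommRing T] {ρ γ : Type} [Fintype γ]
    {δ : ℕ} (A : Matrix ρ γ (Polynomial T)) (w : γ × Fin δ → T) (r : ρ) (t : ℕ) :
    (A.mulVec (assemble w) r).coeff t =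
      ∑ c : γ × Fin δ, (if (c.2 : ℕ) ≤ t then (A r c.1).coeff (t - c.2) else 0) * w c := by
  simp only [Matrix.mulVec, dotProduct, assemble, Finset.mul_sum, Polynomial.finsetSum_coeff,
    Fintype.sum_prod_type]
  refine Finset.sum_congr rfl fun j _ => Finset.sum_congr rfl fun i _ => ?_
  rw [← mul_assoc, Polynomial.coeff_mul_X_pow']
  split_ifs <;> simp

theorem mulVec_assemble_eq_zero_iff {T : Type*} [CommRing T] {ρ γ : Type} [Fintype γ]
    {δ d : ℕ} (A : Matrix ρ γ (Polynomial T)) (hA : ∀ r j, (A r j).natDegree ≤ d)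
    (w : γ × Fin δ → T) :
    A.mulVec (assemble w) = 0 ↔ (unfoldMatrix δ d A).mulVec w = 0 := by
  constructor
  · intro h
    ext ⟨r, t⟩
    have := congrArg (fun P => Polynomial.coeff P t) (congrFun h r)
    simp only [coeff_mulVec_assemble] at this
    simpa [Matrix.mulVec, dotProduct, unfoldMatrix] using this
  · intro h
    ext r t
    rw [coeff_mulVec_assemble]
    by_cases ht : t < δ + d
    · have := congrFun h (r, ⟨t, ht⟩)
      simpa [Matrix.mulVec, dotProduct, unfoldMatrix] using this
    · simp only [Pi.zero_apply, Polynomial.coeff_zero]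
      refine Finset.sum_eq_zero fun c _ => ?_
      have h1 := hA r c.1
      have h2 := c.2.2
      rw [Polynomial.coeff_eq_zero_of_natDegree_lt (by omega)]
      simp

theorem assemble_coeff {T : Type*} [CommRing T] {γ : Type} {δ : ℕ} (z : γ → Polynomial T)
    (hz : ∀ j, (z j).degree < δ) :
    assemble (fun c : γ × Fin δ => (z c.1).coeff c.2) = z := by
  ext1 j
  simp only [assemble]
  rw [Fin.sum_univ_eq_sum_range (fun i => Polynomial.C ((z j).coeff i) * Polynomial.X ^ i) δ]
  by_cases h0 : z j = 0
  · simp [h0]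
  rw [← Polynomial.as_sum_range_C_mul_X_pow']
  have := hz j
  rw [Polynomial.degree_eq_natDegree h0] at this
  exact_mod_cast this

theorem degLE_assemble {k : Type*} [CommRing k] {n : ℕ} {γ : Type} {δ B : ℕ}
    (w : γ × Fin δ → MvPolynomial (Fin n) k) (hw : ∀ c, (w c).totalDegree ≤ B) (j : γ) :
    DegLE (B + δ) (assemble w j) := by
  intro i hi
  have h1 : (assemble w j).coeff i = if h : i < δ then w (j, ⟨i, h⟩) else 0 := by
    simp only [assemble, Polynomial.finsetSum_coeff, Polynomial.coeff_C_mul_X_pow]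
    split_ifs with h
    · rw [Finset.sum_eq_single ⟨i, h⟩]
      · simp
      · intro b _ hb
        rw [if_neg]
        rintro rfl
        exact hb rfl
      · simp
    · refine Finset.sum_eq_zero fun b _ => if_neg ?_
      have := b.2
      omega
  rw [h1] at hi ⊢
  split_ifs at hi ⊢ with h
  · have := hw (j, ⟨i, h⟩)
    omega
  · exact absurd rfl hi

theorem natDegree_le_of_degLE {k : Type*} [CommRing k] {n N : ℕ}
    {P : Polynomial (MvPolynomial (Fin n) k)} (h : DegLE N P) : P.natDegree ≤ N := by
  rw [Polynomial.natDegree_le_iff_coeff_eq_zero]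
  intro i hi
  by_contra h0
  have := h i h0
  omega

/-! ### Hermann's degree bound -/

/-- Hermann's bound over an infinite field. The slack `+ q` in the bound on the degrees is what the
induction needs: passing to one variable fewer replaces `q` by `2 * q ^ 2`. -/
theorem hermann_infinite {k : Type*} [Field k] [Infinite k] (n : ℕ) :
    ∀ (q d : ℕ) (ρ γ : Type) [Fintype ρ] [Fintype γ] [DecidableEq γ]
      (A : Matrix ρ γ (MvPolynomial (Fin n) k)), 1 ≤ q → Fintype.card ρ * d ≤ q →
      (∀ i j, (A i j).totalDegree ≤ d) → ∀ y, A.mulVec y = 0 →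
      y ∈ Submodule.span (MvPolynomial (Fin n) k)
        {w | A.mulVec w = 0 ∧ ∀ j, (w j).totalDegree + q ≤ (2 * q) ^ 2 ^ n} := by
  induction n with
  | zero =>
    intro q d ρ γ _ _ _ A hq hpd hA y hy
    refine Submodule.subset_span ⟨hy, fun j => ?_⟩
    have : (y j).totalDegree = 0 := by
      rw [eq_C_of_isEmpty (y j), totalDegree_C]
    rw [this]
    simp
    omega
  | succ n ih =>
    intro q d ρ γ _ _ _ A hq hpd hA y hy
    set S : Set (γ → MvPolynomial (Fin (n + 1)) k) :=
      {w | A.mulVec w = 0 ∧ ∀ j, (w j).totalDegree + q ≤ (2 * q) ^ 2 ^ (n + 1)} with hS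
    obtain ⟨s, e, c, v, hs, hdet, hv, hvdeg, hvnot, hvmem, hvker⟩ :=
      exists_cramer_vectors A totalDegree totalDegree_zero totalDegree_neg
    set Δ := (A.submatrix e c).det with hΔ
    have hΔq : Δ.totalDegree ≤ q :=
      (totalDegree_det_le _ fun i j => hA _ _).trans ((Nat.mul_le_mul_right d hs).trans hpd)
    set δ := Δ.totalDegree with hδ
    obtain ⟨ψ, hψ, u, hu, hlead⟩ := exists_coordinates Δ hdet
    set A' : Matrix ρ γ (Polynomial (MvPolynomial (Fin n) k)) := A.map ψ with hA'
    have hmv : ∀ w, A'.mulVec (fun j => ψ (w j)) = fun i => ψ (A.mulVec w i) := by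
      intro w
      ext1 i
      simp [Matrix.mulVec, dotProduct, hA']
    have hmv0 : ∀ w, A.mulVec w = 0 ↔ A'.mulVec (fun j => ψ (w j)) = 0 := by
      intro w
      rw [hmv, funext_iff, funext_iff]
      simp
    have hmv0' : ∀ z, A'.mulVec z = 0 ↔ A.mulVec (fun j => ψ.symm (z j)) = 0 := by
      intro z
      rw [hmv0]
      simp
    have hpow : (2 * q) ^ 2 ^ (n + 1) = (2 * (2 * q ^ 2)) ^ 2 ^ n := by
      rw [pow_succ' 2 n, pow_mul]
      congr 1
      ring
    have hq2 : q ≤ q ^ 2 := Nat.le_self_pow two_ne_zero q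
    have hqle : q + q ≤ (2 * q) ^ 2 ^ (n + 1) := by
      have := Nat.le_self_pow (n := 2 ^ (n + 1)) (by positivity) (2 * q)
      omega
    have hvS : ∀ j, v j ∈ S := fun j =>
      ⟨hv j, fun i => by have := hvdeg j i; omega⟩
    set cu : Polynomial (MvPolynomial (Fin n) k) := Polynomial.C (C u⁻¹) with hcu
    have hnatΔ : (ψ Δ).natDegree = δ := by
      apply le_antisymm (natDegree_le_of_degLE ((hψ δ Δ).mp le_rfl))
      apply Polynomial.le_natDegree_of_ne_zero
      rw [hlead]
      simpa using hu
    have hcoeff : (cu * ψ Δ).coeff δ = 1 := by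
      rw [hcu, Polynomial.coeff_C_mul, hlead, ← map_mul, inv_mul_cancel₀ hu, map_one]
    have hnat : (cu * ψ Δ).natDegree = δ := by
      apply le_antisymm
      · exact (Polynomial.natDegree_C_mul_le _ _).trans hnatΔ.le
      · apply Polynomial.le_natDegree_of_ne_zero
        rw [hcoeff]
        exact one_ne_zero
    have hmonic : (cu * ψ Δ).Monic := by
      rw [Polynomial.Monic, Polynomial.leadingCoeff, hnat, hcoeff]
    obtain ⟨qq, z, hyz, hz, hzdeg⟩ := exists_reduction A' (cu * ψ Δ) hmonic (Set.range c)
      (fun j i => cu * ψ (v j i))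
      (by
        intro j
        have : (fun i => cu * ψ (v j i)) = cu • fun i => ψ (v j i) := rfl
        rw [this, Matrix.mulVec_smul, (hmv0 _).mp (hv j), smul_zero])
      (by
        intro j i
        rw [hnat]
        exact (Polynomial.natDegree_C_mul_le _ _).trans
          (natDegree_le_of_degLE ((hψ δ _).mp (hvdeg j i))))
      (by
        intro j hj i hi
        rw [hvnot j hj i hi]
        split_ifs <;> simp)
      (by
        intro j hj
        ext1 i
        simp [hvmem j hj])
      (by
        intro w hw
        have h1 := hvker _ ((hmv0' w).mp hw)
        ext1 i
        have h2 := congrArg ψ (congrFun h1 i)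
        simp only [Pi.smul_apply, smul_eq_mul, map_mul, AlgEquiv.apply_symm_apply,
          Finset.sum_apply, map_sum] at h2
        simp only [Pi.smul_apply, smul_eq_mul, Finset.sum_apply, mul_assoc, h2, Finset.mul_sum]
        exact Finset.sum_congr rfl fun j _ => by ring)
      (fun j => ψ (y j)) ((hmv0 y).mp hy)
    rw [hnat] at hzdeg
    have hy_eq : y = ∑ j, (ψ.symm (qq j * cu)) • v j + fun j => ψ.symm (z j) := by
      ext1 i
      apply ψ.injective
      have := congrFun hyz i
      simp only [Pi.add_apply, Finset.sum_apply, Pi.smul_apply, smul_eq_mul] at this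
      simp only [Pi.add_apply, Finset.sum_apply, Pi.smul_apply, smul_eq_mul, map_add, map_sum,
        map_mul, AlgEquiv.apply_symm_apply, this, mul_assoc]
    rw [hy_eq]
    refine Submodule.add_mem _ (Submodule.sum_mem _ fun j _ =>
      Submodule.smul_mem _ _ (Submodule.subset_span (hvS j))) ?_
    -- The remainder `z` has degree less than `δ` and falls under the induction hypothesis.
    have hA'deg : ∀ i j, (A' i j).natDegree ≤ d := fun i j =>
      natDegree_le_of_degLE ((hψ d _).mp (hA i j))
    rw [← assemble_coeff z hzdeg] at hz ⊢
    rw [mulVec_assemble_eq_zero_iff A' hA'deg] at hz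
    have hmem := ih (2 * q ^ 2) d (ρ × Fin (δ + d)) (γ × Fin δ) (unfoldMatrix δ d A')
      (by nlinarith) (by
        rw [Fintype.card_prod, Fintype.card_fin]
        rcases Nat.eq_zero_or_pos (Fintype.card ρ) with h0 | h0
        · simp [h0]
        · have h1 : d ≤ q := le_trans (Nat.le_mul_of_pos_left d h0) hpd
          calc Fintype.card ρ * (δ + d) * d = (Fintype.card ρ * d) * (δ + d) := by ring
            _ ≤ q * (q + q) := Nat.mul_le_mul hpd (by omega)
            _ = 2 * q ^ 2 := by ring)
      (by
        intro r j
        simp only [unfoldMatrix]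
        split_ifs
        · by_cases h0 : (A' r.1 j.1).coeff (r.2 - j.2) = 0
          · simp [h0]
          · have := (hψ d _).mp (hA r.1 j.1) _ h0
            exact le_trans (Nat.le_add_right _ _) this
        · simp) _ hz
    clear hz
    generalize (fun c : γ × Fin δ => (z c.1).coeff (c.2 : ℕ)) = ζ at hmem ⊢
    induction hmem using Submodule.span_induction with
    | mem w hw =>
      refine Submodule.subset_span ⟨?_, fun j => ?_⟩
      · rw [← hmv0', mulVec_assemble_eq_zero_iff A' hA'deg]
        exact hw.1
      · have hB : ∀ c, (w c).totalDegree ≤ (2 * (2 * q ^ 2)) ^ 2 ^ n - 2 * q ^ 2 := fun c => by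
          have := hw.2 c
          omega
        have h1 := degLE_assemble w hB j
        rw [← ψ.apply_symm_apply (assemble w j), ← hψ] at h1
        have h2 := Nat.le_self_pow (n := 2 ^ n) (by positivity) (2 * (2 * q ^ 2))
        rw [hpow]
        change (ψ.symm (assemble w j)).totalDegree + q ≤ _
        omega
    | zero =>
      convert Submodule.zero_mem _
      simp [assemble]
    | add w₁ w₂ _ _ h₁ h₂ =>
      convert Submodule.add_mem _ h₁ h₂ using 1
      ext1 j
      simp only [assemble, Pi.add_apply, ← map_add, ← Finset.sum_add_distrib, ← add_mul]
    | smul t w _ h =>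
      convert Submodule.smul_mem _ (ψ.symm (Polynomial.C t)) h using 1
      ext1 j
      simp only [assemble, Pi.smul_apply, smul_eq_mul, map_mul, ← Finset.mul_sum, mul_assoc]

/-- Application of a `k`-linear functional `l : K → k` to all coefficients of a polynomial. -/
noncomputable def coeffwise {k K σ : Type*} [Field k] [Field K] [Algebra k K] (l : K →ₗ[k] k)
    (P : MvPolynomial σ K) : MvPolynomial σ k :=
  ∑ m ∈ P.support, monomial m (l (coeff m P))

theorem coeff_coeffwise {k K σ : Type*} [Field k] [Field K] [Algebra k K] (l : K →ₗ[k] k)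
    (P : MvPolynomial σ K) (m : σ →₀ ℕ) : coeff m (coeffwise l P) = l (coeff m P) := by
  classical
  rw [coeffwise, coeff_sum]
  simp only [coeff_monomial]
  rw [Finset.sum_ite_eq' P.support m]
  split_ifs with h
  · rfl
  · rw [notMem_support_iff.mp h, map_zero]

theorem coeffwise_add {k K σ : Type*} [Field k] [Field K] [Algebra k K] (l : K →ₗ[k] k)
    (P Q : MvPolynomial σ K) : coeffwise l (P + Q) = coeffwise l P + coeffwise l Q := by
  ext m
  simp [coeff_coeffwise]

theorem coeffwise_zero {k K σ : Type*} [Field k] [Field K] [Algebra k K] (l : K →ₗ[k] k) :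
    coeffwise l (0 : MvPolynomial σ K) = 0 := by
  ext m
  simp [coeff_coeffwise]

theorem coeffwise_sum {k K σ ι : Type*} [Field k] [Field K] [Algebra k K] (l : K →ₗ[k] k)
    (s : Finset ι) (P : ι → MvPolynomial σ K) :
    coeffwise l (∑ i ∈ s, P i) = ∑ i ∈ s, coeffwise l (P i) := by
  ext m
  simp [coeff_coeffwise, coeff_sum]

theorem coeffwise_map_mul {k K σ : Type*} [Field k] [Field K] [Algebra k K] (l : K →ₗ[k] k)
    (p : MvPolynomial σ k) (P : MvPolynomial σ K) :
    coeffwise l (map (algebraMap k K) p * P) = p * coeffwise l P := by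
  classical
  ext m
  rw [coeff_coeffwise, coeff_mul, coeff_mul, map_sum]
  refine Finset.sum_congr rfl fun x _ => ?_
  rw [coeff_map, ← Algebra.smul_def, map_smul, coeff_coeffwise, smul_eq_mul]

theorem totalDegree_coeffwise_le {k K σ : Type*} [Field k] [Field K] [Algebra k K]
    (l : K →ₗ[k] k) (P : MvPolynomial σ K) :
    (coeffwise l P).totalDegree ≤ P.totalDegree := by
  refine Finset.sup_mono fun m hm => ?_
  rw [mem_support_iff] at hm ⊢
  intro h
  rw [coeff_coeffwise, h, map_zero] at hm
  exact hm rfl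

/-- Hermann's bound over `k` follows from the bound over an infinite extension `K`. Every functional
`l : K → k` maps the `K[x]`-span of the bounded solutions into their `k[x]`-span, and a functional
with `l 1 = 1` recovers `y`. -/
theorem hermann_descent {k : Type*} (K : Type*) [Field k] [Field K] [Algebra k K] [Infinite K] {n q d : ℕ} {ρ γ : Type} [Fintype ρ] [Fintype γ]
    (A : Matrix ρ γ (MvPolynomial (Fin n) k)) (hq : 1 ≤ q) (hpd : Fintype.card ρ * d ≤ q)
    (hA : ∀ i j, (A i j).totalDegree ≤ d) (y : γ → MvPolynomial (Fin n) k)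
    (hy : A.mulVec y = 0) :
    y ∈ Submodule.span (MvPolynomial (Fin n) k)
      {w | A.mulVec w = 0 ∧ ∀ j, (w j).totalDegree + q ≤ (2 * q) ^ 2 ^ n} := by
  classical
  let f := map (σ := Fin n) (algebraMap k K)
  have hmem := hermann_infinite n q d ρ γ (A.map f) hq hpd
    (fun i j => le_trans (Finset.sup_mono (support_map_subset _ _)) (hA i j))
    (fun j => f (y j))
    (by
      ext1 i
      have := congrArg f (congrFun hy i)
      simpa [Matrix.mulVec, dotProduct] using this)
  set S : Set (γ → MvPolynomial (Fin n) k) :=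
    {w | A.mulVec w = 0 ∧ ∀ j, (w j).totalDegree + q ≤ (2 * q) ^ 2 ^ n} with hS
  have key : ∀ l : K →ₗ[k] k, (fun j => coeffwise l (f (y j))) ∈
      Submodule.span (MvPolynomial (Fin n) k) S := by
    change ∀ l : K →ₗ[k] k, (fun j => coeffwise l ((fun j => f (y j)) j)) ∈ _
    generalize (fun j => f (y j)) = W at hmem ⊢
    induction hmem using Submodule.span_induction with
    | mem w hw =>
      intro l
      refine Submodule.subset_span ⟨?_, fun j => ?_⟩
      · ext1 i
        have := congrArg (coeffwise l) (congrFun hw.1 i)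
        simpa [Matrix.mulVec, dotProduct, coeffwise_sum, f, coeffwise_map_mul, coeffwise_zero]
          using this
      · exact le_trans (Nat.add_le_add_right (totalDegree_coeffwise_le l (w j)) q) (hw.2 j)
    | zero =>
      intro l
      simp only [Pi.zero_apply, coeffwise_zero]
      exact Submodule.zero_mem _
    | add w₁ w₂ _ _ h₁ h₂ =>
      intro l
      simp only [Pi.add_apply, coeffwise_add]
      exact Submodule.add_mem _ (h₁ l) (h₂ l)
    | smul P w _ h =>
      induction P using MvPolynomial.induction_on with
      | C c =>
        intro l
        convert h (l.comp (LinearMap.mulLeft k c)) using 1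
        ext j m
        simp [coeff_coeffwise]
      | add P Q hP hQ =>
        intro l
        convert Submodule.add_mem _ (hP l) (hQ l) using 1
        ext1 j
        simp only [Pi.smul_apply, Pi.add_apply, smul_eq_mul, add_mul, coeffwise_add]
      | mul_X P i hP =>
        intro l
        convert Submodule.smul_mem _ (X i) (hP l) using 1
        ext1 j
        simp only [Pi.smul_apply, smul_eq_mul]
        rw [← coeffwise_map_mul, map_X]
        congr 1
        ring
  obtain ⟨l, hl⟩ := (Algebra.linearMap k K).exists_leftInverse_of_injective
    (LinearMap.ker_eq_bot.mpr (algebraMap k K).injective)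
  convert key l using 1
  ext j m
  rw [coeff_coeffwise, coeff_map]
  exact (LinearMap.congr_fun hl (coeff m (y j))).symm

/-- Hermann's degree bound: the solutions of a homogeneous linear system over `k[x₁,…,x_n]` are
generated by solutions of degree less than `(2q)^(2^n)`, where `q` bounds the number of equations
times the degree of the coefficients. -/
theorem hermann {k : Type*} [Field k] {n q d : ℕ} {ρ γ : Type} [Fintype ρ] [Fintype γ]
    (A : Matrix ρ γ (MvPolynomial (Fin n) k)) (hq : 1 ≤ q) (hpd : Fintype.card ρ * d ≤ q)
    (hA : ∀ i j, (A i j).totalDegree ≤ d) (y : γ → MvPolynomial (Fin n) k)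
    (hy : A.mulVec y = 0) :
    y ∈ Submodule.span (MvPolynomial (Fin n) k)
      {w | A.mulVec w = 0 ∧ ∀ j, (w j).totalDegree + q ≤ (2 * q) ^ 2 ^ n} :=
  hermann_descent (AlgebraicClosure k) A hq hpd hA y hy

/-! ### The colon ideal -/

theorem numeric_bound {n d : ℕ} (hn : 1 < n) (hd : 1 < d) :
    (2 * ((n - 1) * (2 ^ (n * 2 ^ (2 * n + 6)) * d ^ (n * 2 ^ (3 * n + 2))))) ^ 2 ^ n ≤
      (2 * n * d) ^ (n * 2 ^ (4 * n + 8)) := by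
  have hpn : 1 ≤ 2 ^ n := Nat.one_le_two_pow
  calc _ ≤ (2 * (n * (2 ^ (n * 2 ^ (2 * n + 6)) * d ^ (n * 2 ^ (3 * n + 2))))) ^ 2 ^ n := by
        gcongr; omega
    _ = 2 ^ (2 ^ n + n * 2 ^ (2 * n + 6) * 2 ^ n) * n ^ 2 ^ n
        * d ^ (n * 2 ^ (3 * n + 2) * 2 ^ n) := by
        simp only [mul_pow, pow_add, ← pow_mul]; ring
    _ ≤ 2 ^ (n * 2 ^ (4 * n + 8)) * n ^ (n * 2 ^ (4 * n + 8)) * d ^ (n * 2 ^ (4 * n + 8)) := by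
        have e1 : 2 ^ n + n * 2 ^ (2 * n + 6) * 2 ^ n ≤ n * 2 ^ (4 * n + 8) := by
          have h1 : 2 ^ n ≤ n * 2 ^ (3 * n + 6) := by
            calc 2 ^ n ≤ 2 ^ (3 * n + 6) := Nat.pow_le_pow_right (by norm_num) (by omega)
              _ ≤ _ := Nat.le_mul_of_pos_left _ (by omega)
          have h2 : n * 2 ^ (2 * n + 6) * 2 ^ n = n * 2 ^ (3 * n + 6) := by
            rw [mul_assoc, ← pow_add]; congr 2; ring
          have h3 : n * 2 ^ (3 * n + 7) ≤ n * 2 ^ (4 * n + 8) :=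
            Nat.mul_le_mul_left _ (Nat.pow_le_pow_right (by norm_num) (by omega))
          have h4 : n * 2 ^ (3 * n + 7) = 2 * (n * 2 ^ (3 * n + 6)) := by
            rw [pow_succ]; ring
          omega
        have e2 : 2 ^ n ≤ n * 2 ^ (4 * n + 8) :=
          (Nat.pow_le_pow_right (by norm_num) (by omega)).trans
            (Nat.le_mul_of_pos_left _ (by omega))
        have e3 : n * 2 ^ (3 * n + 2) * 2 ^ n ≤ n * 2 ^ (4 * n + 8) := by
          rw [mul_assoc, ← pow_add]
          exact Nat.mul_le_mul_left _ (Nat.pow_le_pow_right (by norm_num) (by omega))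
        exact Nat.mul_le_mul (Nat.mul_le_mul (Nat.pow_le_pow_right (by norm_num) e1)
          (Nat.pow_le_pow_right (by omega) e2)) (Nat.pow_le_pow_right (by omega) e3)
    _ = _ := by rw [mul_pow, mul_pow]


/-- Suppose no nonzero element of `I` involves only `x₁,…,x_r`, and `I`
is prime up to `(2nd)^(n·2^(4n+8))`.  Then `I : (f) = I` (elementwise: `f·g ∈ I → g ∈ I`)
for every irreducible `f` involving only `x₁,…,x_r` of total degree at most
`(n−1)·2^(n·2^(2n+6))·d^(n·2^(3n+2))`. -/
theorem bounded_prime_implies_quotient_by_small_irreducibles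
    (k : Type*) [Field k] (n d r : ℕ) (hn : 1 < n) (hd : 1 < d) (hr : r ≤ n)
    (I : Ideal (MvPolynomial (Fin n) k))
    (S : Set (MvPolynomial (Fin n) k)) (hgen : I = Ideal.span S)
    (hdeg : ∀ g ∈ S, g.totalDegree ≤ d)
    (hind : ∀ f ∈ I, (∀ i ∈ MvPolynomial.vars f, (i : ℕ) < r) → f = 0)
    (hprime : ∀ f g : MvPolynomial (Fin n) k,
      f.totalDegree ≤ (2 * n * d) ^ (n * 2 ^ (4 * n + 8)) →
      g.totalDegree ≤ (2 * n * d) ^ (n * 2 ^ (4 * n + 8)) →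
      f * g ∈ I → f ∈ I ∨ g ∈ I) :
    ∀ f : MvPolynomial (Fin n) k,
      (∀ i ∈ f.vars, (i : ℕ) < r) → Irreducible f →
      f.totalDegree ≤ (n - 1) * (2 ^ (n * 2 ^ (2 * n + 6)) * d ^ (n * 2 ^ (3 * n + 2))) →
      ∀ g : MvPolynomial (Fin n) k, f * g ∈ I → g ∈ I := by
  intro f hfv hirr hfdeg g hfg
  set E := (n - 1) * (2 ^ (n * 2 ^ (2 * n + 6)) * d ^ (n * 2 ^ (3 * n + 2))) with hE
  set b := (2 * n * d) ^ (n * 2 ^ (4 * n + 8)) with hb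
  have hfI : f ∉ I := fun h => hirr.ne_zero (hind f h hfv)
  have hdE : d ≤ E := by
    calc d ≤ d ^ (n * 2 ^ (3 * n + 2)) := Nat.le_self_pow (by positivity) d
      _ ≤ 2 ^ (n * 2 ^ (2 * n + 6)) * d ^ (n * 2 ^ (3 * n + 2)) :=
        Nat.le_mul_of_pos_left _ (by positivity)
      _ ≤ E := Nat.le_mul_of_pos_left _ (by omega)
  have hEb : (2 * E) ^ 2 ^ n ≤ b := numeric_bound hn hd
  have hEb' : E ≤ b := by
    have := Nat.le_self_pow (n := 2 ^ n) (by positivity) (2 * E)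
    omega
  rw [hgen, Ideal.span, Submodule.mem_span_set'] at hfg
  obtain ⟨m, a, s, hs⟩ := hfg
  -- The row `(f, s₁, …, s_m)` with the syzygy `(g, -a₁, …, -a_m)`.
  let A : Matrix (Fin 1) (Fin (m + 1)) (MvPolynomial (Fin n) k) :=
    fun _ => Fin.cons f fun i => (s i : MvPolynomial (Fin n) k)
  have hmem := hermann A (q := E) (d := E) (by omega) (by simp)
    (by
      intro _ j
      refine Fin.cases hfdeg (fun j => ?_) j
      exact (hdeg _ (s j).2).trans hdE)
    (Fin.cons g fun i => -a i)
    (by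
      ext1 i
      simp only [Matrix.mulVec, dotProduct, A, Fin.sum_univ_succ, Fin.cons_zero, Fin.cons_succ,
        Pi.zero_apply, ← hs, smul_eq_mul, ← Finset.sum_add_distrib]
      exact Finset.sum_eq_zero fun i _ => by ring)
  have key : ∀ w : Fin (m + 1) → MvPolynomial (Fin n) k,
      w ∈ Submodule.span (MvPolynomial (Fin n) k)
        {w | A.mulVec w = 0 ∧ ∀ j, (w j).totalDegree + E ≤ (2 * E) ^ 2 ^ n} → w 0 ∈ I := by
    intro w hw
    induction hw using Submodule.span_induction with
    | mem w hw =>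
      refine (hprime f (w 0) (hfdeg.trans hEb') ?_ ?_).resolve_left hfI
      · have := hw.2 0
        omega
      · have h1 := congrFun hw.1 0
        simp only [Matrix.mulVec, dotProduct, A, Fin.sum_univ_succ, Fin.cons_zero, Fin.cons_succ,
          Pi.zero_apply] at h1
        rw [eq_neg_of_add_eq_zero_left h1]
        refine I.neg_mem (I.sum_mem fun i _ => I.mul_mem_right _ ?_)
        rw [hgen]
        exact Ideal.subset_span (s i).2
    | zero => exact I.zero_mem
    | add _ _ _ _ h₁ h₂ => exact I.add_mem h₁ h₂
    | smul P _ _ h => exact I.mul_mem_left P h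
  exact key _ hmem
end

section
/- Let k be a field, n > 1 and d > 1 natural numbers, and let I be an ideal of k[x_1,…,x_n] generated by polynomials of total degree at most d. Let r ≤ n and suppose that the only polynomial in I involving only the variables x_1,…,x_r is 0, while for each j with r < j ≤ n there is a nonzero element of I involving only the variables x_1,…,x_r,x_j. If I is prime up to (2nd)^(n·2^(4n+8)), then for every nonzero polynomial h involving only the variables x_1,…,x_r and every g ∈ k[x_1,…,x_n] with h·g ∈ I, it follows that g ∈ I (that is, the extension of I to k(x_1,…,x_r)[x_{r+1},…,x_n] contracts back to I). -/
/-!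
Write `A = k[x_1, …, x_r]` and let `y_1, …, y_s` be the remaining variables, so that the polynomial
ring is `A[y_1, …, y_s]` and `I` is generated by `f_1, …, f_l` of degree at most `d`.  The proof
applies Hermann's elimination method twice.

Bounded nonzerodivisors (`syzygies_span`, `mem_of_mul_mem_of_bounded`).  Syzygies of polynomials of
degree at most `D` are generated in degree `(4 D) ^ 2 ^ n`.  If `c` in `A` is nonzero of degree at
most `D`, then `c ∉ I` by independence, so primality up to the given bound shows that `c b ∈ I`
implies `b ∈ I` for `b` of degree at most `(4 D) ^ 2 ^ n`.  The colon ideal `I : c` is generated by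
the first components of the syzygies of `c, f_1, …, f_l`, hence it equals `I`.

Bounded denominators (`exists_denominator`).  If `h g ∈ I` with `h` in `A` nonzero, then the linear
equation `∑ f_i b_i = g` is solvable over `Frac A [y_1, …, y_s]`.  Elimination of `y_1, …, y_s`
produces a solution whose denominator is a product of nonzero elements of `A` of degree at most
`D = (3 d) ^ (3 * 2 ^ s)`, a bound in which `g` does not enter.  By the first part each of these
factors is a nonzerodivisor modulo `I`, so `g ∈ I`.

Both bounds are proved by induction on the number of variables, for linear systems with several
rows.  One chooses a maximal nonvanishing minor `Δ` (`exists_maximal_minor`), makes its leading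
coefficient in one variable constant by a linear change of coordinates
(`exists_split_leadingCoeff`), reduces solutions modulo `Δ` (`exists_reduced_solution`), and
compares coefficients in that variable, which gives a larger system in one variable less
(`flat_mulVec_iff`).  The change of coordinates needs many scalars.  For the syzygy bound they come
from the algebraic closure of `k`, followed by descent along a `k`-linear retraction; for the
denominators they are powers of `x_1`.
-/

namespace HermannBounds

open Matrix

/-! ### Filtrations -/

/-- An increasing multiplicative filtration of a commutative ring by additive subgroups, not
necessarily exhaustive; `V j` plays the role of the elements of degree at most `j`. -/
structure Filtration (A : Type*) [CommRing A] where
  V : ℕ → AddSubgroup A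
  mono : Monotone V
  one_mem : (1 : A) ∈ V 0
  mul_mem : ∀ {i j : ℕ} {x y : A}, x ∈ V i → y ∈ V j → x * y ∈ V (i + j)

namespace Filtration

open MvPolynomial

variable {A : Type*} [CommRing A] (W : Filtration A)

theorem one_mem' (j : ℕ) : (1 : A) ∈ W.V j := W.mono (Nat.zero_le j) W.one_mem

theorem pow_mem {i : ℕ} {x : A} (hx : x ∈ W.V i) (n : ℕ) : x ^ n ∈ W.V (n * i) := by
  induction n with
  | zero => simpa using W.one_mem
  | succ n ih =>
    rw [pow_succ, Nat.succ_mul]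
    exact W.mul_mem ih hx

theorem prod_mem {ι : Type*} (s : Finset ι) (f : ι → A) (e : ι → ℕ)
    (h : ∀ i ∈ s, f i ∈ W.V (e i)) : ∏ i ∈ s, f i ∈ W.V (∑ i ∈ s, e i) := by
  classical
  induction s using Finset.induction_on with
  | empty => simpa using W.one_mem
  | insert a s ha ih =>
    rw [Finset.prod_insert ha, Finset.sum_insert ha]
    exact W.mul_mem (h a (by simp)) (ih fun i hi => h i (by simp [hi]))

theorem det_mem {n : Type*} [Fintype n] [DecidableEq n] (M : Matrix n n A)
    (h : ∀ i j, M i j ∈ W.V 1) : M.det ∈ W.V (Fintype.card n) := by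
  rw [det_apply]
  refine sum_mem fun σ _ => ?_
  have h1 : ∏ i, M (σ i) i ∈ W.V (Fintype.card n) := by
    simpa using W.prod_mem Finset.univ (fun i => M (σ i) i) (fun _ => 1) (fun i _ => h _ _)
  rcases Int.units_eq_one_or (Equiv.Perm.sign σ) with h2 | h2
  · simpa [h2] using h1
  · simpa [h2] using neg_mem h1

theorem adjugate_mem {n : Type*} [Fintype n] [DecidableEq n] (M : Matrix n n A)
    (h : ∀ i j, M i j ∈ W.V 1) (i j : n) : M.adjugate i j ∈ W.V (Fintype.card n) := by
  rw [adjugate_apply]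
  refine W.det_mem _ fun a b => ?_
  by_cases ha : a = j
  · subst ha
    rw [updateRow_self]
    by_cases hb : b = i
    · subst hb; simpa using W.one_mem' 1
    · simp [hb, zero_mem]
  · rw [updateRow_ne ha]
    exact h a b

/-- The trivial filtration, in which every element has degree `0`. -/
def trivial (A : Type*) [CommRing A] : Filtration A where
  V _ := ⊤
  mono _ _ _ := le_rfl
  one_mem := by simp
  mul_mem := by simp

/-- The filtration of `A[X]` by degree, with steps of size `d`. -/
def natDegree (A : Type*) [CommRing A] (d : ℕ) : Filtration (Polynomial A) where
  V j :=
    { carrier := {p | p.natDegree ≤ j * d}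
      zero_mem' := by simp
      add_mem' := fun {p q} hp hq => (Polynomial.natDegree_add_le p q).trans (max_le hp hq)
      neg_mem' := fun {p} hp => by simpa using hp }
  mono i j hij p hp := le_trans hp (Nat.mul_le_mul_right d hij)
  one_mem := by simp [AddSubgroup.mem_mk]
  mul_mem := fun {i j x y} hx hy => by
    change (x * y).natDegree ≤ (i + j) * d
    rw [add_mul]
    exact Polynomial.natDegree_mul_le.trans (add_le_add hx hy)

/-- Polynomials of total degree at most `a` all of whose coefficients have filtration
degree at most `b`. -/
def Bd {σ : Type*} (a b : ℕ) : AddSubgroup (MvPolynomial σ A) where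
  carrier := {p | p.totalDegree ≤ a ∧ ∀ m, p.coeff m ∈ W.V b}
  zero_mem' := by simp [zero_mem]
  add_mem' := fun {p q} hp hq => ⟨(totalDegree_add p q).trans (max_le hp.1 hq.1), fun m => by
    rw [coeff_add]; exact add_mem (hp.2 m) (hq.2 m)⟩
  neg_mem' := fun {p} hp => ⟨by simpa using hp.1, fun m => by
    rw [coeff_neg]; exact neg_mem (hp.2 m)⟩

theorem mem_Bd {σ : Type*} {a b : ℕ} {p : MvPolynomial σ A} :
    p ∈ W.Bd a b ↔ p.totalDegree ≤ a ∧ ∀ m, p.coeff m ∈ W.V b := Iff.rfl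

theorem Bd_mono {σ : Type*} {a b a' b' : ℕ} (ha : a ≤ a') (hb : b ≤ b') {p : MvPolynomial σ A}
    (hp : p ∈ W.Bd a b) : p ∈ W.Bd a' b' :=
  ⟨hp.1.trans ha, fun m => W.mono hb (hp.2 m)⟩

theorem C_mem_Bd {σ : Type*} {b : ℕ} {x : A} (hx : x ∈ W.V b) :
    (C x : MvPolynomial σ A) ∈ W.Bd 0 b := by
  classical
  refine ⟨by simp, fun m => ?_⟩
  rw [coeff_C]
  split_ifs
  · exact hx
  · exact zero_mem _

theorem X_mem_Bd {σ : Type*} (i : σ) : (X i : MvPolynomial σ A) ∈ W.Bd 1 0 := by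
  classical
  refine ⟨?_, fun m => ?_⟩
  · exact (totalDegree_monomial_le _ _).trans (by simp)
  rw [coeff_X]
  split_ifs
  · exact W.one_mem
  · exact zero_mem _

theorem mul_mem_Bd {σ : Type*} {a b a' b' : ℕ} {p q : MvPolynomial σ A}
    (hp : p ∈ W.Bd a b) (hq : q ∈ W.Bd a' b') : p * q ∈ W.Bd (a + a') (b + b') := by
  classical
  refine ⟨(totalDegree_mul p q).trans (add_le_add hp.1 hq.1), fun m => ?_⟩
  rw [coeff_mul]
  exact sum_mem fun x _ => W.mul_mem (hp.2 _) (hq.2 _)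

/-- The filtration of a polynomial ring with steps `Bd d e`. -/
def poly (σ : Type*) (d e : ℕ) : Filtration (MvPolynomial σ A) where
  V j := W.Bd (j * d) (j * e)
  mono i j hij p hp := W.Bd_mono (Nat.mul_le_mul_right d hij) (Nat.mul_le_mul_right e hij) hp
  one_mem := by simpa using W.C_mem_Bd (σ := σ) (W.one_mem)
  mul_mem := fun {i j x y} hx hy => by
    rw [add_mul, add_mul]
    exact W.mul_mem_Bd hx hy

end Filtration

/-! ### Maximal minors -/

section Minors

variable {R : Type*} [CommRing R]

open Classical in
/-- A right inverse, up to the factor `det`, of a matrix `M` with a distinguished square block of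
columns `c`: the adjugate of that block, extended by zero rows. -/
noncomputable def lift {ρ κ : Type*} [Fintype ρ] [DecidableEq ρ]
    (M : Matrix ρ κ R) (c : ρ → κ) : Matrix κ ρ R :=
  (1 : Matrix κ κ R).submatrix id c * (M.submatrix id c).adjugate

theorem mul_lift {ρ κ : Type*} [Fintype ρ] [DecidableEq ρ] [Fintype κ]
    (M : Matrix ρ κ R) (c : ρ → κ) :
    M * lift M c = (M.submatrix id c).det • (1 : Matrix ρ ρ R) := by
  classical
  rw [lift, ← Matrix.mul_assoc, ← mul_adjugate]
  congr 1
  ext i j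
  simp [Matrix.mul_apply, Matrix.one_apply]

theorem lift_mem (W : Filtration R) {ρ κ : Type*} [Fintype ρ] [DecidableEq ρ]
    (M : Matrix ρ κ R) (c : ρ → κ) (h : ∀ i j, M i j ∈ W.V 1) (j : κ) (i : ρ) :
    lift M c j i ∈ W.V (Fintype.card ρ) := by
  classical
  rw [lift, Matrix.mul_apply]
  refine sum_mem fun x _ => ?_
  have h1 := W.adjugate_mem (M.submatrix id c) (fun i j => h _ _) x i
  rw [submatrix_apply, Matrix.one_apply]
  split_ifs
  · simpa using h1
  · simp [zero_mem]

theorem lift_map {R' : Type*} [CommRing R'] (f : R →+* R') {ρ κ : Type*} [Fintype ρ]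
    [DecidableEq ρ] (M : Matrix ρ κ R) (c : ρ → κ) :
    lift (M.map f) c = (lift M c).map f := by
  classical
  have h := f.map_adjugate (M.submatrix id c)
  simp only [RingHom.mapMatrix_apply] at h
  rw [lift, lift, Matrix.map_mul, h]
  congr 1
  ext i j
  simp [Matrix.one_apply, apply_ite f]

/-- Rank selection over a domain, without passing to the fraction field: there is a nonvanishing
minor such that every row is, up to a nonzero factor, a combination of the rows of the minor. -/
theorem exists_maximal_minor [IsDomain R] {ι κ : Type*} [Fintype ι] (F : Matrix ι κ R) :
    ∃ (ρ : ℕ) (e : Fin ρ → ι) (c : Fin ρ → κ), ρ ≤ Fintype.card ι ∧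
      (F.submatrix e c).det ≠ 0 ∧
      ∀ i, ∃ (δ : R) (l : Fin ρ → R), δ ≠ 0 ∧ ∀ j, δ * F i j = ∑ x, l x * F (e x) j := by
  classical
  let P : ℕ → Prop := fun ρ => ∃ (e : Fin ρ → ι) (c : Fin ρ → κ), (F.submatrix e c).det ≠ 0
  have hP0 : P 0 := ⟨Fin.elim0, Fin.elim0, by simp⟩
  have hPb : ∀ ρ, P ρ → ρ ≤ Fintype.card ι := by
    rintro ρ ⟨e, c, h⟩
    have hinj : Function.Injective e := by
      intro x y hxy
      by_contra hne
      exact h (det_zero_of_row_eq hne (by ext j; simp [hxy]))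
    simpa using Fintype.card_le_of_injective e hinj
  have hspec := Nat.findGreatest_spec (P := P) (Nat.zero_le (Fintype.card ι)) hP0
  set ρ := Nat.findGreatest P (Fintype.card ι) with hρ
  obtain ⟨e, c, hdet⟩ := hspec
  refine ⟨ρ, e, c, hPb ρ ⟨e, c, hdet⟩, hdet, fun i => ?_⟩
  have hbig : ∀ (e' : Fin (ρ + 1) → ι) (c' : Fin (ρ + 1) → κ), (F.submatrix e' c').det = 0 := by
    intro e' c'
    by_contra hne
    have h1 : P (ρ + 1) := ⟨e', c', hne⟩
    have := Nat.le_findGreatest (hPb _ h1) h1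
    omega
  -- Expand the bordered minor along the added column; the cofactors do not depend on it.
  refine ⟨(F.submatrix e c).det, fun x =>
    -((-1) ^ ((x.succ : Fin (ρ + 1)) : ℕ) *
      (F.submatrix ((Fin.cons i e : Fin (ρ + 1) → ι) ∘ x.succ.succAbove) c).det), hdet,
    fun j => ?_⟩
  have h := hbig (Fin.cons i e) (Fin.cons j c)
  rw [det_succ_column_zero, Fin.sum_univ_succ] at h
  have key : ∀ x : Fin (ρ + 1),
      ((F.submatrix (Fin.cons i e : Fin (ρ + 1) → ι) (Fin.cons j c : Fin (ρ + 1) → κ)).submatrix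
        x.succAbove Fin.succ) =
      F.submatrix ((Fin.cons i e : Fin (ρ + 1) → ι) ∘ x.succAbove) c := by
    intro x
    ext a b
    simp
  simp only [key] at h
  have h0 : (F.submatrix ((Fin.cons i e : Fin (ρ + 1) → ι) ∘ (0 : Fin (ρ + 1)).succAbove) c)
      = F.submatrix e c := by
    ext a b; simp
  rw [h0] at h
  simp only [submatrix_apply, Fin.cons_zero, Fin.cons_succ, Fin.val_zero, pow_zero,
    one_mul] at h
  have h2 := eq_neg_of_add_eq_zero_left h
  rw [mul_comm, h2, ← Finset.sum_neg_distrib]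
  refine Finset.sum_congr rfl fun x _ => ?_
  ring

end Minors

/-! ### Elimination of one variable -/

section Elimination

open Polynomial

variable {B : Type*} [CommRing B]

/-- Division with remainder by a polynomial with leading coefficient not necessarily invertible,
at the cost of multiplying by a power of that leading coefficient. -/
theorem exists_pseudo_div (Δ f : B[X]) :
    ∃ (N : ℕ) (q r : B[X]), C (Δ.leadingCoeff ^ N) * f = Δ * q + r ∧
      ∀ p, Δ.natDegree ≤ p → r.coeff p = 0 := by
  suffices H : ∀ (n : ℕ) (f : B[X]), (∀ p, Δ.natDegree + n ≤ p → f.coeff p = 0) →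
      ∃ (N : ℕ) (q r : B[X]), C (Δ.leadingCoeff ^ N) * f = Δ * q + r ∧
        ∀ p, Δ.natDegree ≤ p → r.coeff p = 0 by
    refine H (f.natDegree + 1) f fun p hp => coeff_eq_zero_of_natDegree_lt (by omega)
  intro n
  induction n with
  | zero => exact fun f hf => ⟨0, 0, f, by simp, by simpa using hf⟩
  | succ n ih =>
    intro f hf
    obtain ⟨N, q, r, h1, h2⟩ := ih
      (C Δ.leadingCoeff * f - Δ * (C (f.coeff (Δ.natDegree + n)) * X ^ n)) (by
        intro p hp
        rw [coeff_sub, coeff_C_mul, ← mul_assoc, mul_comm Δ, mul_assoc, coeff_C_mul,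
          coeff_mul_X_pow', if_pos (by omega)]
        rcases Nat.eq_or_lt_of_le hp with h | h
        · subst h
          rw [Nat.add_sub_cancel, coeff_natDegree]
          ring
        · rw [hf p (by omega), coeff_eq_zero_of_natDegree_lt (by omega : Δ.natDegree < p - n)]
          ring)
    refine ⟨N + 1, q + C (Δ.leadingCoeff ^ N) * (C (f.coeff (Δ.natDegree + n)) * X ^ n), r,
      ?_, h2⟩
    rw [mul_add, ← add_right_comm, ← h1, pow_succ, C_mul]
    ring

theorem exists_pseudo_div_vec {κ : Type*} [Fintype κ] (Δ : B[X]) (f : κ → B[X]) :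
    ∃ (N : ℕ) (q r : κ → B[X]), C (Δ.leadingCoeff ^ N) • f = Δ • q + r ∧
      ∀ j p, Δ.natDegree ≤ p → (r j).coeff p = 0 := by
  classical
  choose N q r h1 h2 using fun j => exists_pseudo_div Δ (f j)
  refine ⟨∑ j, N j, fun j => C (Δ.leadingCoeff ^ (∑ j, N j - N j)) * q j,
    fun j => C (Δ.leadingCoeff ^ (∑ j, N j - N j)) * r j, ?_, ?_⟩
  · funext j
    have hj : N j ≤ ∑ j, N j := Finset.single_le_sum (fun _ _ => Nat.zero_le _) (Finset.mem_univ j)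
    simp only [Pi.smul_apply, Pi.add_apply, smul_eq_mul]
    rw [← mul_assoc, mul_comm Δ, mul_assoc, ← mul_add, ← h1, ← mul_assoc, ← C_mul, ← pow_add,
      Nat.sub_add_cancel hj]
  · intro j p hp
    change (C (Δ.leadingCoeff ^ (∑ j, N j - N j)) * r j).coeff p = 0
    rw [coeff_C_mul, h2 j p hp, mul_zero]

open Classical in
/-- The matrix `Δ • 1 - lift M c * M`, whose columns are syzygies of `M`. -/
noncomputable def syz {ρ κ : Type*} [Fintype ρ] [DecidableEq ρ]
    (M : Matrix ρ κ B) (c : ρ → κ) : Matrix κ κ B :=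
  (M.submatrix id c).det • (1 : Matrix κ κ B) - lift M c * M

theorem mul_syz {ρ κ : Type*} [Fintype ρ] [DecidableEq ρ] [Fintype κ]
    (M : Matrix ρ κ B) (c : ρ → κ) : M * syz M c = 0 := by
  classical
  rw [syz, Matrix.mul_sub, ← Matrix.mul_assoc, mul_lift]
  simp

theorem syz_map {B' : Type*} [CommRing B'] (f : B →+* B') {ρ κ : Type*} [Fintype ρ]
    [DecidableEq ρ] (M : Matrix ρ κ B) (c : ρ → κ) :
    syz (M.map f) c = (syz M c).map f := by
  classical
  have h := f.map_det (M.submatrix id c)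
  rw [RingHom.mapMatrix_apply] at h
  rw [syz, syz, lift_map, Matrix.map_sub f f.map_sub, Matrix.map_mul, submatrix_map, ← h]
  congr 1
  ext i j
  simp [Matrix.one_apply, apply_ite f]

theorem syz_mem (W : Filtration B) {ρ κ : Type*} [Fintype ρ] [DecidableEq ρ]
    (M : Matrix ρ κ B) (c : ρ → κ) (h : ∀ i j, M i j ∈ W.V 1) (i j : κ) :
    syz M c i j ∈ W.V (Fintype.card ρ + 1) := by
  classical
  rw [syz, Matrix.sub_apply]
  refine sub_mem ?_ ?_
  · have h1 := W.mono (Nat.le_succ _) (W.det_mem (M.submatrix id c) (fun i j => h _ _))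
    rw [Matrix.smul_apply, Matrix.one_apply, smul_eq_mul]
    split_ifs
    · simpa using h1
    · simp [zero_mem]
  · rw [Matrix.mul_apply]
    exact sum_mem fun x _ => W.mul_mem (lift_mem W M c h i x) (h x j)

/-- Modulo the syzygies `syz G c`, and up to a power of the leading coefficient of the minor `Δ`,
every solution `a` of `G a = g` with `g` of small degree reduces to one of small degree.  Writing
`a = Δ q + r`, the vector `G q` has small degree because `Δ • G q = g - G r`, and the reduced
solution is `r + lift G c (G q)`. -/
theorem exists_reduced_solution [IsDomain B] {ρ κ : Type*} [Fintype ρ] [DecidableEq ρ]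
    [Fintype κ] (G : Matrix ρ κ B[X]) (c : ρ → κ) (d : ℕ) (hd : 0 < d)
    (hG : ∀ i j, (G i j).natDegree ≤ d) (hΔ : (G.submatrix id c).det ≠ 0)
    (a : κ → B[X]) (g : ρ → B[X]) (h : G *ᵥ a = g)
    (hg : ∀ i p, (G.submatrix id c).det.natDegree + d ≤ p → (g i).coeff p = 0) :
    ∃ (N : ℕ) (q r : κ → B[X]),
      C ((G.submatrix id c).det.leadingCoeff ^ N) • a = syz G c *ᵥ q + r ∧
      ∀ j, (r j).natDegree < (Fintype.card ρ + 1) * d := by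
  classical
  set Δ := (G.submatrix id c).det with hΔdef
  have hW : ∀ i j, G i j ∈ (Filtration.natDegree B d).V 1 := fun i j => by
    change (G i j).natDegree ≤ 1 * d
    simpa using hG i j
  have hΔdeg : Δ.natDegree ≤ Fintype.card ρ * d :=
    (Filtration.natDegree B d).det_mem (G.submatrix id c) (fun i j => hW _ _)
  obtain ⟨N, q, r, h1, h2⟩ := exists_pseudo_div_vec Δ a
  have hcard : (Fintype.card ρ + 1) * d = Fintype.card ρ * d + d := by ring
  refine ⟨N, q, r + lift G c *ᵥ (G *ᵥ q), ?_, ?_⟩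
  · rw [h1, syz, Matrix.sub_mulVec, Matrix.smul_mulVec, Matrix.one_mulVec, ← Matrix.mulVec_mulVec]
    abel
  · have h3 : Δ • (G *ᵥ q) = C (Δ.leadingCoeff ^ N) • g - G *ᵥ r := by
      rw [← h, ← Matrix.mulVec_smul G (C (Δ.leadingCoeff ^ N)) a, h1, Matrix.mulVec_add,
        Matrix.mulVec_smul]
      abel
    have hr : ∀ j, (r j).natDegree ≤ Δ.natDegree := fun j =>
      natDegree_le_iff_coeff_eq_zero.2 fun p hp => h2 j p hp.le
    have h4 : ∀ i, (G *ᵥ q) i ≠ 0 → ((G *ᵥ q) i).natDegree < d := by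
      intro i hi
      have h5 : (Δ * (G *ᵥ q) i).natDegree < Δ.natDegree + d := by
        rw [natDegree_lt_iff_degree_lt (mul_ne_zero hΔ hi), degree_lt_iff_coeff_zero]
        intro p hp
        have h6 := congrFun h3 i
        simp only [Pi.smul_apply, smul_eq_mul, Pi.sub_apply] at h6
        rw [h6, coeff_sub, coeff_C_mul, hg i p hp, mul_zero, zero_sub, neg_eq_zero,
          Matrix.mulVec, dotProduct, finsetSum_coeff]
        refine Finset.sum_eq_zero fun j _ => ?_
        by_cases hrj : r j = 0
        · simp [hrj]
        · refine coeff_eq_zero_of_natDegree_lt (lt_of_le_of_lt natDegree_mul_le ?_)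
          have h7 : (r j).natDegree < Δ.natDegree := by
            by_contra hcon
            exact hrj (leadingCoeff_eq_zero.1 (h2 j _ (not_lt.1 hcon)))
          have := hG i j
          omega
      rw [natDegree_mul hΔ hi] at h5
      omega
    intro j
    rw [hcard, Pi.add_apply]
    refine lt_of_le_of_lt (natDegree_add_le _ _) (max_lt ?_ ?_)
    · have := hr j
      omega
    · rw [Matrix.mulVec, dotProduct]
      suffices H : (∑ x, lift G c j x * (G *ᵥ q) x).natDegree ≤ Fintype.card ρ * d + (d - 1) by
        omega
      refine natDegree_sum_le_of_forall_le _ _ fun x _ => ?_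
      by_cases hx : (G *ᵥ q) x = 0
      · simp [hx]
      · refine natDegree_mul_le.trans (add_le_add ?_ ?_)
        · exact lift_mem (Filtration.natDegree B d) G c hW j x
        · have := h4 x hx
          omega

/-- The matrix over the coefficient ring `B` expressing `G` on vectors of polynomials of degree
less than `D`, with values in vectors of polynomials of degree less than `D'`. -/
noncomputable def flat {ρ κ : Type*} (G : Matrix ρ κ B[X]) (D D' : ℕ) :
    Matrix (ρ × Fin D') (κ × Fin D) B :=
  fun x y => (G x.1 y.1 * X ^ (y.2 : ℕ)).coeff x.2

/-- The vector of polynomials with prescribed coefficients. -/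
noncomputable def unflat {κ : Type*} {D : ℕ} (b : κ × Fin D → B) : κ → B[X] :=
  fun j => ∑ q : Fin D, C (b (j, q)) * X ^ (q : ℕ)

theorem coeff_mulVec_unflat {ρ κ : Type*} [Fintype κ] (G : Matrix ρ κ B[X]) {D D' : ℕ}
    (b : κ × Fin D → B) (i : ρ) (p : Fin D') :
    ((G *ᵥ unflat b) i).coeff p = (flat G D D' *ᵥ b) (i, p) := by
  simp only [Matrix.mulVec, dotProduct, flat, unflat, finsetSum_coeff, Fintype.sum_prod_type,
    Finset.mul_sum]
  refine Finset.sum_congr rfl fun j _ => Finset.sum_congr rfl fun q _ => ?_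
  rw [mul_left_comm, coeff_C_mul, mul_comm]

theorem coeff_mulVec_unflat_eq_zero {ρ κ : Type*} [Fintype κ] (G : Matrix ρ κ B[X]) {D d : ℕ}
    (hG : ∀ i j, (G i j).natDegree ≤ d) (b : κ × Fin D → B) (i : ρ) (p : ℕ) (hp : D + d ≤ p) :
    ((G *ᵥ unflat b) i).coeff p = 0 := by
  simp only [Matrix.mulVec, dotProduct, unflat, finsetSum_coeff, Finset.mul_sum]
  refine Finset.sum_eq_zero fun j _ => Finset.sum_eq_zero fun q _ => ?_
  rw [mul_left_comm, coeff_C_mul, coeff_mul_X_pow', if_pos (by omega),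
    coeff_eq_zero_of_natDegree_lt, mul_zero]
  have := hG i j
  omega

theorem unflat_coeff {κ : Type*} {D : ℕ} (r : κ → B[X]) (hr : ∀ j, (r j).natDegree < D) :
    unflat (fun y : κ × Fin D => (r y.1).coeff y.2) = r := by
  funext j
  rw [unflat, Fin.sum_univ_eq_sum_range (fun q => C ((r j).coeff q) * X ^ q) D]
  exact ((r j).as_sum_range_C_mul_X_pow' (hr j)).symm

/-- Solving `G a = g` in bounded degree is the same as solving the flattened system. -/
theorem flat_mulVec_iff {ρ κ : Type*} [Fintype κ] (G : Matrix ρ κ B[X]) {D d : ℕ}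
    (hG : ∀ i j, (G i j).natDegree ≤ d) (b : κ × Fin D → B) (g : ρ → B[X])
    (hg : ∀ i p, D + d ≤ p → (g i).coeff p = 0) :
    flat G D (D + d) *ᵥ b = (fun x => (g x.1).coeff x.2) ↔ G *ᵥ unflat b = g := by
  constructor
  · intro h
    funext i
    ext p
    by_cases hp : p < D + d
    · have := congrFun h (i, ⟨p, hp⟩)
      rw [← coeff_mulVec_unflat] at this
      exact this
    · rw [coeff_mulVec_unflat_eq_zero G hG b i p (not_lt.1 hp), hg i p (not_lt.1 hp)]
  · rintro rfl
    funext x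
    exact (coeff_mulVec_unflat G b x.1 x.2).symm

end Elimination

/-! ### Linear changes of coordinates -/

section Shear

open MvPolynomial

variable {A : Type*} [CommRing A] {s : ℕ}

/-- The images of the variables under the substitution `y_i ↦ y_i + l_i y_0` for `i > 0`. -/
noncomputable def shearVar (l : Fin s → A) : Fin (s + 1) → MvPolynomial (Fin (s + 1)) A :=
  Fin.cons (X 0) (fun i => X i.succ + C (l i) * X 0)

/-- The substitution `y_0 ↦ y_0`, `y_i ↦ y_i + l_i y_0` for `i > 0`. -/
noncomputable def shear (l : Fin s → A) :
    MvPolynomial (Fin (s + 1)) A →ₐ[A] MvPolynomial (Fin (s + 1)) A :=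
  aeval (shearVar l)

theorem shear_comp_neg (l : Fin s → A) :
    (shear l).comp (shear (-l)) = AlgHom.id A _ := by
  refine MvPolynomial.algHom_ext fun i => ?_
  refine Fin.cases ?_ (fun i => ?_) i
  · simp [shear, shearVar]
  · simp [shear, shearVar, algHom_C, MvPolynomial.algebraMap_eq]

/-- The shear as an automorphism. -/
noncomputable def shearEquiv (l : Fin s → A) :
    MvPolynomial (Fin (s + 1)) A ≃ₐ[A] MvPolynomial (Fin (s + 1)) A :=
  AlgEquiv.ofAlgHom (shear l) (shear (-l)) (shear_comp_neg l)
    (by simpa using shear_comp_neg (-l))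

theorem shearVar_mem (W : Filtration A) {N : ℕ} {l : Fin s → A} (hl : ∀ i, l i ∈ W.V N)
    (i : Fin (s + 1)) : shearVar l i ∈ W.Bd 1 N := by
  refine Fin.cases ?_ (fun i => ?_) i
  · exact W.Bd_mono le_rfl (Nat.zero_le _) (W.X_mem_Bd 0)
  · refine add_mem (W.Bd_mono le_rfl (Nat.zero_le _) (W.X_mem_Bd i.succ)) ?_
    simpa using W.mul_mem_Bd (W.C_mem_Bd (σ := Fin (s + 1)) (hl i)) (W.X_mem_Bd (0 : Fin (s + 1)))

theorem shear_mem (W : Filtration A) {N d e : ℕ} {l : Fin s → A} (hl : ∀ i, l i ∈ W.V N)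
    {p : MvPolynomial (Fin (s + 1)) A} (hp : p ∈ W.Bd d e) :
    shear l p ∈ W.Bd d (e + d * N) := by
  rw [shear, aeval_def, eval₂_eq']
  refine sum_mem fun m hm => ?_
  have h1 : ∏ i, shearVar l i ^ m i ∈ (W.poly (Fin (s + 1)) 1 N).V (∑ i, m i) := by
    refine (W.poly (Fin (s + 1)) 1 N).prod_mem _ _ _ fun i _ => ?_
    have h := (W.poly (Fin (s + 1)) 1 N).pow_mem (i := 1) (x := shearVar l i)
      (by simpa [Filtration.poly] using shearVar_mem W hl i) (m i)
    simpa using h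
  have h2 : ∑ i, m i ≤ d := by
    refine le_trans ?_ hp.1
    have := le_totalDegree hm
    rwa [Finsupp.sum_fintype _ _ (fun _ => rfl)] at this
  have h3 := W.mul_mem_Bd (W.C_mem_Bd (σ := Fin (s + 1)) (hp.2 m)) h1
  exact W.Bd_mono (by simpa using h2) (by gcongr) h3

/-- A shear followed by singling out the variable `y_0`. -/
noncomputable def split (l : Fin s → A) :
    MvPolynomial (Fin (s + 1)) A ≃ₐ[A] Polynomial (MvPolynomial (Fin s) A) :=
  (shearEquiv l).trans (finSuccEquiv A s)

theorem split_apply (l : Fin s → A) (p : MvPolynomial (Fin (s + 1)) A) :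
    split l p = finSuccEquiv A s (shear l p) := rfl

theorem split_symm_apply (l : Fin s → A) (p : Polynomial (MvPolynomial (Fin s) A)) :
    (split l).symm p = shear (-l) ((finSuccEquiv A s).symm p) := rfl

theorem natDegree_split_le (l : Fin s → A) (p : MvPolynomial (Fin (s + 1)) A) :
    (split l p).natDegree ≤ p.totalDegree := by
  rw [split_apply, natDegree_finSuccEquiv]
  refine (degreeOf_le_totalDegree _ _).trans ?_
  exact (shear_mem (Filtration.trivial A) (N := 0) (e := 0) (fun _ => by simp [Filtration.trivial])
    (p := p) ⟨le_rfl, fun _ => by simp [Filtration.trivial]⟩).1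

theorem coeff_split_mem (W : Filtration A) {N d e : ℕ} {l : Fin s → A} (hl : ∀ i, l i ∈ W.V N)
    {p : MvPolynomial (Fin (s + 1)) A} (hp : p ∈ W.Bd d e) (i : ℕ) :
    (split l p).coeff i ∈ W.Bd d (e + d * N) := by
  have h := shear_mem W hl hp
  refine ⟨?_, fun m => ?_⟩
  · rw [split_apply]
    by_cases h0 : (finSuccEquiv A s (shear l p)).coeff i = 0
    · simp [h0]
    · have := totalDegree_coeff_finSuccEquiv_add_le (shear l p) i h0
      have := h.1
      omega
  · rw [split_apply, finSuccEquiv_coeff_coeff]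
    exact h.2 _

theorem totalDegree_split_symm_unflat_le (l : Fin s → A) {κ : Type*} {D β : ℕ}
    (b : κ × Fin D → MvPolynomial (Fin s) A) (hb : ∀ y, (b y).totalDegree ≤ β) (j : κ) :
    ((split l).symm (unflat b j)).totalDegree ≤ β + D := by
  rw [split_symm_apply]
  have h1 : ((finSuccEquiv A s).symm (unflat b j)).totalDegree ≤ β + D := by
    rw [unflat, map_sum]
    refine totalDegree_finsetSum_le fun q _ => ?_
    have h2 : (finSuccEquiv A s).symm (Polynomial.C (b (j, q)) * Polynomial.X ^ (q : ℕ)) =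
        rename Fin.succ (b (j, q)) * X 0 ^ (q : ℕ) := by
      rw [AlgEquiv.symm_apply_eq, map_mul, map_pow, finSuccEquiv_X_zero]
      congr 1
      induction b (j, q) using MvPolynomial.induction_on with
      | C a => simp [finSuccEquiv_apply]
      | add p q hp hq => rw [map_add, map_add, map_add, hp, hq]
      | mul_X p i hp => rw [map_mul, map_mul, map_mul, ← hp, rename_X, finSuccEquiv_X_succ]
    rw [h2]
    refine (totalDegree_mul _ _).trans (add_le_add ((totalDegree_rename_le _ _).trans (hb _)) ?_)
    refine (totalDegree_pow _ _).trans ?_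
    have h3 : (X 0 : MvPolynomial (Fin (s + 1)) A).totalDegree ≤ 1 :=
      ((Filtration.trivial A).X_mem_Bd 0).1
    have := q.2
    nlinarith
  exact (shear_mem (Filtration.trivial A) (N := 0) (e := 0) (fun _ => by simp [Filtration.trivial])
    ⟨h1, fun _ => by simp [Filtration.trivial]⟩).1

/-- The value of a nonzero homogeneous polynomial at the points `(1, l)`, with `l` in a large
enough grid, is not always zero. -/
theorem exists_eval_cons_one_ne_zero [IsDomain A] {D : ℕ} {p : MvPolynomial (Fin (s + 1)) A}
    (hp : p.IsHomogeneous D) (hp0 : p ≠ 0) (L : Finset A) (hL : D < L.card) :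
    ∃ l : Fin s → A, (∀ i, l i ∈ L) ∧ eval (Fin.cons 1 l : Fin (s + 1) → A) p ≠ 0 := by
  classical
  set P : MvPolynomial (Fin s) A := Polynomial.eval 1 (finSuccEquiv A s p) with hP
  have hPsum : P = ∑ i ∈ Finset.range ((finSuccEquiv A s p).natDegree + 1),
      (finSuccEquiv A s p).coeff i := by
    rw [hP, Polynomial.eval_eq_sum_range]
    simp
  have hP0 : P ≠ 0 := by
    obtain ⟨m, hm⟩ := MvPolynomial.ne_zero_iff.1 hp0
    refine MvPolynomial.ne_zero_iff.2 ⟨m.tail, ?_⟩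
    have hzero : ∀ i, i ≠ m 0 → coeff (m.tail.cons i) p = 0 := by
      intro i hi
      by_contra hne
      have h1 := hp hne
      have h2 := hp hm
      rw [← Finsupp.cons_tail m] at h2
      rw [Pi.one_def, ← Finsupp.degree_eq_weight_one] at h1 h2
      simp only [Finsupp.degree_eq_sum, Fin.sum_univ_succ, Finsupp.cons_zero, Finsupp.cons_succ]
        at h1 h2
      omega
    rw [hPsum, coeff_sum]
    simp only [finSuccEquiv_coeff_coeff]
    rw [Finset.sum_eq_single (m 0)]
    · rwa [Finsupp.cons_tail]
    · exact fun i _ hi => hzero i hi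
    · intro hnot
      rw [← finSuccEquiv_coeff_coeff, Polynomial.coeff_eq_zero_of_natDegree_lt, coeff_zero]
      simpa using hnot
  have hPdeg : P.totalDegree ≤ D := by
    rw [hPsum]
    refine totalDegree_finsetSum_le fun i _ => ?_
    by_cases h0 : (finSuccEquiv A s p).coeff i = 0
    · simp [h0]
    · have := totalDegree_coeff_finSuccEquiv_add_le p i h0
      have := hp.totalDegree_le
      omega
  by_contra hcon
  push Not at hcon
  refine hP0 (eq_zero_of_eval_zero_at_prod_finset P (fun _ => L) (fun i => ?_) fun l hl => ?_)
  · exact lt_of_le_of_lt ((degreeOf_le_totalDegree _ _).trans hPdeg) hL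
  · have := hcon l hl
    rwa [eval_eq_eval_mv_eval', Polynomial.eval_one_map] at this

/-- After a shear with coefficients from a large enough finite set, a nonzero polynomial has, as a
polynomial in `y_0`, a leading coefficient which is a nonzero constant. -/
theorem exists_split_leadingCoeff [IsDomain A] {p : MvPolynomial (Fin (s + 1)) A}
    (hp0 : p ≠ 0) (L : Finset A) (hL : p.totalDegree < L.card) :
    ∃ l : Fin s → A, (∀ i, l i ∈ L) ∧ ∃ γ : A, γ ≠ 0 ∧ (split l p).leadingCoeff = C γ := by
  classical
  set D := p.totalDegree with hD
  have htop : homogeneousComponent D p ≠ 0 := by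
    obtain ⟨m, hm, hmD⟩ := Finset.exists_mem_eq_sup p.support (support_nonempty.2 hp0)
      (fun m => m.sum fun _ e => e)
    refine MvPolynomial.ne_zero_iff.2 ⟨m, ?_⟩
    rw [coeff_homogeneousComponent, if_pos]
    · exact mem_support_iff.1 hm
    · rw [hD, totalDegree, hmD, Finsupp.degree_eq_sum, Finsupp.sum_fintype _ _ (fun _ => rfl)]
  obtain ⟨l, hl, hne⟩ := exists_eval_cons_one_ne_zero
    (homogeneousComponent_isHomogeneous D p) htop L hL
  refine ⟨l, hl, _, hne, ?_⟩
  have hvar : ∀ i, (shearVar l i).IsHomogeneous 1 := by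
    intro i
    refine Fin.cases ?_ (fun i => ?_) i
    · exact isHomogeneous_X _ _
    · refine (isHomogeneous_X _ _).add ?_
      simpa using (isHomogeneous_C (Fin (s + 1)) (l i)).mul (isHomogeneous_X A (0 : Fin (s + 1)))
  have hsh : ∀ i, (shear l (homogeneousComponent i p)).IsHomogeneous i := fun i => by
    have := (homogeneousComponent_isHomogeneous i p).aeval _ hvar
    rwa [one_mul] at this
  -- The coefficient of `y_0 ^ D` only sees the top homogeneous component.
  have hcoeff : coeff (Finsupp.cons D 0) (shear l p) =
      coeff (Finsupp.cons D 0) (shear l (homogeneousComponent D p)) := by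
    conv_lhs => rw [← sum_homogeneousComponent p, map_sum, coeff_sum]
    rw [Finset.sum_eq_single D]
    · intro i _ hi
      refine (hsh i).coeff_eq_zero ?_
      simpa [Finsupp.degree_eq_sum, Fin.sum_univ_succ] using Ne.symm hi
    · intro h
      simp [← hD] at h
  -- On a form of degree `D` that coefficient is the value at `(1, 0, …, 0)`.
  have heval : ∀ q : MvPolynomial (Fin (s + 1)) A, q.IsHomogeneous D →
      coeff (Finsupp.cons D 0) q = eval (Fin.cons 1 0 : Fin (s + 1) → A) q := by
    intro q hq
    rw [eval_eq', Finset.sum_eq_single (Finsupp.cons D 0)]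
    · simp [Fin.prod_univ_succ]
    · intro m hm hmne
      rw [Fin.prod_univ_succ]
      by_cases ht : m.tail = 0
      · exfalso
        apply hmne
        have h1 := hq (mem_support_iff.1 hm)
        rw [← Finsupp.cons_tail m, ht] at h1 ⊢
        rw [Pi.one_def, ← Finsupp.degree_eq_weight_one] at h1
        simp only [Finsupp.degree_eq_sum, Fin.sum_univ_succ,
          Finsupp.cons_zero, Finsupp.cons_succ] at h1
        simp at h1
        rw [h1]
      · obtain ⟨i, hi⟩ := Finsupp.ne_iff.1 ht
        rw [Finset.prod_eq_zero (Finset.mem_univ i), mul_zero, mul_zero]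
        have hi' : m i.succ ≠ 0 := by simpa [Finsupp.tail_apply] using hi
        simp [hi']
    · intro h
      rw [notMem_support_iff.1 h, zero_mul]
  have hcomp : ∀ q : MvPolynomial (Fin (s + 1)) A,
      eval (Fin.cons 1 0 : Fin (s + 1) → A) (shear l q) =
        eval (Fin.cons 1 l : Fin (s + 1) → A) q := by
    intro q
    have : ((aeval (Fin.cons 1 0 : Fin (s + 1) → A)).comp (shear l) :
        MvPolynomial (Fin (s + 1)) A →ₐ[A] A) = aeval (Fin.cons 1 l : Fin (s + 1) → A) := by
      refine MvPolynomial.algHom_ext fun i => ?_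
      refine Fin.cases ?_ (fun i => ?_) i
      · simp [shear, shearVar]
      · simp [shear, shearVar]
    exact DFunLike.congr_fun this q
  rw [heval _ (hsh D), hcomp] at hcoeff
  have hcc : coeff 0 ((split l p).coeff D) =
      eval (Fin.cons 1 l : Fin (s + 1) → A) (homogeneousComponent D p) := by
    rw [split_apply, finSuccEquiv_coeff_coeff, hcoeff]
  have hD0 : (split l p).coeff D ≠ 0 := fun h => by
    rw [h, coeff_zero] at hcc
    exact hne hcc.symm
  have hdeg : (split l p).natDegree = D :=
    le_antisymm (natDegree_split_le l p) (Polynomial.le_natDegree_of_ne_zero hD0)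
  have h0 : ((split l p).coeff D).totalDegree = 0 := by
    have h1 := totalDegree_coeff_finSuccEquiv_add_le (shear l p) D hD0
    have h2 : (shear l p).totalDegree ≤ D :=
      (shear_mem (Filtration.trivial A) (N := 0) (e := 0)
        (fun _ => by simp [Filtration.trivial]) (p := p)
        ⟨le_rfl, fun _ => by simp [Filtration.trivial]⟩).1
    rw [split_apply]
    omega
  rw [Polynomial.leadingCoeff, hdeg, totalDegree_eq_zero_iff_eq_C.1 h0, hcc]

end Shear

/-! ### Linear systems over polynomial rings -/

section Systems

open MvPolynomial

theorem map_mulVec_comp {R R' : Type*} [CommRing R] [CommRing R'] (f : R →+* R')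
    {ι κ : Type*} [Fintype κ] (F : Matrix ι κ R) (a : κ → R) :
    F.map f *ᵥ (f ∘ a) = f ∘ (F *ᵥ a) := by
  funext i
  exact (RingHom.map_mulVec f F a i).symm

/-- A solution of a selection of rows generating all rows up to nonzero factors solves the whole
system, provided that the latter is solvable up to a nonzero factor. -/
theorem mulVec_eq_of_rows {A R : Type*} [CommRing A] [CommRing R] [IsDomain R] [Algebra A R]
    {ι κ : Type*} [Fintype κ] (F : Matrix ι κ R) {ρ : ℕ} (e : Fin ρ → ι)
    (hrow : ∀ i, ∃ (δ : R) (l : Fin ρ → R), δ ≠ 0 ∧ ∀ j, δ * F i j = ∑ x, l x * F (e x) j)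
    (a b : κ → R) (g : ι → R) (σ t : A) (hσ : algebraMap A R σ ≠ 0)
    (ha : F *ᵥ a = σ • g) (hb : F.submatrix e id *ᵥ b = t • (g ∘ e)) :
    F *ᵥ b = t • g := by
  funext i
  obtain ⟨δ, l, hδ, h⟩ := hrow i
  have key : ∀ v : κ → R, δ * (F *ᵥ v) i = ∑ x, l x * (F *ᵥ v) (e x) := by
    intro v
    simp only [Matrix.mulVec, dotProduct, Finset.mul_sum]
    rw [Finset.sum_comm]
    refine Finset.sum_congr rfl fun j _ => ?_
    rw [← mul_assoc, h j, Finset.sum_mul]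
    exact Finset.sum_congr rfl fun x _ => by ring
  have h1 : δ * g i = ∑ x, l x * g (e x) := by
    apply mul_left_cancel₀ hσ
    have := key a
    rw [ha] at this
    simp only [Pi.smul_apply, Algebra.smul_def] at this
    rw [mul_left_comm, this, Finset.mul_sum]
    exact Finset.sum_congr rfl fun x _ => by ring
  apply mul_left_cancel₀ hδ
  rw [key b]
  simp only [Pi.smul_apply, Algebra.smul_def]
  rw [mul_left_comm, h1, Finset.mul_sum]
  refine Finset.sum_congr rfl fun x _ => ?_
  have := congrFun hb x
  simp only [Pi.smul_apply, Algebra.smul_def, Function.comp] at this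
  have h2 : (F.submatrix e id *ᵥ b) x = (F *ᵥ b) (e x) := rfl
  rw [← h2, this]
  ring

theorem C_C_smul {A : Type*} [CommRing A] {s : ℕ} {κ : Type*} (x : A) (n : ℕ)
    (v : κ → Polynomial (MvPolynomial (Fin s) A)) :
    Polynomial.C ((C x : MvPolynomial (Fin s) A) ^ n) • v = x ^ n • v := by
  funext j
  simp only [Pi.smul_apply, smul_eq_mul, Algebra.smul_def, Polynomial.algebraMap_apply,
    MvPolynomial.algebraMap_eq, map_pow]

theorem smul_unflat {B : Type*} [CommRing B] {κ : Type*} {D : ℕ} (x : B) (b : κ × Fin D → B) :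
    unflat (x • b) = Polynomial.C x • unflat b := by
  funext j
  simp only [unflat, Pi.smul_apply, smul_eq_mul, map_mul, Finset.mul_sum, mul_assoc]

theorem add_unflat {B : Type*} [CommRing B] {κ : Type*} {D : ℕ} (b b' : κ × Fin D → B) :
    unflat (b + b') = unflat b + unflat b' := by
  funext j
  simp only [unflat, Pi.add_apply, map_add, add_mul, Finset.sum_add_distrib]

theorem syz_bound_aux (m d s : ℕ) (hd : 0 < d) :
    (2 * ((m * ((m + 2) * d) + 1) * d)) ^ 2 ^ s + (m + 1) * d ≤
      (2 * ((m + 1) * d)) ^ 2 ^ (s + 1) := by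
  set u := (m + 1) * d with hu
  have hu1 : 1 ≤ u := Nat.mul_pos (Nat.succ_pos m) hd
  have h1 : (m * ((m + 2) * d) + 1) * d ≤ u ^ 2 := by
    rw [hu]
    nlinarith [Nat.mul_le_mul_left d hd]
  have h2 : (2 * ((m * ((m + 2) * d) + 1) * d)) ^ 2 ^ s ≤ (2 * u ^ 2) ^ 2 ^ s := by gcongr
  have h3 : u ≤ (2 * u ^ 2) ^ 2 ^ s := by
    calc u ≤ 2 * u ^ 2 := by nlinarith
      _ ≤ _ := Nat.le_self_pow (by positivity) _
  have h4 : (2 * u) ^ 2 ^ (s + 1) = 2 ^ 2 ^ s * (2 * u ^ 2) ^ 2 ^ s := by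
    rw [pow_succ 2 s, mul_comm (2 ^ s) 2, pow_mul, ← mul_pow]
    ring_nf
  have h5 : 2 ≤ 2 ^ 2 ^ s := Nat.le_self_pow (by positivity) 2
  rw [h4]
  nlinarith

/-- Hermann's bound: over an infinite field, the syzygies of a matrix with `m` rows and entries of
degree at most `d` are generated in degree `(2 (m + 1) d) ^ 2 ^ s`, where `s` is the number of
variables. -/
theorem syzygies_span_of_infinite {k : Type*} [Field k] [Infinite k] (s : ℕ) :
    ∀ (m d : ℕ), 0 < d → ∀ (ι κ : Type) [Fintype ι] [Fintype κ], Fintype.card ι ≤ m →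
    ∀ (F : Matrix ι κ (MvPolynomial (Fin s) k)), (∀ i j, (F i j).totalDegree ≤ d) →
    ∀ a, F *ᵥ a = 0 → a ∈ Submodule.span (MvPolynomial (Fin s) k)
      {b | F *ᵥ b = 0 ∧ ∀ j, (b j).totalDegree ≤ (2 * ((m + 1) * d)) ^ 2 ^ s} := by
  classical
  induction s with
  | zero =>
    intro m d hd ι κ _ _ hm F hF a ha
    refine Submodule.subset_span ⟨ha, fun j => ?_⟩
    rw [eq_C_of_isEmpty (a j), totalDegree_C]
    exact Nat.zero_le _
  | succ s ih =>
    intro m d hd ι κ _ _ hm F hF a ha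
    obtain ⟨ρ, e, c, hρ, hdet, hrow⟩ := exists_maximal_minor F
    set F' : Matrix (Fin ρ) κ (MvPolynomial (Fin (s + 1)) k) := F.submatrix e id with hF'
    have hker : ∀ b, F' *ᵥ b = 0 → F *ᵥ b = 0 := fun b hb => by
      simpa using mulVec_eq_of_rows (A := k) F e hrow 0 b 0 1 1 (by simp) (by simp)
        (by rw [← hF', hb]; funext x; simp)
    have hdet' : (F'.submatrix id c).det ≠ 0 := hdet
    obtain ⟨L, hL⟩ := Infinite.exists_subset_card_eq k ((F'.submatrix id c).det.totalDegree + 1)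
    obtain ⟨l, -, γ, hγ, hlc⟩ := exists_split_leadingCoeff hdet' L (by omega)
    let φ : MvPolynomial (Fin (s + 1)) k →+* Polynomial (MvPolynomial (Fin s) k) :=
      (split l : _ ≃ₐ[k] _).toRingEquiv.toRingHom
    let φ' : Polynomial (MvPolynomial (Fin s) k) →+* MvPolynomial (Fin (s + 1)) k :=
      (split l : _ ≃ₐ[k] _).symm.toRingEquiv.toRingHom
    have hφ'φ : ∀ x, φ' (φ x) = x := fun x => (split l).symm_apply_apply x
    set G := F'.map φ with hG
    have hGdet : (G.submatrix id c).det = φ (F'.submatrix id c).det := by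
      rw [RingHom.map_det, RingHom.mapMatrix_apply]; rfl
    have hGdeg : ∀ i j, (G i j).natDegree ≤ d := fun i j =>
      (natDegree_split_le l (F' i j)).trans (hF _ _)
    have hφinj : Function.Injective φ := (split l).injective
    have hGa : G *ᵥ (φ ∘ a) = 0 := by
      rw [hG, map_mulVec_comp]
      have : F' *ᵥ a = 0 := by
        funext x
        exact congrFun ha (e x)
      rw [this]
      funext x
      simp
    obtain ⟨N, q, r, h1, h2⟩ := exists_reduced_solution G c d hd hGdeg
      (by rw [hGdet]; exact (map_ne_zero_iff φ hφinj).2 hdet') (φ ∘ a) 0 hGa (by simp)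
    have hlcG : (G.submatrix id c).det.leadingCoeff = C γ := by rw [hGdet]; exact hlc
    rw [hlcG, C_C_smul] at h1
    have hGr : G *ᵥ r = 0 := by
      have := congrArg (G *ᵥ ·) h1
      simpa only [Matrix.mulVec_smul, hGa, smul_zero, Matrix.mulVec_add, Matrix.mulVec_mulVec,
        mul_syz, Matrix.zero_mulVec, zero_add, eq_comm] using this
    set S := {b | F *ᵥ b = 0 ∧ ∀ j, (b j).totalDegree ≤ (2 * ((m + 1) * d)) ^ 2 ^ (s + 1)}
      with hS
    have hbound := syz_bound_aux m d s hd
    rw [Fintype.card_fin] at h2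
    have hρm : ρ ≤ m := hρ.trans hm
    -- The columns of `syz` have bounded degree.
    have hq : φ' ∘ (syz G c *ᵥ q) ∈ Submodule.span (MvPolynomial (Fin (s + 1)) k) S := by
      have hmap : (syz G c).map φ' = syz F' c := by
        rw [hG, syz_map]
        ext i j
        simp [hφ'φ]
      rw [← map_mulVec_comp, hmap]
      have : syz F' c *ᵥ (φ' ∘ q) = ∑ j, (φ' ∘ q) j • (fun i => syz F' c i j) := by
        funext i
        simp [Matrix.mulVec, dotProduct, mul_comm]
      rw [this]
      refine Submodule.sum_mem _ fun j _ => Submodule.smul_mem _ _ (Submodule.subset_span ⟨?_, ?_⟩)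
      · refine hker _ ?_
        funext x
        exact congrFun (congrFun (mul_syz F' c) x) j
      · intro i
        have h3 := syz_mem ((Filtration.trivial k).poly (Fin (s + 1)) d 0) F' c
          (fun i j => ⟨by rw [one_mul]; exact hF _ _, by simp [Filtration.trivial]⟩) i j
        have h4 : (syz F' c i j).totalDegree ≤ (Fintype.card (Fin ρ) + 1) * d := h3.1
        rw [Fintype.card_fin] at h4
        have : (ρ + 1) * d ≤ (m + 1) * d := by gcongr
        change (syz F' c i j).totalDegree ≤ _
        omega
    -- The remainder is governed by the flattened system, which has one variable less.
    have hr : φ' ∘ r ∈ Submodule.span (MvPolynomial (Fin (s + 1)) k) S := by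
      have hrD : ∀ j, (r j).natDegree < (m + 1) * d := fun j =>
        lt_of_lt_of_le (h2 j) (by gcongr)
      have hru := unflat_coeff r hrD
      rw [← hru] at hGr
      have hflat := (flat_mulVec_iff G hGdeg _ 0 (by simp)).2 hGr
      have hb := ih (m * ((m + 2) * d)) d hd (Fin ρ × Fin ((m + 1) * d + d))
        (κ × Fin ((m + 1) * d))
        (by
          rw [Fintype.card_prod, Fintype.card_fin, Fintype.card_fin]
          calc ρ * ((m + 1) * d + d) ≤ m * ((m + 1) * d + d) := by gcongr
            _ = _ := by ring)
        (flat G ((m + 1) * d) ((m + 1) * d + d))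
        (fun x y => by
          rw [flat, Polynomial.coeff_mul_X_pow']
          split_ifs
          · exact (coeff_split_mem (Filtration.trivial k) (N := 0) (e := 0)
              (fun _ => by simp [Filtration.trivial])
              (p := F' x.1 y.1) ⟨hF _ _, fun _ => by simp [Filtration.trivial]⟩ _).1
          · simp)
        _ (hflat.trans (by funext x; simp))
      rw [← hru]
      clear hru hflat hGr
      generalize (fun y : κ × Fin ((m + 1) * d) => (r y.1).coeff y.2) = b₀ at hb ⊢
      induction hb using Submodule.span_induction with
      | mem b hb =>
        refine Submodule.subset_span ⟨hker _ ?_, fun j => ?_⟩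
        · have h5 := (flat_mulVec_iff G hGdeg b 0 (by simp)).1
            (hb.1.trans (by funext x; simp))
          have h6 : F' = G.map φ' := by
            ext i j
            simp [hG, hφ'φ]
          rw [h6, map_mulVec_comp, h5]
          funext x
          simp
        · exact (totalDegree_split_symm_unflat_le l b hb.2 j).trans hbound
      | zero =>
        have : φ' ∘ unflat (0 : κ × Fin ((m + 1) * d) → MvPolynomial (Fin s) k) = 0 := by
          funext j
          simp [unflat]
        rw [this]
        exact zero_mem _
      | add x y _ _ hx hy =>
        have : φ' ∘ unflat (x + y) = φ' ∘ unflat x + φ' ∘ unflat y := by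
          funext j
          simp [add_unflat]
        rw [this]
        exact add_mem hx hy
      | smul t x _ hx =>
        have : φ' ∘ unflat (t • x) = φ' (Polynomial.C t) • (φ' ∘ unflat x) := by
          funext j
          simp [smul_unflat]
        rw [this]
        exact Submodule.smul_mem _ _ hx
    have hfin : a = (C (γ ^ N)⁻¹ : MvPolynomial (Fin (s + 1)) k) • (φ' ∘ (syz G c *ᵥ q) + φ' ∘ r) := by
      have h7 : φ' ∘ (syz G c *ᵥ q) + φ' ∘ r = (C (γ ^ N) : MvPolynomial (Fin (s + 1)) k) • a := by
        funext j
        have h8 := congrArg (split l).symm (congrFun h1 j)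
        simp only [Pi.smul_apply, Pi.add_apply, map_smul, map_add] at h8
        have h9 : (split l).symm ((φ ∘ a) j) = a j := hφ'φ _
        rw [h9] at h8
        simp only [Pi.add_apply, Pi.smul_apply, Function.comp, smul_eq_mul, ← smul_eq_C_mul]
        exact h8.symm
      rw [h7, smul_smul, ← C_mul, inv_mul_cancel₀ (pow_ne_zero _ hγ), C_1, one_smul]
    rw [hfin]
    exact Submodule.smul_mem _ _ (add_mem hq hr)

end Systems

/-! ### Bounded denominators -/

section Denominators

open MvPolynomial

theorem den_bound_aux (m d e s : ℕ) (hd : 0 < d) (hde : d ≤ e) :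
    ((m * ((m + 2) * d) + 1) * d + (e + d * (m * d))) ^ (3 * 2 ^ s) ≤
      ((m + 1) * d + e) ^ (3 * 2 ^ (s + 1)) := by
  have h1 : (m * ((m + 2) * d) + 1) * d + (e + d * (m * d)) ≤ ((m + 1) * d + e) ^ 2 := by
    obtain ⟨f, rfl⟩ := Nat.exists_eq_add_of_le hde
    obtain ⟨c, rfl⟩ := Nat.exists_eq_add_of_le hd
    ring_nf
    nlinarith [Nat.zero_le (m * c), Nat.zero_le (m * c ^ 2), Nat.zero_le (c * f),
      Nat.zero_le (m * f), Nat.zero_le (m * c * f), Nat.zero_le (f ^ 2), Nat.zero_le (c ^ 2)]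
  calc _ ≤ (((m + 1) * d + e) ^ 2) ^ (3 * 2 ^ s) := by gcongr
    _ = _ := by rw [← pow_mul]; ring_nf

theorem den_bound_aux' (m d e s : ℕ) (hd : 0 < d) (hde : d ≤ e) :
    m * e + m * d * (m * d) ≤ ((m + 1) * d + e) ^ (3 * 2 ^ s) := by
  set v := (m + 1) * d + e with hv
  have hv1 : 1 ≤ v := by omega
  calc m * e + m * d * (m * d) ≤ v ^ 2 := by
        rw [hv]
        nlinarith [Nat.zero_le (m * e), Nat.mul_le_mul_left (m * e) hd]
    _ ≤ v ^ (3 * 2 ^ s) := by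
        apply Nat.pow_le_pow_right hv1
        have : 0 < 2 ^ s := by positivity
        omega

/-- A linear system over `A[y_1, …, y_s]` which is solvable over the fraction field of `A` is
solvable with a denominator from any multiplicative subset `T` of `A` containing the nonzero
elements of `A` of bounded degree; the bound does not depend on the right-hand side.  The field of
coefficients may be finite, so the shears use coefficients from `A`. -/
theorem exists_denominator {A : Type*} [CommRing A] [IsDomain A] (W : Filtration A)
    (T : Submonoid A) (hΛ : ∀ N, ∃ L : Finset A, N < L.card ∧ ∀ x ∈ L, x ∈ W.V N) (s : ℕ) :
    ∀ (m d e : ℕ), 0 < d → d ≤ e →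
    (∀ x : A, x ≠ 0 → x ∈ W.V (((m + 1) * d + e) ^ (3 * 2 ^ s)) → x ∈ T) →
    ∀ (ι κ : Type) [Fintype ι] [Fintype κ], Fintype.card ι ≤ m →
    ∀ (F : Matrix ι κ (MvPolynomial (Fin s) A)), (∀ i j, F i j ∈ W.Bd d e) →
    ∀ (g : ι → MvPolynomial (Fin s) A) (a : κ → MvPolynomial (Fin s) A) (σ : A), σ ≠ 0 →
    F *ᵥ a = σ • g → ∃ t ∈ T, ∃ b, F *ᵥ b = t • g := by
  classical
  induction s with
  | zero =>
    intro m d e hd hde hT ι κ _ _ hm F hF g a σ hσ ha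
    obtain ⟨ρ, er, c, hρ, hdet, hrow⟩ := exists_maximal_minor F
    set F' : Matrix (Fin ρ) κ (MvPolynomial (Fin 0) A) := F.submatrix er id with hF'
    have hdet' : (F'.submatrix id c).det ≠ 0 := hdet
    have hmem : (F'.submatrix id c).det ∈ W.Bd (Fintype.card (Fin ρ) * d)
        (Fintype.card (Fin ρ) * e) :=
      (W.poly (Fin 0) d e).det_mem (F'.submatrix id c)
        (fun i j => by simpa [Filtration.poly, hF'] using hF (er i) (c j))
    set δ := coeff 0 (F'.submatrix id c).det with hδ
    have hC : (F'.submatrix id c).det = C δ := eq_C_of_isEmpty _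
    refine ⟨δ, hT δ ?_ ?_, lift F' c *ᵥ (g ∘ er), ?_⟩
    · rintro h0
      rw [h0, C_0] at hC
      exact hdet' hC
    · refine W.mono ?_ (hmem.2 0)
      rw [Fintype.card_fin]
      have h1 : ρ * e ≤ m * e := Nat.mul_le_mul_right e (hρ.trans hm)
      have h2 := den_bound_aux' m d e 0 hd hde
      omega
    · refine mulVec_eq_of_rows F er hrow a _ g σ δ ?_ ha ?_
      · simpa using hσ
      · rw [← hF', Matrix.mulVec_mulVec, mul_lift, hC, Matrix.smul_mulVec, Matrix.one_mulVec]
        funext x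
        simp [smul_eq_C_mul]
  | succ s ih =>
    intro m d e hd hde hT ι κ _ _ hm F hF g a σ hσ ha
    obtain ⟨ρ, er, c, hρ, hdet, hrow⟩ := exists_maximal_minor F
    set F' : Matrix (Fin ρ) κ (MvPolynomial (Fin (s + 1)) A) := F.submatrix er id with hF'
    have hdet' : (F'.submatrix id c).det ≠ 0 := hdet
    have hρm : ρ ≤ m := hρ.trans hm
    have hmem : (F'.submatrix id c).det ∈ W.Bd (m * d) (m * e) := by
      have := (W.poly (Fin (s + 1)) d e).det_mem (F'.submatrix id c)
        (fun i j => by simpa [Filtration.poly, hF'] using hF (er i) (c j))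
      rw [Fintype.card_fin] at this
      exact W.Bd_mono (by gcongr) (by gcongr) this
    obtain ⟨L, hL, hLV⟩ := hΛ (m * d)
    obtain ⟨l, hl, γ, hγ, hlc⟩ := exists_split_leadingCoeff hdet' L (lt_of_le_of_lt hmem.1 hL)
    have hlV : ∀ i, l i ∈ W.V (m * d) := fun i => hLV _ (hl i)
    have hγT : γ ∈ T := by
      refine hT γ hγ (W.mono (den_bound_aux' m d e (s + 1) hd hde) ?_)
      have h1 := (coeff_split_mem W hlV hmem (split l (F'.submatrix id c).det).natDegree).2 0
      rw [← Polynomial.leadingCoeff, hlc, coeff_zero_C] at h1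
      exact h1
    let φ : MvPolynomial (Fin (s + 1)) A →+* Polynomial (MvPolynomial (Fin s) A) :=
      (split l : _ ≃ₐ[A] _).toRingEquiv.toRingHom
    let φ' : Polynomial (MvPolynomial (Fin s) A) →+* MvPolynomial (Fin (s + 1)) A :=
      (split l : _ ≃ₐ[A] _).symm.toRingEquiv.toRingHom
    have hφ'φ : ∀ x, φ' (φ x) = x := fun x => (split l).symm_apply_apply x
    have hφs : ∀ {κ' : Type} (x : A) (v : κ' → MvPolynomial (Fin (s + 1)) A),
        φ ∘ (x • v) = x • (φ ∘ v) := fun x v => by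
      funext j
      exact map_smul (split l) x (v j)
    have hφ's : ∀ {κ' : Type} (x : A) (v : κ' → Polynomial (MvPolynomial (Fin s) A)),
        φ' ∘ (x • v) = x • (φ' ∘ v) := fun x v => by
      funext j
      exact map_smul (split l).symm x (v j)
    set G := F'.map φ with hG
    set Δ := (G.submatrix id c).det with hΔ
    have hGdet : Δ = φ (F'.submatrix id c).det := by
      rw [RingHom.map_det, RingHom.mapMatrix_apply]; rfl
    have hGdeg : ∀ i j, (G i j).natDegree ≤ d := fun i j =>
      (natDegree_split_le l (F' i j)).trans (hF _ _).1
    have hφinj : Function.Injective φ := (split l).injective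
    have hΔ0 : Δ ≠ 0 := by rw [hGdet]; exact (map_ne_zero_iff φ hφinj).2 hdet'
    have hlcG : Δ.leadingCoeff = C γ := by rw [hGdet]; exact hlc
    have hΔdeg : Δ.natDegree ≤ m * d := by
      rw [hGdet]
      exact (natDegree_split_le l _).trans hmem.1
    have hGlift : ∀ v, G *ᵥ (lift G c *ᵥ v) = Δ • v := fun v => by
      rw [Matrix.mulVec_mulVec, mul_lift, Matrix.smul_mulVec, Matrix.one_mulVec]
    have hGa : G *ᵥ (φ ∘ a) = σ • (φ ∘ (g ∘ er)) := by
      rw [hG, map_mulVec_comp, ← hφs]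
      congr 1
      funext x
      exact congrFun ha (er x)
    -- Reduce the right-hand side modulo the image of `Δ`.
    obtain ⟨N₀, q₀, g', h0, hg'⟩ := exists_pseudo_div_vec Δ (φ ∘ (g ∘ er))
    rw [hlcG, C_C_smul] at h0
    have ha1 : G *ᵥ (γ ^ N₀ • (φ ∘ a) - σ • (lift G c *ᵥ q₀)) = σ • g' := by
      rw [Matrix.mulVec_sub, Matrix.mulVec_smul, Matrix.mulVec_smul, hGa, hGlift, smul_comm, h0,
        smul_add]
      abel
    -- Reduce the solution, and pass to the flattened system.
    obtain ⟨N, q, r, h1, h2⟩ := exists_reduced_solution G c d hd hGdeg hΔ0 _ _ ha1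
      (fun i p hp => by
        rw [Pi.smul_apply, Polynomial.coeff_smul, hg' i p ((Nat.le_add_right _ _).trans hp),
          smul_zero])
    rw [← hΔ, hlcG, C_C_smul] at h1
    have hGr : G *ᵥ r = (γ ^ N * σ) • g' := by
      have := congrArg (G *ᵥ ·) h1
      simp only [Matrix.mulVec_smul, ha1, Matrix.mulVec_add, Matrix.mulVec_mulVec,
        mul_syz, Matrix.zero_mulVec, zero_add] at this
      rw [← this, smul_smul]
    rw [Fintype.card_fin] at h2
    have hrD : ∀ j, (r j).natDegree < (m + 1) * d := fun j =>
      lt_of_lt_of_le (h2 j) (by gcongr)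
    have hru := unflat_coeff r hrD
    rw [← hru] at hGr
    have hmd : m * d ≤ (m + 1) * d := by gcongr; omega
    have hflat := (flat_mulVec_iff G hGdeg _ _ (fun i p hp => by
      rw [Pi.smul_apply, Polynomial.coeff_smul, hg' i p (by omega), smul_zero])).2 hGr
    obtain ⟨t, ht, b, hb⟩ := ih (m * ((m + 2) * d)) d (e + d * (m * d)) hd (by omega)
      (fun x hx hxV => hT x hx (W.mono (den_bound_aux m d e s hd hde) hxV))
      (Fin ρ × Fin ((m + 1) * d + d)) (κ × Fin ((m + 1) * d))
      (by
        rw [Fintype.card_prod, Fintype.card_fin, Fintype.card_fin]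
        calc ρ * ((m + 1) * d + d) ≤ m * ((m + 1) * d + d) := by gcongr
          _ = _ := by ring)
      (flat G ((m + 1) * d) ((m + 1) * d + d))
      (fun x y => by
        rw [flat, Polynomial.coeff_mul_X_pow']
        split_ifs
        · exact coeff_split_mem W hlV (hF _ _) _
        · exact zero_mem _)
      (fun x => (g' x.1).coeff x.2) _ (γ ^ N * σ) (mul_ne_zero (pow_ne_zero _ hγ) hσ)
      (hflat.trans (by funext x; simp [Polynomial.coeff_smul]))
    have hGb : G *ᵥ unflat b = t • g' :=
      (flat_mulVec_iff G hGdeg b (t • g') (fun i p hp => by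
        rw [Pi.smul_apply, Polynomial.coeff_smul, hg' i p (by omega), smul_zero])).1
        (hb.trans (by funext x; simp [Polynomial.coeff_smul]))
    have hsol : G *ᵥ (unflat b + t • (lift G c *ᵥ q₀)) = (t * γ ^ N₀) • (φ ∘ (g ∘ er)) := by
      rw [Matrix.mulVec_add, Matrix.mulVec_smul, hGlift, hGb, ← smul_add, add_comm g', ← h0,
        smul_smul]
    refine ⟨t * γ ^ N₀, T.mul_mem ht (T.pow_mem hγT _),
      φ' ∘ (unflat b + t • (lift G c *ᵥ q₀)), ?_⟩
    refine mulVec_eq_of_rows F er hrow a _ g σ _ ?_ ha ?_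
    · simpa using hσ
    · have h6 : F.submatrix er id = G.map φ' := by
        ext i j
        simp [hG, hφ'φ, hF']
      rw [h6, map_mulVec_comp, hsol, hφ's]
      congr 1
      funext x
      exact hφ'φ _

end Denominators

/-! ### Descent of the syzygy bound to an arbitrary field -/

section Descent

open MvPolynomial

/-- The coefficientwise application of a `k`-linear map `K → k` to a polynomial. -/
noncomputable def coeffMap {k K σ : Type*} [Field k] [Field K] [Algebra k K] (φ : K →ₗ[k] k) :
    MvPolynomial σ K →+ MvPolynomial σ k where
  toFun p := AddMonoidAlgebra.ofCoeff ((AddMonoidAlgebra.coeff p).mapRange φ φ.map_zero)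
  map_zero' := by ext m; simp [MvPolynomial.coeff]
  map_add' p q := by ext m; simp [MvPolynomial.coeff]

theorem coeff_coeffMap {k K σ : Type*} [Field k] [Field K] [Algebra k K] (φ : K →ₗ[k] k)
    (p : MvPolynomial σ K) (m : σ →₀ ℕ) : (coeffMap φ p).coeff m = φ (p.coeff m) := by
  simp [coeffMap, MvPolynomial.coeff]

theorem coeffMap_map_mul {k K σ : Type*} [Field k] [Field K] [Algebra k K] (φ : K →ₗ[k] k)
    (p : MvPolynomial σ k) (q : MvPolynomial σ K) :
    coeffMap φ (map (algebraMap k K) p * q) = p * coeffMap φ q := by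
  classical
  ext m
  simp only [coeff_coeffMap, coeff_mul, map_sum, coeff_map, ← Algebra.smul_def, map_smul,
    smul_eq_mul]

theorem totalDegree_coeffMap_le {k K σ : Type*} [Field k] [Field K] [Algebra k K] (φ : K →ₗ[k] k)
    (p : MvPolynomial σ K) : (coeffMap φ p).totalDegree ≤ p.totalDegree := by
  refine Finset.sup_mono fun m hm => ?_
  rw [mem_support_iff] at hm ⊢
  rw [coeff_coeffMap] at hm
  exact fun h => hm (by rw [h, map_zero])

/-- Hermann's bound over an arbitrary field.  After extending scalars to the algebraic closure
`K`, the syzygies are generated in bounded degree; a `k`-linear retraction `K → k`, applied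
coefficientwise, brings the generators back to `k`. -/
theorem syzygies_span {k : Type*} [Field k] (s m d : ℕ) (hd : 0 < d) (ι κ : Type) [Fintype ι]
    [Fintype κ] (hm : Fintype.card ι ≤ m) (F : Matrix ι κ (MvPolynomial (Fin s) k))
    (hF : ∀ i j, (F i j).totalDegree ≤ d) (a : κ → MvPolynomial (Fin s) k) (ha : F *ᵥ a = 0) :
    a ∈ Submodule.span (MvPolynomial (Fin s) k)
      {b | F *ᵥ b = 0 ∧ ∀ j, (b j).totalDegree ≤ (2 * ((m + 1) * d)) ^ 2 ^ s} := by
  classical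
  let K := AlgebraicClosure k
  obtain ⟨φ, hφ⟩ := LinearMap.exists_leftInverse_of_injective (Algebra.linearMap k K)
    (LinearMap.ker_eq_bot.2 (algebraMap k K).injective)
  have hφ1 : φ 1 = 1 := by
    have := LinearMap.congr_fun hφ 1
    simpa using this
  let ψ := map (σ := Fin s) (algebraMap k K)
  have hret : ∀ p, coeffMap φ (ψ p) = p := fun p => by
    ext m
    rw [coeff_coeffMap, coeff_map, Algebra.algebraMap_eq_smul_one, map_smul, hφ1, smul_eq_mul,
      mul_one]
  have hmv : ∀ b, F *ᵥ (coeffMap φ ∘ b) = coeffMap φ ∘ (F.map ψ *ᵥ b) := fun b => by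
    funext i
    simp only [Matrix.mulVec, dotProduct, Function.comp, map_sum, Matrix.map_apply]
    exact Finset.sum_congr rfl fun j _ => (coeffMap_map_mul φ _ _).symm
  have hK := syzygies_span_of_infinite (k := K) s m d hd ι κ hm (F.map ψ)
    (fun i j => (Finset.sup_mono (support_map_subset _ _)).trans (hF i j)) (ψ ∘ a) (by
      rw [map_mulVec_comp, ha]
      funext i
      simp)
  set S := {b | F *ᵥ b = 0 ∧ ∀ j, (b j).totalDegree ≤ (2 * ((m + 1) * d)) ^ 2 ^ s}
  have key : ∀ x ∈ Submodule.span (MvPolynomial (Fin s) K)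
      {b | F.map ψ *ᵥ b = 0 ∧ ∀ j, (b j).totalDegree ≤ (2 * ((m + 1) * d)) ^ 2 ^ s},
      ∀ p : MvPolynomial (Fin s) K,
        coeffMap φ ∘ (p • x) ∈ Submodule.span (MvPolynomial (Fin s) k) S := by
    intro x hx
    induction hx using Submodule.span_induction with
    | mem b hb =>
      intro p
      induction p using MvPolynomial.induction_on' with
      | monomial α c =>
        have h1 : coeffMap φ ∘ (monomial α c • b) =
            (monomial α 1 : MvPolynomial (Fin s) k) •
              (coeffMap φ ∘ ((C c : MvPolynomial (Fin s) K) • b)) := by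
          funext j
          simp only [Function.comp, Pi.smul_apply, smul_eq_mul]
          rw [← coeffMap_map_mul, map_monomial, map_one, ← mul_assoc, mul_comm (monomial α 1),
            C_mul_monomial, mul_one]
        rw [h1]
        refine Submodule.smul_mem _ _ (Submodule.subset_span ⟨?_, fun j => ?_⟩)
        · rw [hmv, Matrix.mulVec_smul, hb.1, smul_zero]
          funext j
          simp
        · refine (totalDegree_coeffMap_le _ _).trans ?_
          rw [Pi.smul_apply, smul_eq_mul]
          refine (totalDegree_mul _ _).trans ?_
          rw [totalDegree_C, zero_add]
          exact hb.2 j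
      | add p q hp hq =>
        have : coeffMap φ ∘ ((p + q) • b) = coeffMap φ ∘ (p • b) + coeffMap φ ∘ (q • b) := by
          funext j
          simp [add_mul]
        rw [this]
        exact add_mem hp hq
    | zero =>
      intro p
      have : coeffMap φ ∘ (p • (0 : κ → MvPolynomial (Fin s) K)) = 0 := by
        funext j
        simp
      rw [this]
      exact zero_mem _
    | add x y _ _ hx hy =>
      intro p
      have : coeffMap φ ∘ (p • (x + y)) = coeffMap φ ∘ (p • x) + coeffMap φ ∘ (p • y) := by
        funext j
        simp
      rw [this]
      exact add_mem (hx p) (hy p)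
    | smul t x _ hx =>
      intro p
      rw [smul_smul]
      exact hx _
  have := key _ hK 1
  rw [one_smul] at this
  convert this using 1
  funext j
  exact (hret _).symm

/-- If `c` is a nonzerodivisor modulo `I` on polynomials of bounded degree, then it is one on all
polynomials: the colon ideal `I : c` is generated by first components of bounded syzygies of
`c, f_1, …, f_l`. -/
theorem mem_of_mul_mem_of_bounded {k : Type*} [Field k] {n l D : ℕ} (hD : 0 < D)
    (f : Fin l → MvPolynomial (Fin n) k) (hf : ∀ i, (f i).totalDegree ≤ D)
    (c : MvPolynomial (Fin n) k) (hc : c.totalDegree ≤ D)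
    (h : ∀ g : MvPolynomial (Fin n) k, g.totalDegree ≤ (4 * D) ^ 2 ^ n →
      c * g ∈ Ideal.span (Set.range f) → g ∈ Ideal.span (Set.range f))
    (g : MvPolynomial (Fin n) k) (hg : c * g ∈ Ideal.span (Set.range f)) :
    g ∈ Ideal.span (Set.range f) := by
  classical
  let F : Matrix Unit (Option (Fin l)) (MvPolynomial (Fin n) k) := fun _ j => j.elim c f
  have hmv : ∀ b, F *ᵥ b = fun _ => c * b none + ∑ i, f i * b (some i) := fun b => by
    funext x
    simp [Matrix.mulVec, dotProduct, F, Fintype.sum_option]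
  obtain ⟨a, ha⟩ := Ideal.mem_span_range_iff_exists_fun.1 hg
  have hspan := syzygies_span n 1 D hD Unit (Option (Fin l)) (by simp) F
    (fun i j => by cases j; exacts [hc, hf _]) (fun j => j.elim g (fun i => - a i)) (by
      rw [hmv]
      funext x
      simp only [Option.elim_none, Option.elim_some, Pi.zero_apply, mul_neg,
        Finset.sum_neg_distrib, ← ha]
      rw [add_neg_eq_zero]
      exact Finset.sum_congr rfl fun i _ => mul_comm _ _)
  suffices H : ∀ x ∈ Submodule.span (MvPolynomial (Fin n) k)
      {b | F *ᵥ b = 0 ∧ ∀ j, (b j).totalDegree ≤ (2 * ((1 + 1) * D)) ^ 2 ^ n},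
      x none ∈ Ideal.span (Set.range f) from H _ hspan
  intro x hx
  induction hx using Submodule.span_induction with
  | mem b hb =>
    refine h _ ((hb.2 none).trans (le_of_eq (by ring_nf))) ?_
    have h1 := congrFun (hb.1) ()
    rw [hmv] at h1
    rw [eq_neg_of_add_eq_zero_left h1]
    exact neg_mem (Ideal.sum_mem _ fun i _ =>
      Ideal.mul_mem_right _ _ (Ideal.subset_span ⟨i, rfl⟩))
  | zero => exact zero_mem _
  | add x y _ _ hx hy => exact add_mem hx hy
  | smul t x _ hx => exact Ideal.mul_mem_left _ _ hx

end Descent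

/-! ### Separating the independent variables -/

section Separation

open MvPolynomial

/-- The map `k[x_1, …, x_{r+s}] → k[x_1, …, x_r][y_1, …, y_s]` separating the first `r`
variables from the others. -/
noncomputable def sep (k : Type*) [Field k] (r s : ℕ) :
    MvPolynomial (Fin (r + s)) k →ₐ[k] MvPolynomial (Fin s) (MvPolynomial (Fin r) k) :=
  aeval (Fin.addCases (fun i => C (X i)) X)

/-- The inverse of `sep`. -/
noncomputable def unsep (k : Type*) [Field k] (r s : ℕ) :
    MvPolynomial (Fin s) (MvPolynomial (Fin r) k) →+* MvPolynomial (Fin (r + s)) k :=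
  eval₂Hom (rename (Fin.castAdd s)).toRingHom (fun i => X (Fin.natAdd r i))

theorem unsep_C {k : Type*} [Field k] {r s : ℕ} (c : MvPolynomial (Fin r) k) :
    unsep k r s (C c) = rename (Fin.castAdd s) c := by
  simp [unsep]

theorem unsep_sep {k : Type*} [Field k] {r s : ℕ} (p : MvPolynomial (Fin (r + s)) k) :
    unsep k r s (sep k r s p) = p := by
  have : (unsep k r s).comp (sep k r s).toRingHom = RingHom.id _ := by
    refine MvPolynomial.ringHom_ext (fun c => ?_) (fun i => ?_)
    · simp [sep, unsep, MvPolynomial.algebraMap_apply, MvPolynomial.algebraMap_eq]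
    · refine Fin.addCases (fun i => ?_) (fun i => ?_) i <;> simp [sep, unsep]
  exact RingHom.congr_fun this p

theorem sep_rename {k : Type*} [Field k] {r s : ℕ} (c : MvPolynomial (Fin r) k) :
    sep k r s (rename (Fin.castAdd s) c) = C c := by
  have : ((sep k r s).comp (rename (Fin.castAdd s))) =
      (IsScalarTower.toAlgHom k (MvPolynomial (Fin r) k) _) := by
    refine MvPolynomial.algHom_ext fun i => ?_
    simp [sep, MvPolynomial.algebraMap_eq]
  exact DFunLike.congr_fun this c

/-- The filtration of `k[x_1, …, x_r]` by total degree. -/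
noncomputable def degFiltration (k : Type*) [Field k] (r : ℕ) :
    Filtration (MvPolynomial (Fin r) k) :=
  (Filtration.trivial k).poly (Fin r) 1 0

theorem mem_degFiltration {k : Type*} [Field k] {r j : ℕ} {p : MvPolynomial (Fin r) k} :
    p ∈ (degFiltration k r).V j ↔ p.totalDegree ≤ j := by
  simp [degFiltration, Filtration.poly, Filtration.mem_Bd, Filtration.trivial]

theorem sep_mem {k : Type*} [Field k] {r s d : ℕ} {p : MvPolynomial (Fin (r + s)) k}
    (hp : p.totalDegree ≤ d) : sep k r s p ∈ (degFiltration k r).Bd d d := by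
  set W := (degFiltration k r).poly (Fin s) 1 1 with hW
  have hWV : ∀ j, W.V j = (degFiltration k r).Bd j j := fun j => by
    simp [hW, Filtration.poly]
  have hX : ∀ i, (Fin.addCases (fun i => C (X i)) X :
      Fin (r + s) → MvPolynomial (Fin s) (MvPolynomial (Fin r) k)) i ∈ W.V 1 := by
    intro i
    rw [hWV]
    refine Fin.addCases (fun i => ?_) (fun i => ?_) i
    · simp only [Fin.addCases_left]
      exact Filtration.Bd_mono _ zero_le_one le_rfl
        (Filtration.C_mem_Bd _ (mem_degFiltration.2 (by simp)))
    · simp only [Fin.addCases_right]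
      exact Filtration.Bd_mono _ le_rfl zero_le_one (Filtration.X_mem_Bd _ i)
  rw [← hWV, sep, aeval_def, eval₂_eq]
  refine sum_mem fun m hm => ?_
  have h1 := W.prod_mem m.support _ (fun i => m i * 1)
    (fun i _ => W.pow_mem (hX i) (m i))
  have h2 : algebraMap k (MvPolynomial (Fin s) (MvPolynomial (Fin r) k)) (coeff m p) ∈ W.V 0 := by
    rw [hWV, MvPolynomial.algebraMap_apply]
    exact Filtration.C_mem_Bd _ (mem_degFiltration.2 (by simp [MvPolynomial.algebraMap_eq]))
  refine W.mono ?_ (W.mul_mem h2 h1)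
  have := (le_totalDegree hm).trans hp
  simpa [Finsupp.sum] using this

theorem final_bound (n d : ℕ) (hn : 1 < n) (hd : 1 < d) (s : ℕ) (hs : s ≤ n) :
    (4 * (3 * d) ^ (3 * 2 ^ s)) ^ 2 ^ n ≤ (2 * n * d) ^ (n * 2 ^ (4 * n + 8)) := by
  have h1 : 4 ≤ 2 * n * d := by nlinarith
  have h2 : 3 * d ≤ 2 * n * d := by nlinarith
  have h3 : 2 ^ s ≤ 2 ^ n := Nat.pow_le_pow_right (by norm_num) hs
  have h4 : 1 ≤ 2 ^ n := Nat.one_le_two_pow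
  calc (4 * (3 * d) ^ (3 * 2 ^ s)) ^ 2 ^ n
      ≤ ((2 * n * d) * (2 * n * d) ^ (3 * 2 ^ s)) ^ 2 ^ n := by gcongr
    _ = (2 * n * d) ^ ((3 * 2 ^ s + 1) * 2 ^ n) := by rw [← pow_succ', ← pow_mul]
    _ ≤ _ := by
      refine Nat.pow_le_pow_right (by omega) ?_
      have h5 : 2 ^ (4 * n + 8) = 256 * (2 ^ n * 2 ^ n) * (2 ^ n * 2 ^ n) := by ring
      rw [h5]
      have h6 : (3 * 2 ^ s + 1) * 2 ^ n ≤ (4 * 2 ^ n) * 2 ^ n := by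
        gcongr
        omega
      have h7 : 1 ≤ 2 ^ n * 2 ^ n := Nat.mul_pos h4 h4
      nlinarith [Nat.mul_le_mul_left (2 ^ n * 2 ^ n) h7]

end Separation

end HermannBounds

open HermannBounds MvPolynomial

/-- Suppose `x₁,…,x_r` is a maximal algebraically independent set of
variables modulo `I` (no nonzero element of `I` involves only `x₁,…,x_r`, while for each
`j > r` some nonzero element of `I` involves only `x₁,…,x_r,x_j`).  If `I` is prime up to
`(2nd)^(n·2^(4n+8))`, then for every nonzero `h` involving only `x₁,…,x_r` and every `g`
with `h·g ∈ I`, we have `g ∈ I`. -/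
theorem localization_contracts_to_ideal
    (k : Type*) [Field k] (n d r : ℕ) (hn : 1 < n) (hd : 1 < d) (hr : r ≤ n)
    (I : Ideal (MvPolynomial (Fin n) k))
    (S : Set (MvPolynomial (Fin n) k)) (hgen : I = Ideal.span S)
    (hdeg : ∀ g ∈ S, g.totalDegree ≤ d)
    (hind : ∀ f ∈ I, (∀ i ∈ MvPolynomial.vars f, (i : ℕ) < r) → f = 0)
    (hmaxind : ∀ j : Fin n, r ≤ (j : ℕ) →
      ∃ f ∈ I, f ≠ 0 ∧ ∀ i ∈ MvPolynomial.vars f, (i : ℕ) < r ∨ i = j)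
    (hprime : ∀ f g : MvPolynomial (Fin n) k,
      f.totalDegree ≤ (2 * n * d) ^ (n * 2 ^ (4 * n + 8)) →
      g.totalDegree ≤ (2 * n * d) ^ (n * 2 ^ (4 * n + 8)) →
      f * g ∈ I → f ∈ I ∨ g ∈ I) :
    ∀ h : MvPolynomial (Fin n) k,
      (∀ i ∈ h.vars, (i : ℕ) < r) → h ≠ 0 →
      ∀ g : MvPolynomial (Fin n) k, h * g ∈ I → g ∈ I := by
  classical
  obtain ⟨s, rfl⟩ := Nat.exists_eq_add_of_le hr
  intro h hh hh0 g hg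
  have hinj : Function.Injective (Fin.castAdd s : Fin r → Fin (r + s)) :=
    Fin.castAdd_injective r s
  -- Finitely many of the given generators suffice.
  obtain ⟨l, f, hfdeg, rfl⟩ : ∃ (l : ℕ) (f : Fin l → MvPolynomial (Fin (r + s)) k),
      (∀ i, (f i).totalDegree ≤ d) ∧ Ideal.span (Set.range f) = I := by
    obtain ⟨S', hS', hspan⟩ := (Submodule.fg_span_iff_fg_span_finset_subset S).1
      (IsNoetherian.noetherian (Submodule.span (MvPolynomial (Fin (r + s)) k) S))
    refine ⟨S'.card, fun i => (S'.equivFin.symm i : MvPolynomial (Fin (r + s)) k),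
      fun i => hdeg _ (hS' (S'.equivFin.symm i).2), ?_⟩
    rw [hgen, Ideal.span, Ideal.span, hspan]
    congr 1
    ext x
    constructor
    · rintro ⟨i, rfl⟩
      exact (S'.equivFin.symm i).2
    · intro hx
      exact ⟨S'.equivFin ⟨x, hx⟩, by simp⟩
  obtain ⟨h', rfl⟩ := exists_rename_eq_of_vars_subset_range h (Fin.castAdd s) hinj
    (fun i hi => ⟨⟨i, hh i hi⟩, by ext; simp⟩)
  have hh'0 : h' ≠ 0 := by
    rintro rfl
    exact hh0 (map_zero _)
  rcases Nat.eq_zero_or_pos r with rfl | hr0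
  · -- With no independent variables, `h` is a nonzero constant.
    have hc : h' = C (coeff 0 h') := eq_C_of_isEmpty h'
    have hc0 : coeff 0 h' ≠ 0 := fun h0 => hh'0 (by rw [hc, h0, C_0])
    have := Ideal.mul_mem_left _ (C (coeff 0 h')⁻¹) hg
    rw [hc, rename_C, ← mul_assoc, coeff_C, if_pos rfl, ← C_mul, inv_mul_cancel₀ hc0, C_1,
      one_mul] at this
    exact this
  set B := (3 * d) ^ (3 * 2 ^ s) with hB
  have hdB : d ≤ B := by
    calc d ≤ 3 * d := by omega
      _ ≤ B := Nat.le_self_pow (by positivity) _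
  have hbound := final_bound (r + s) d hn hd s (Nat.le_add_left s r)
  have hB4 : B ≤ (4 * B) ^ 2 ^ (r + s) :=
    (Nat.le_mul_of_pos_left B (by norm_num)).trans (Nat.le_self_pow (by positivity) _)
  -- The polynomials in the first `r` variables that are nonzerodivisors modulo the ideal.
  let T : Submonoid (MvPolynomial (Fin r) k) :=
    { carrier := {c | ∀ g, rename (Fin.castAdd s) c * g ∈ Ideal.span (Set.range f) →
        g ∈ Ideal.span (Set.range f)}
      one_mem' := fun g hg => by simpa using hg
      mul_mem' := fun {a b} ha hb g hg => by
        rw [map_mul, mul_assoc] at hg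
        exact hb g (ha _ hg) }
  have hT : ∀ c : MvPolynomial (Fin r) k, c ≠ 0 → c.totalDegree ≤ B → c ∈ T := by
    intro c hc0 hcB
    have hcdeg : (rename (Fin.castAdd s) c).totalDegree ≤ B :=
      (totalDegree_rename_le _ _).trans hcB
    refine mem_of_mul_mem_of_bounded (by omega) f (fun i => (hfdeg i).trans hdB) _ hcdeg ?_
    intro g hgdeg hcg
    refine (hprime _ g (hcdeg.trans (hB4.trans hbound)) (hgdeg.trans hbound) hcg).resolve_left ?_
    intro hcI
    refine hc0 (rename_injective _ hinj ?_)
    rw [map_zero]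
    refine hind _ hcI fun i hi => ?_
    obtain ⟨j, -, rfl⟩ := Finset.mem_image.1 (vars_rename _ _ hi)
    exact j.2
  obtain ⟨a, ha⟩ := Ideal.mem_span_range_iff_exists_fun.1 hg
  let F : Matrix Unit (Fin l) (MvPolynomial (Fin s) (MvPolynomial (Fin r) k)) :=
    fun _ i => sep k r s (f i)
  obtain ⟨t, ht, b, hb⟩ := exists_denominator (degFiltration k r) T
    (fun N => by
      refine ⟨(Finset.range (N + 1)).image fun j => (X ⟨0, hr0⟩ : MvPolynomial (Fin r) k) ^ j,
        ?_, ?_⟩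
      · rw [Finset.card_image_of_injective, Finset.card_range]
        · omega
        · intro i j hij
          simpa using congrArg totalDegree hij
      · intro x hx
        obtain ⟨j, hj, rfl⟩ := Finset.mem_image.1 hx
        rw [mem_degFiltration, totalDegree_X_pow]
        have := Finset.mem_range.1 hj
        omega)
    s 1 d d (by omega) le_rfl
    (fun c hc0 hc => hT c hc0 (by
      rw [mem_degFiltration] at hc
      rw [hB]
      convert hc using 2
      ring))
    Unit (Fin l) (by simp) F (fun _ i => sep_mem (hfdeg i)) (fun _ => sep k r s g)
    (fun i => sep k r s (a i)) h' hh'0 (by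
      funext x
      have := congrArg (sep k r s) ha
      rw [map_sum, map_mul, sep_rename] at this
      simp only [Matrix.mulVec, dotProduct, F, Pi.smul_apply, smul_eq_C_mul]
      rw [← this]
      exact Finset.sum_congr rfl fun i _ => by rw [map_mul, mul_comm])
  refine ht g ?_
  have h1 := congrArg (unsep k r s) (congrFun hb ())
  simp only [Matrix.mulVec, dotProduct, F, Pi.smul_apply, smul_eq_C_mul, map_sum, map_mul,
    unsep_C, unsep_sep] at h1
  rw [← h1]
  exact Ideal.sum_mem _ fun i _ => Ideal.mul_mem_right _ _ (Ideal.subset_span ⟨i, rfl⟩)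
end

section
/- Let k be a field, n > 1 and d > 1 natural numbers, and let I be an ideal of k[x_1,…,x_n] generated by polynomials of total degree at most d. Suppose the only polynomial in I involving only the variables x_1,…,x_r is 0, while for each j with r < j ≤ n there is a nonzero element of I involving only the variables x_1,…,x_r,x_j. If I is prime up to 2·d^(2^n), then for each j with r < j ≤ n there exists a polynomial w_j ∈ I which involves only the variables x_1,…,x_r,x_j, has positive degree in x_j, has total degree at most 2·d^(2^n), and is irreducible in k[x_1,…,x_n]. -/
/-!
The heart of the matter is an effective elimination statement which needs no primality: if `I` is
generated in degree at most `d` and meets `k[T]` nontrivially for a set `T` of variables, then it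
contains a nonzero element of `k[T]` of degree at most `(2d)^(2^l) / 2`, where `l` is the number of
variables outside `T` (`exists_bounded`). With `T = {x₁, …, x_r, x_j}` one has `l < n`, and since
`2d ≤ d²` the bound is at most `2 d^(2^n)`. Primality up to that degree then puts an irreducible
factor of this element into `I`; it involves only `x₁, …, x_r, x_j`, and it has positive
`x_j`-degree because `I` contains no nonzero polynomial in `x₁, …, x_r`.

Over an infinite field the elimination statement is proved by contraposition
(`exists_zero_of_elimination`): if `I` has no nonzero element of `k[T]` of small degree, then the
elements of `I` of degree at most `d` have a common zero with coordinates in an algebraically closed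
field containing `k(T)`, the `T`-coordinates being the generic ones. Such a zero kills the
generators, hence all of `I`, so `I ∩ k[T] = 0`. The zero is found by induction on the set `Z` of
variables outside `T`. Fix a nonzero `f ∈ I` of degree at most `d` and `z ∈ Z`. After a generic
linear change of the `Z`-variables, the leading coefficient of `f` in `z` lies in `k[T]`, so it does
not vanish at generic points. Resultants of `f` with other elements of degree at most `d` lie in the
elimination ideal and have degree at most `2d²`; by induction they all vanish at a point `ζ`. If the
specialised polynomials had no common root, then, for each of the finitely many roots of `f`, the
elements of `I` of degree at most `d` vanishing there would form a proper subspace; as `k` is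
infinite, some `g` would avoid all these subspaces, and its resultant with `f` would be nonzero
at `ζ`.

Finite fields are handled by passing to an algebraic closure `K` and descending with a `k`-linear
functional `K → k` applied to coefficients (`coeffwise`).
-/

namespace BoundedElimination

open MvPolynomial

variable {σ k : Type*} [Field k]

/-! ### Degrees and supports under a linear substitution -/

open Classical in
/-- The linear substitution `x_i ↦ x_i + a_i t` (`i ≠ z`), `x_z ↦ a_z t`, where `t` is the variable
of the univariate polynomial ring: a polynomial is restricted to the lines of direction `a`, each
parametrised from its point on the hyperplane `x_z = 0`. -/
noncomputable def slide (z : σ) (a : σ → k) :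
    MvPolynomial σ k →ₐ[k] Polynomial (MvPolynomial σ k) :=
  aeval fun i => Polynomial.C (if i = z then 0 else X i) + Polynomial.C (C (a i)) * Polynomial.X

/-- `p`, regarded as a polynomial in the variables `σ` and the univariate variable together, has
total degree at most `d`. Zero coefficients are excluded because the total degree of `0` is `0`. -/
def JointDegreeLE (d : ℕ) (p : Polynomial (MvPolynomial σ k)) : Prop :=
  ∀ j, p.coeff j ≠ 0 → (p.coeff j).totalDegree + j ≤ d

lemma JointDegreeLE.mul {d e : ℕ} {p q : Polynomial (MvPolynomial σ k)}
    (hp : JointDegreeLE d p) (hq : JointDegreeLE e q) : JointDegreeLE (d + e) (p * q) := by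
  intro j hj
  have hlt : ∀ x ∈ Finset.HasAntidiagonal.antidiagonal j, p.coeff x.1 * q.coeff x.2 ≠ 0 →
      (p.coeff x.1 * q.coeff x.2).totalDegree + j ≤ d + e := by
    intro x hx h0
    have h1 := hp x.1 (left_ne_zero_of_mul h0)
    have h2 := hq x.2 (right_ne_zero_of_mul h0)
    have h3 := totalDegree_mul (p.coeff x.1) (q.coeff x.2)
    have h4 := Finset.HasAntidiagonal.mem_antidiagonal.1 hx
    omega
  rw [Polynomial.coeff_mul] at hj ⊢
  obtain ⟨x, hx, hx0⟩ := Finset.exists_ne_zero_of_sum_ne_zero hj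
  have hje : j ≤ d + e := by have := hlt x hx hx0; omega
  have : (∑ x ∈ Finset.HasAntidiagonal.antidiagonal j, p.coeff x.1 * q.coeff x.2).totalDegree ≤ d + e - j := by
    refine totalDegree_finsetSum_le fun y hy => ?_
    by_cases h0 : p.coeff y.1 * q.coeff y.2 = 0
    · simp [h0]
    · have := hlt y hy h0
      omega
  omega

lemma JointDegreeLE.pow {d : ℕ} {p : Polynomial (MvPolynomial σ k)}
    (hp : JointDegreeLE d p) (t : ℕ) : JointDegreeLE (t * d) (p ^ t) := by
  induction t with
  | zero =>
    intro j hj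
    rw [pow_zero, Polynomial.coeff_one] at hj ⊢
    split_ifs at hj ⊢ with h
    · simp [h]
    · exact absurd rfl hj
  | succ t ih =>
    rw [pow_succ, Nat.succ_mul]
    exact ih.mul hp

lemma JointDegreeLE.sum {ι : Type*} {d : ℕ} (s : Finset ι)
    {p : ι → Polynomial (MvPolynomial σ k)}
    (hp : ∀ i ∈ s, JointDegreeLE d (p i)) : JointDegreeLE d (∑ i ∈ s, p i) := by
  intro j hj
  rw [Polynomial.finsetSum_coeff] at hj ⊢
  obtain ⟨x, hx, hx0⟩ := Finset.exists_ne_zero_of_sum_ne_zero hj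
  have hje := hp x hx j hx0
  have : (∑ i ∈ s, (p i).coeff j).totalDegree ≤ d - j := by
    refine totalDegree_finsetSum_le fun y hy => ?_
    by_cases h0 : (p y).coeff j = 0
    · simp [h0]
    · have := hp y hy j h0
      omega
  omega

lemma jointDegreeLE_C (c : k) :
    JointDegreeLE 0 (Polynomial.C (C c) : Polynomial (MvPolynomial σ k)) := by
  intro j hj
  rw [Polynomial.coeff_C] at hj ⊢
  split_ifs at hj ⊢ with h
  · simp [h]
  · exact absurd rfl hj

lemma slide_X (z : σ) (a : σ → k) (i : σ) [Decidable (i = z)] : slide z a (X i) =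
    Polynomial.C (if i = z then 0 else X i) + Polynomial.C (C (a i)) * Polynomial.X := by
  rw [slide, aeval_X]
  congr

lemma slide_C (z : σ) (a : σ → k) (c : k) : slide z a (C c) = Polynomial.C (C c) := by
  rw [slide, aeval_C]; rfl

lemma jointDegreeLE_slide_X (z : σ) (a : σ → k) (i : σ) : JointDegreeLE 1 (slide z a (X i)) := by
  classical
  rw [slide_X]
  intro j hj
  rcases j with _ | _ | j
  · simp only [Polynomial.coeff_add, Polynomial.coeff_C_zero, Polynomial.mul_coeff_zero,
      Polynomial.coeff_X_zero, mul_zero, add_zero]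
    split_ifs <;> simp
  · simp [Polynomial.coeff_C]
  · simp at hj

lemma jointDegreeLE_slide_monomial (z : σ) (a : σ → k) (m : σ →₀ ℕ) (c : k) :
    JointDegreeLE (m.sum fun _ t => t) (slide z a (monomial m c)) := by
  induction m using Finsupp.induction_linear generalizing c with
  | zero => simpa [← C_apply, slide_C] using jointDegreeLE_C c
  | add m m' h h' =>
    rw [Finsupp.sum_add_index' (by simp) (by simp), ← mul_one c, ← monomial_mul, map_mul]
    exact (h c).mul (h' 1)
  | single i t =>
    rw [Finsupp.sum_single_index rfl, ← C_mul_X_pow_eq_monomial, map_mul, map_pow, slide_C]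
    simpa using (jointDegreeLE_C c).mul ((jointDegreeLE_slide_X z a i).pow t)

lemma jointDegreeLE_slide (z : σ) (a : σ → k) {d : ℕ} {f : MvPolynomial σ k}
    (hf : f.totalDegree ≤ d) : JointDegreeLE d (slide z a f) := by
  rw [f.as_sum, map_sum]
  refine JointDegreeLE.sum _ fun m hm j hj => ?_
  have := jointDegreeLE_slide_monomial z a m _ j hj
  have h2 := le_totalDegree hm
  omega

lemma totalDegree_coeff_slide (z : σ) (a : σ → k) {d : ℕ} {f : MvPolynomial σ k}
    (hf : f.totalDegree ≤ d) (j : ℕ) : ((slide z a f).coeff j).totalDegree ≤ d := by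
  by_cases h : (slide z a f).coeff j = 0
  · simp [h]
  · have := jointDegreeLE_slide z a hf j h
    omega

lemma natDegree_slide_le (z : σ) (a : σ → k) {d : ℕ} {f : MvPolynomial σ k}
    (hf : f.totalDegree ≤ d) : (slide z a f).natDegree ≤ d := by
  rw [Polynomial.natDegree_le_iff_coeff_eq_zero]
  intro N hN
  by_contra h
  have := jointDegreeLE_slide z a hf N h
  omega

/-- The Sylvester matrix has `e + d ≤ 2d` rows and entries of degree at most `d`. -/
lemma totalDegree_resultant_le {f g : Polynomial (MvPolynomial σ k)} {d e : ℕ} (he : e ≤ d)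
    (hf : ∀ j, (f.coeff j).totalDegree ≤ d) (hg : ∀ j, (g.coeff j).totalDegree ≤ d) :
    (f.resultant g e d).totalDegree ≤ 2 * d ^ 2 := by
  rw [Polynomial.resultant, Matrix.det_apply]
  refine totalDegree_finsetSum_le fun τ _ => ?_
  have h : (∏ i, f.sylvester g e d (τ i) i).totalDegree ≤ 2 * d ^ 2 := by
    refine (totalDegree_finsetProd _ _).trans ?_
    refine (Finset.sum_le_card_nsmul _ _ d fun i _ => ?_).trans ?_
    · simp only [Polynomial.sylvester, Matrix.of_apply]
      refine i.addCases (fun j => ?_) fun j => ?_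
      · simp only [Fin.addCases_left]; split_ifs <;> simp [hg]
      · simp only [Fin.addCases_right]; split_ifs <;> simp [hf]
    · simp only [Finset.card_univ, Fintype.card_fin, smul_eq_mul]
      nlinarith
  rcases Int.units_eq_one_or (Equiv.Perm.sign τ) with h1 | h1 <;> simpa [h1] using h

lemma resultant_mem_of_coeff_mem {R S : Type*} [CommRing R] [CommRing S] [Algebra R S]
    (A : Subalgebra R S) {f g : Polynomial S} (e d : ℕ)
    (hf : ∀ j, f.coeff j ∈ A) (hg : ∀ j, g.coeff j ∈ A) : f.resultant g e d ∈ A := by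
  rw [Polynomial.resultant, Matrix.det_apply]
  refine sum_mem fun τ _ => ?_
  have h : ∏ i, f.sylvester g e d (τ i) i ∈ A := by
    refine prod_mem fun i _ => ?_
    simp only [Polynomial.sylvester, Matrix.of_apply]
    refine i.addCases (fun j => ?_) fun j => ?_
    · simp only [Fin.addCases_left]; split_ifs <;> simp [hg]
    · simp only [Fin.addCases_right]; split_ifs <;> simp [hf]
  rcases Int.units_eq_one_or (Equiv.Perm.sign τ) with h1 | h1 <;> simpa [h1] using h

lemma coeff_slide_mem_supported (z : σ) (a : σ → k) {s t : Set σ} (hst : ∀ i ∈ s, i ≠ z → i ∈ t)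
    {f : MvPolynomial σ k} (hf : f ∈ supported k s) (j : ℕ) :
    (slide z a f).coeff j ∈ supported k t := by
  classical
  have hC : ∀ c : k, C c ∈ supported k t := fun c => (supported k t).algebraMap_mem c
  rw [supported_eq_adjoin_X] at hf
  induction hf using Algebra.adjoin_induction generalizing j with
  | mem x hx =>
    obtain ⟨i, hi, rfl⟩ := hx
    rw [slide_X, Polynomial.coeff_add, Polynomial.coeff_C_mul, Polynomial.coeff_C,
      Polynomial.coeff_X]
    refine add_mem ?_ (mul_mem (hC _) ?_)
    · split_ifs with h1 h2
      · exact zero_mem _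
      · exact X_mem_supported.2 (hst i hi h2)
      · exact zero_mem _
    · split_ifs
      · exact one_mem _
      · exact zero_mem _
  | algebraMap c =>
    rw [algebraMap_eq]
    rw [slide_C, Polynomial.coeff_C]
    split_ifs
    · exact hC _
    · exact zero_mem _
  | add x y _ _ hx hy => rw [map_add, Polynomial.coeff_add]; exact add_mem (hx j) (hy j)
  | mul x y _ _ hx hy =>
    rw [map_mul, Polynomial.coeff_mul]
    exact sum_mem fun p _ => mul_mem (hx _) (hy _)


/-! ### The leading coefficient for a generic direction -/

open Classical in
/-- Substitutes the constants `a_i` for the variables in `Z` and keeps the other variables. -/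
noncomputable def specialize (Z : Finset σ) (a : σ → k) :
    MvPolynomial σ k →ₐ[k] MvPolynomial σ k :=
  aeval fun i => if i ∈ Z then C (a i) else X i

open Classical in
/-- The degree of the monomial `m` in the variables of `Z`. -/
noncomputable def partialDegree (Z : Finset σ) (m : σ →₀ ℕ) : ℕ :=
  m.sum fun i t => if i ∈ Z then t else 0

lemma partialDegree_le (Z : Finset σ) (m : σ →₀ ℕ) :
    partialDegree Z m ≤ m.sum fun _ t => t := by
  classical
  refine Finset.sum_le_sum fun i _ => ?_
  dsimp only
  split_ifs <;> simp

lemma partialDegree_add (Z : Finset σ) (m m' : σ →₀ ℕ) :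
    partialDegree Z (m + m') = partialDegree Z m + partialDegree Z m' := by
  classical
  refine Finsupp.sum_add_index' (by simp) fun i t t' => ?_
  split_ifs <;> simp

/-- The top coefficient, in the line parameter, of a slid monomial is obtained by putting the
direction `a` for the variables in `Z`. -/
lemma slide_monomial_top {Z : Finset σ} {z : σ} (hz : z ∈ Z) {a : σ → k}
    (ha : ∀ i ∉ Z, a i = 0) (m : σ →₀ ℕ) (c : k) :
    (slide z a (monomial m c)).natDegree ≤ partialDegree Z m ∧
      (slide z a (monomial m c)).coeff (partialDegree Z m) = specialize Z a (monomial m c) := by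
  classical
  induction m using Finsupp.induction_linear generalizing c with
  | zero =>
    rw [← C_apply, slide_C]
    simp [partialDegree, specialize]
  | add m m' h h' =>
    rw [partialDegree_add, ← mul_one c, ← monomial_mul, map_mul, map_mul]
    exact ⟨Polynomial.natDegree_mul_le_of_le (h c).1 (h' 1).1, by
      rw [Polynomial.coeff_mul_add_eq_of_natDegree_le (h c).1 (h' 1).1, (h c).2, (h' 1).2]⟩
  | single i t =>
    have key : (slide z a (X i)).natDegree ≤ (if i ∈ Z then 1 else 0) ∧
        (slide z a (X i)).coeff (if i ∈ Z then 1 else 0) = specialize Z a (X i) := by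
      rw [slide_X, specialize, aeval_X]
      split_ifs with h hi hi
      · exact ⟨by compute_degree, by simp⟩
      · exact absurd (h ▸ hz) hi
      · exact ⟨by compute_degree, by simp [Polynomial.coeff_C]⟩
      · simp [ha i hi]
    have hw : partialDegree Z (Finsupp.single i t) = t * (if i ∈ Z then 1 else 0) := by
      rw [partialDegree, Finsupp.sum_single_index (by simp)]
      split_ifs <;> simp
    rw [hw, ← C_mul_X_pow_eq_monomial, map_mul, map_mul, map_pow, map_pow, slide_C]
    refine ⟨(Polynomial.natDegree_C_mul_le _ _).trans
      (Polynomial.natDegree_pow_le_of_le t key.1), ?_⟩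
    rw [Polynomial.coeff_C_mul, mul_comm t, mul_comm _ t,
      Polynomial.coeff_pow_of_natDegree_le key.1, key.2]
    simp [specialize]

/-- For a suitable direction `a` supported on `Z`, the leading coefficient of `slide z a f` involves
only the variables of `T`. If `F` is the part of `f` of highest degree `e` in the `Z`-variables, then
this coefficient is `F` with `a` put for the `Z`-variables; as `k` is infinite, `a` can be chosen such
that it is nonzero and `a z ≠ 0`. -/
lemma exists_slide_top [Infinite k] {Z : Finset σ} {z : σ} (hz : z ∈ Z) {T : Set σ}
    {f : MvPolynomial σ k} (hf0 : f ≠ 0) (hf : f ∈ supported k (T ∪ Z)) :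
    ∃ (a : σ → k) (e : ℕ), a z ≠ 0 ∧ (∀ i ∉ Z, a i = 0) ∧ e ≤ f.totalDegree ∧
      (slide z a f).natDegree ≤ e ∧ (slide z a f).coeff e ≠ 0 ∧
      (slide z a f).coeff e ∈ supported k T := by
  classical
  obtain ⟨m₀, hm₀, hmax⟩ := Finset.exists_max_image f.support (partialDegree Z)
    (by simpa [Finset.nonempty_iff_ne_empty] using hf0)
  set e := partialDegree Z m₀ with he
  set F : MvPolynomial σ k :=
    ∑ m ∈ f.support with partialDegree Z m = e, monomial m (coeff m f) with hF
  have hF0 : F ≠ 0 := by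
    intro h
    have h1 : coeff m₀ F = coeff m₀ f := by
      rw [hF, coeff_sum, Finset.sum_eq_single m₀]
      · simp
      · intro m _ hm
        rw [coeff_monomial, if_neg hm]
      · intro h
        exact absurd (Finset.mem_filter.2 ⟨hm₀, he.symm⟩) h
    rw [h, coeff_zero] at h1
    exact mem_support_iff.1 hm₀ h1.symm
  -- The factor `X z` forces the `z`-coordinate of the direction to be nonzero.
  obtain ⟨b, hb⟩ : ∃ b : σ → k, eval b (F * X z) ≠ 0 := by
    by_contra! h
    exact mul_ne_zero hF0 (X_ne_zero z) (MvPolynomial.funext fun b => by rw [h b, map_zero])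
  rw [map_mul, eval_X] at hb
  set a : σ → k := fun i => if i ∈ Z then b i else 0 with ha
  have ha' : ∀ i ∉ Z, a i = 0 := fun i hi => by simp [ha, hi]
  have htop := fun m => slide_monomial_top hz ha' m
  have hcoeff : (slide z a f).coeff e = specialize Z a F := by
    conv_lhs => rw [f.as_sum]
    rw [map_sum, Polynomial.finsetSum_coeff, hF, map_sum, Finset.sum_filter]
    refine Finset.sum_congr rfl fun m hm => ?_
    split_ifs with h
    · rw [← (htop m _).2, h]
    · refine Polynomial.coeff_eq_zero_of_natDegree_lt ((htop m _).1.trans_lt ?_)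
      exact lt_of_le_of_ne (hmax m hm) h
  refine ⟨a, e, by simpa [ha, hz] using right_ne_zero_of_mul hb, ha', ?_, ?_, ?_, ?_⟩
  · exact (partialDegree_le Z m₀).trans (le_totalDegree hm₀)
  · rw [f.as_sum, map_sum]
    exact Polynomial.natDegree_sum_le_of_forall_le _ _ fun m hm => (htop m _).1.trans (hmax m hm)
  · rw [hcoeff]
    intro h
    have h1 : (aeval b : MvPolynomial σ k →ₐ[k] k).comp (specialize Z a) = aeval b := by
      ext i
      by_cases hi : i ∈ Z <;> simp [specialize, hi, ha]
    have h2 := DFunLike.congr_fun h1 F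
    rw [AlgHom.comp_apply, h, map_zero] at h2
    exact left_ne_zero_of_mul hb h2.symm
  · rw [hcoeff, hF, map_sum]
    refine sum_mem fun m hm => ?_
    rw [specialize, aeval_monomial]
    refine mul_mem ((supported k T).algebraMap_mem _) (prod_mem fun i hi => pow_mem ?_ _)
    have hi' : i ∈ T ∪ (Z : Set σ) := mem_supported.1 hf
      ((mem_vars_iff_mem_support i).2 ⟨m, (Finset.mem_filter.1 hm).1, hi⟩)
    split_ifs with h
    · exact (supported k T).algebraMap_mem _
    · exact X_mem_supported.2 (hi'.resolve_right h)

/-! ### Eliminating one variable by resultants -/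

/-- The projection `x_i ↦ x_i - (a_i / a_z) x_z` along the direction `a`; it sends `x_z` to `0` when
`a z ≠ 0`. -/
noncomputable def project (z : σ) (a : σ → k) : MvPolynomial σ k →ₐ[k] MvPolynomial σ k :=
  aeval fun i => X i - C (a i * (a z)⁻¹) * X z

/-- Projecting the coefficients and setting the line parameter to `x_z / a_z` inverts `slide`. -/
lemma eval₂_project_slide {z : σ} {a : σ → k} (hz : a z ≠ 0) (f : MvPolynomial σ k) :
    (slide z a f).eval₂ (project z a : MvPolynomial σ k →+* MvPolynomial σ k)
      (C (a z)⁻¹ * X z) = f := by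
  classical
  have h : (Polynomial.eval₂RingHom (project z a : MvPolynomial σ k →+* MvPolynomial σ k)
      (C (a z)⁻¹ * X z)).comp (slide z a : MvPolynomial σ k →+* _) = RingHom.id _ := by
    refine MvPolynomial.ringHom_ext (fun c => ?_) fun i => ?_
    · simp [project]
    · have hC : (C (a z) : MvPolynomial σ k) * C (a z)⁻¹ = 1 := by
        rw [← C_mul, mul_inv_cancel₀ hz, C_1]
      simp only [RingHom.comp_apply, RingHom.coe_coe, slide_X, Polynomial.coe_eval₂RingHom,
        Polynomial.eval₂_add, Polynomial.eval₂_mul, Polynomial.eval₂_C, Polynomial.eval₂_X,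
        RingHom.id_apply]
      split_ifs with h
      · subst h
        simp [project, ← mul_assoc, hC]
      · simp [project, mul_assoc]
  exact DFunLike.congr_fun h f

/-- The resultant is a combination of `slide z a f` and `slide z a g`; inverting `slide` turns this
into membership in `I`. The condition `d ≠ 0` excludes the empty Sylvester matrix, whose determinant
is `1`. -/
lemma project_resultant_mem {I : Ideal (MvPolynomial σ k)} {z : σ} {a : σ → k} (hz : a z ≠ 0)
    {f g : MvPolynomial σ k} (hf : f ∈ I) (hg : g ∈ I) {e d : ℕ} (hd : d ≠ 0)
    (hfe : (slide z a f).natDegree ≤ e) (hgd : (slide z a g).natDegree ≤ d) :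
    project z a ((slide z a f).resultant (slide z a g) e d) ∈ I := by
  obtain ⟨p, q, -, -, h⟩ := Polynomial.exists_mul_add_mul_eq_C_resultant
    (slide z a f) (slide z a g) hfe hgd (Or.inr hd)
  have h' := congrArg (Polynomial.eval₂ (project z a : MvPolynomial σ k →+* MvPolynomial σ k)
    (C (a z)⁻¹ * X z)) h
  rw [Polynomial.eval₂_add, Polynomial.eval₂_mul, Polynomial.eval₂_mul, Polynomial.eval₂_C,
    eval₂_project_slide hz, eval₂_project_slide hz] at h'
  rw [RingHom.coe_coe] at h'
  rw [← h']
  exact add_mem (I.mul_mem_right _ hf) (I.mul_mem_right _ hg)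

open Classical in
/-- `slide` followed by evaluation at `ζ` and `ξ` is evaluation at the point with parameter
`ξ` on the line of direction `a` through `ζ` (with `z`-coordinate reset to `0`). -/
lemma aeval_slide {L : Type*} [Field L] [Algebra k L] (ζ : σ → L) (ξ : L) (z : σ) (a : σ → k)
    (f : MvPolynomial σ k) :
    aeval (fun i => (if i = z then 0 else ζ i) + algebraMap k L (a i) * ξ) f =
      ((slide z a f).map (aeval ζ : MvPolynomial σ k →ₐ[k] L).toRingHom).eval ξ := by
  have h : (aeval (fun i => (if i = z then 0 else ζ i) + algebraMap k L (a i) * ξ) :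
      MvPolynomial σ k →ₐ[k] L).toRingHom =
      ((Polynomial.evalRingHom ξ).comp (Polynomial.mapRingHom
        (aeval ζ : MvPolynomial σ k →ₐ[k] L).toRingHom)).comp (slide z a).toRingHom := by
    refine MvPolynomial.ringHom_ext (fun c => ?_) fun i => ?_
    · simp
    · simp only [AlgHom.toRingHom_eq_coe, RingHom.coe_coe, aeval_X, RingHom.comp_apply, slide_X]
      split_ifs <;> simp
  exact DFunLike.congr_fun h f

/-! ### Common zeros from vanishing elimination ideals -/

/-- The degree bound after eliminating `l` variables, each elimination taking degree `d` to
`2d²`. -/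
def elimBound : ℕ → ℕ → ℕ
  | 0, d => d
  | l + 1, d => elimBound l (2 * d ^ 2)

lemma aeval_congr_of_supported {L : Type*} [Field L] [Algebra k L] {ζ ζ' : σ → L} {T : Set σ}
    (h : ∀ i ∈ T, ζ i = ζ' i) {f : MvPolynomial σ k} (hf : f ∈ supported k T) :
    aeval ζ f = aeval ζ' f :=
  eval₂Hom_congr' rfl (fun i hi _ => h i (mem_supported.1 hf hi)) rfl

/-- If `I` contains no nonzero element of `k[T]` of degree at most `elimBound |Z| d`, then the
elements of `I ∩ k[T ∪ Z]` of degree at most `d` have a common zero whose `T`-coordinates are those of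
the generic point `ζ₀`. -/
theorem exists_zero_of_elimination [Infinite k] {L : Type*} [Field L] [IsAlgClosed L] [Algebra k L]
    (ζ₀ : σ → L) (h₀ : ∀ f : MvPolynomial σ k, aeval ζ₀ f = 0 → f = 0) (T : Set σ)
    (Z : Finset σ) (hTZ : ∀ i ∈ Z, i ∉ T) (d : ℕ) (hd : d ≠ 0) (I : Ideal (MvPolynomial σ k))
    (hI : ∀ f ∈ I, f ∈ supported k T → f.totalDegree ≤ elimBound Z.card d → f = 0) :
    ∃ ζ : σ → L, (∀ i ∈ T, ζ i = ζ₀ i) ∧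
      ∀ f ∈ I, f ∈ supported k (T ∪ Z) → f.totalDegree ≤ d → aeval ζ f = 0 := by
  classical
  induction Z using Finset.induction_on generalizing d I with
  | empty =>
    refine ⟨ζ₀, fun _ _ => rfl, fun f hf hfT hfd => ?_⟩
    rw [hI f hf (by simpa using hfT) (by simpa [elimBound] using hfd), map_zero]
  | insert z Z hz ih =>
    by_cases hex : ∃ f ∈ I, f ∈ supported k (T ∪ (insert z Z : Finset σ)) ∧
        f.totalDegree ≤ d ∧ f ≠ 0
    swap
    · refine ⟨ζ₀, fun _ _ => rfl, fun f hf hfT hfd => ?_⟩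
      by_contra h
      exact hex ⟨f, hf, hfT, hfd, fun h0 => h (by rw [h0, map_zero])⟩
    obtain ⟨f, hfI, hfT, hfd, hf0⟩ := hex
    obtain ⟨a, e, haz, ha, hed, hfe, hce, hcT⟩ :=
      exists_slide_top (Finset.mem_insert_self z Z) hf0 hfT
    have haT : ∀ i ∈ T, a i = 0 := fun i hi => ha i fun h => hTZ i h hi
    have hzT : ∀ i ∈ T, i ≠ z := fun i hi h => hTZ z (Finset.mem_insert_self z Z) (h ▸ hi)
    have hsub : ∀ i ∈ T ∪ ((insert z Z : Finset σ) : Set σ), i ≠ z → i ∈ T ∪ (Z : Set σ) := by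
      rintro i (hi | hi) hne
      · exact Or.inl hi
      · exact Or.inr ((Finset.mem_insert.1 hi).resolve_left hne)
    obtain ⟨ζ, hζT, hζ⟩ := ih (fun i hi => hTZ i (Finset.mem_insert_of_mem hi)) (2 * d ^ 2)
      (by positivity) (I.comap (project z a)) (by
        intro g hg hgT hgd
        refine hI g ?_ hgT (by rwa [Finset.card_insert_of_notMem hz, elimBound])
        -- Elements of `k[T]` are fixed by the projection, since `a` vanishes on `T`.
        have : project z a g = g := by
          have h1 : aeval X g = g := by simp
          conv_rhs => rw [← h1]
          exact eval₂Hom_congr' rfl (fun i hi _ => by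
            simp [haT i (mem_supported.1 hgT hi)]) rfl
        rwa [Ideal.mem_comap, this] at hg)
    have hcζ : aeval ζ ((slide z a f).coeff e) ≠ 0 := fun h =>
      hce (h₀ _ (by rwa [← aeval_congr_of_supported hζT hcT]))
    let φ : MvPolynomial σ k →+* L := (aeval ζ : MvPolynomial σ k →ₐ[k] L).toRingHom
    -- `W` consists of the polynomials required to vanish at the point to be found.
    let W : Submodule k (MvPolynomial σ k) :=
      I.restrictScalars k ⊓ Subalgebra.toSubmodule (supported k (T ∪ (insert z Z : Finset σ))) ⊓
        restrictTotalDegree σ k d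
    have hW : ∀ g, g ∈ W ↔ (g ∈ I ∧ g ∈ supported k (T ∪ (insert z Z : Finset σ))) ∧
        g.totalDegree ≤ d := by
      intro g
      simp [W, mem_restrictTotalDegree]
    let ev : L → (W →ₗ[k] L) := fun ξ =>
      (aeval (fun i => (if i = z then 0 else ζ i) + algebraMap k L (a i) * ξ) :
        MvPolynomial σ k →ₐ[k] L).toLinearMap.comp W.subtype
    have hev : ∀ ξ (g : W), ev ξ g = ((slide z a g).map φ).eval ξ := fun ξ g =>
      aeval_slide ζ ξ z a g
    have hres : ∀ g ∈ W, ((slide z a f).map φ).resultant ((slide z a g).map φ) e d = 0 := by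
      intro g hg
      obtain ⟨⟨hgI, hgT⟩, hgd⟩ := (hW g).1 hg
      rw [Polynomial.resultant_map_map]
      refine hζ _ ?_ ?_ ?_
      · exact project_resultant_mem haz hfI hgI hd hfe (natDegree_slide_le z a hgd)
      · exact resultant_mem_of_coeff_mem _ e d (coeff_slide_mem_supported z a hsub hfT)
          (coeff_slide_mem_supported z a hsub hgT)
      · exact totalDegree_resultant_le (hed.trans hfd) (totalDegree_coeff_slide z a hfd)
          (totalDegree_coeff_slide z a hgd)
    have hdeg : ((slide z a f).map φ).natDegree = e :=
      Polynomial.natDegree_eq_of_le_of_coeff_ne_zero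
        ((Polynomial.natDegree_map_le).trans hfe) (by rw [Polynomial.coeff_map]; exact hcζ)
    have hlead : ((slide z a f).map φ).leadingCoeff ≠ 0 := by
      rw [Polynomial.leadingCoeff, hdeg, Polynomial.coeff_map]; exact hcζ
    obtain ⟨ξ, hξ⟩ : ∃ ξ, ev ξ = 0 := by
      by_contra! hne
      -- For each root `ξ` of the specialised `f`, the elements of `W` vanishing at `ξ` form a proper
      -- subspace; finitely many of these do not cover `W`.
      let s : Finset (Subspace k W) :=
        ((slide z a f).map φ).roots.toFinset.image fun ξ => LinearMap.ker (ev ξ)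
      have hs : (⊤ : Subspace k W) ∉ s := by
        intro h
        obtain ⟨ξ, -, h⟩ := Finset.mem_image.1 h
        exact hne ξ (LinearMap.ker_eq_top.1 h)
      obtain ⟨g, hg⟩ := (Set.ne_univ_iff_exists_notMem _).1
        (Subspace.biUnion_ne_univ_of_top_notMem hs)
      have h := hres g g.2
      rw [← hdeg, Polynomial.resultant_eq_prod_eval _ _ _
        ((Polynomial.natDegree_map_le).trans (natDegree_slide_le z a ((hW g).1 g.2).2))
        (IsAlgClosed.splits _)] at h
      rcases mul_eq_zero.1 h with h | h
      · exact hlead ((pow_eq_zero_iff hd).1 h)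
      · obtain ⟨ξ, hξ, h⟩ := Multiset.mem_map.1 (Multiset.prod_eq_zero_iff.1 h)
        refine hg (Set.mem_biUnion (x := LinearMap.ker (ev ξ)) ?_ ?_)
        · exact Finset.mem_image_of_mem _ (Multiset.mem_toFinset.2 hξ)
        · exact (hev ξ g).trans h
    refine ⟨_, fun i hi => ?_, fun g hgI hgT hgd =>
      DFunLike.congr_fun hξ (⟨g, (hW g).2 ⟨⟨hgI, hgT⟩, hgd⟩⟩ : W)⟩
    simp [haT i hi, hzT i hi, hζT i hi]

/-! ### Effective elimination -/

theorem exists_bounded_of_infinite [Infinite k] {T : Set σ} {Z : Finset σ}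
    (hTZ : ∀ i, i ∈ Z ↔ i ∉ T) {d : ℕ} (hd : d ≠ 0) {S : Set (MvPolynomial σ k)}
    (hS : ∀ g ∈ S, g.totalDegree ≤ d)
    (h : ∃ f ∈ Ideal.span S, f ≠ 0 ∧ f ∈ supported k T) :
    ∃ f ∈ Ideal.span S, f ≠ 0 ∧ f ∈ supported k T ∧ f.totalDegree ≤ elimBound Z.card d := by
  by_contra! hno
  -- The generic point has the variables themselves as coordinates.
  let L := AlgebraicClosure (FractionRing (MvPolynomial σ k))
  have hinj : Function.Injective (algebraMap (MvPolynomial σ k) L) := by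
    rw [IsScalarTower.algebraMap_eq (MvPolynomial σ k) (FractionRing (MvPolynomial σ k)) L]
    exact (FaithfulSMul.algebraMap_injective (FractionRing (MvPolynomial σ k)) L).comp
      (IsFractionRing.injective _ _)
  have haev : ∀ f : MvPolynomial σ k,
      aeval (fun i => algebraMap (MvPolynomial σ k) L (X i)) f =
        algebraMap (MvPolynomial σ k) L f := by
    intro f
    have h := aeval_algebraMap_apply L (X : σ → MvPolynomial σ k) f
    rwa [aeval_X_left_apply] at h
  have h₀ : ∀ f : MvPolynomial σ k,
      aeval (fun i => algebraMap (MvPolynomial σ k) L (X i)) f = 0 → f = 0 := by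
    intro f hf
    rw [haev] at hf
    exact hinj (by rw [hf, map_zero])
  obtain ⟨ζ, hζT, hζ⟩ := exists_zero_of_elimination _ h₀ T Z (fun i => (hTZ i).1) d hd
    (Ideal.span S) (fun f hf hfT hfd => by
      by_contra hf0
      exact absurd hfd (not_le.2 (hno f hf hf0 hfT)))
  have hTu : T ∪ (Z : Set σ) = Set.univ := by
    ext i
    simp [hTZ, em]
  have hle : Ideal.span S ≤ RingHom.ker (aeval ζ : MvPolynomial σ k →ₐ[k] L) := by
    rw [Ideal.span_le]
    intro g hg
    exact hζ g (Ideal.subset_span hg) (by rw [hTu, supported_univ]; trivial) (hS g hg)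
  obtain ⟨f, hf, hf0, hfT⟩ := h
  have := hle hf
  rw [RingHom.mem_ker, aeval_congr_of_supported hζT hfT] at this
  exact hf0 (h₀ f this)

/-- Applies the `k`-linear functional `ℓ : K → k` to every coefficient of `p`. This is linear over
`k[σ]` (`coeffwise_mul_map`), so it maps the extension of an ideal to `K[σ]` back into the ideal
(`coeffwise_mem`). -/
noncomputable def coeffwise {K : Type*} [Field K] [Algebra k K] (ℓ : K →ₗ[k] k)
    (p : MvPolynomial σ K) : MvPolynomial σ k :=
  ∑ m ∈ p.support, monomial m (ℓ (coeff m p))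

lemma coeff_coeffwise {K : Type*} [Field K] [Algebra k K] (ℓ : K →ₗ[k] k)
    (p : MvPolynomial σ K) (m : σ →₀ ℕ) : coeff m (coeffwise ℓ p) = ℓ (coeff m p) := by
  classical
  rw [coeffwise, coeff_sum]
  simp only [coeff_monomial, Finset.sum_ite_eq']
  split_ifs with h
  · rfl
  · rw [notMem_support_iff.1 h, map_zero]

lemma coeffwise_mul_map {K : Type*} [Field K] [Algebra k K] (ℓ : K →ₗ[k] k)
    (p : MvPolynomial σ K) (g : MvPolynomial σ k) :
    coeffwise ℓ (p * map (algebraMap k K) g) = coeffwise ℓ p * g := by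
  classical
  ext m
  rw [coeff_coeffwise, coeff_mul, coeff_mul, map_sum]
  refine Finset.sum_congr rfl fun x _ => ?_
  rw [coeff_map, coeff_coeffwise, mul_comm, ← Algebra.smul_def, map_smul, smul_eq_mul, mul_comm]

lemma support_coeffwise {K : Type*} [Field K] [Algebra k K] (ℓ : K →ₗ[k] k)
    (p : MvPolynomial σ K) : (coeffwise ℓ p).support ⊆ p.support := by
  intro m hm
  rw [mem_support_iff, coeff_coeffwise] at hm
  exact mem_support_iff.2 fun h => hm (by rw [h, map_zero])

lemma coeffwise_mem {K : Type*} [Field K] [Algebra k K] (ℓ : K →ₗ[k] k)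
    {S : Set (MvPolynomial σ k)} {p : MvPolynomial σ K}
    (hp : p ∈ Ideal.span (map (algebraMap k K) '' S)) : coeffwise ℓ p ∈ Ideal.span S := by
  have hadd : ∀ p q : MvPolynomial σ K,
      coeffwise ℓ (p + q) = coeffwise ℓ p + coeffwise ℓ q := by
    intro p q
    ext m
    simp [coeff_coeffwise]
  -- The scalar-multiplication case of the induction needs the claim for all multiples of `p`.
  have key : ∀ q, coeffwise ℓ (q * p) ∈ Ideal.span S := by
    induction hp using Submodule.span_induction with
    | mem x hx =>
      obtain ⟨g, hg, rfl⟩ := hx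
      intro q
      rw [coeffwise_mul_map]
      exact Ideal.mul_mem_left _ _ (Ideal.subset_span hg)
    | zero =>
      intro q
      rw [mul_zero]
      simp [coeffwise]
    | add x y _ _ hx hy =>
      intro q
      rw [mul_add, hadd]
      exact add_mem (hx q) (hy q)
    | smul c x _ hx =>
      intro q
      rw [smul_eq_mul, ← mul_assoc]
      exact hx (q * c)
  simpa using key 1

/-- Effective elimination over an arbitrary field: an ideal generated in degree at most `d` that
meets `k[T]` nontrivially has a nonzero element there of degree at most `elimBound |Z| d`, with `Z`
the complement of `T`. -/
theorem exists_bounded {T : Set σ} {Z : Finset σ}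
    (hTZ : ∀ i, i ∈ Z ↔ i ∉ T) {d : ℕ} (hd : d ≠ 0) {S : Set (MvPolynomial σ k)}
    (hS : ∀ g ∈ S, g.totalDegree ≤ d)
    (h : ∃ f ∈ Ideal.span S, f ≠ 0 ∧ f ∈ supported k T) :
    ∃ f ∈ Ideal.span S, f ≠ 0 ∧ f ∈ supported k T ∧ f.totalDegree ≤ elimBound Z.card d := by
  let K := AlgebraicClosure k
  have : Infinite K := inferInstance
  have hinj : Function.Injective (map (σ := σ) (algebraMap k K)) :=
    map_injective _ (algebraMap k K).injective
  obtain ⟨F, hFI, hF0, hFT, hFd⟩ := exists_bounded_of_infinite (k := K) hTZ hd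
    (S := map (algebraMap k K) '' S)
    (by
      rintro _ ⟨g, hg, rfl⟩
      exact (Finset.sup_mono (support_map_subset _ _)).trans (hS g hg))
    (by
      obtain ⟨f, hf, hf0, hfT⟩ := h
      refine ⟨map (algebraMap k K) f, ?_, fun h0 => hf0 (hinj (by rw [h0, map_zero])), ?_⟩
      · rw [← Ideal.map_span]
        exact Ideal.mem_map_of_mem _ hf
      · rw [mem_supported] at hfT ⊢
        exact (Finset.coe_subset.2 (vars_map _ _)).trans hfT)
  obtain ⟨m, hm⟩ := ne_zero_iff.1 hF0
  obtain ⟨ℓ, hℓ⟩ : ∃ ℓ : K →ₗ[k] k, ℓ (coeff m F) ≠ 0 := by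
    by_contra! hno
    exact hm ((Module.forall_dual_apply_eq_zero_iff k _).1 hno)
  refine ⟨coeffwise ℓ F, coeffwise_mem ℓ hFI, ?_, ?_, ?_⟩
  · exact ne_zero_iff.2 ⟨m, by rwa [coeff_coeffwise]⟩
  · rw [mem_supported] at hFT ⊢
    intro i hi
    obtain ⟨m', hm', hi⟩ := (mem_vars_iff_mem_support i).1 hi
    exact hFT ((mem_vars_iff_mem_support i).2 ⟨m', support_coeffwise ℓ F hm', hi⟩)
  · refine le_trans (Finset.sup_mono (support_coeffwise ℓ F)) hFd

/-! ### Numerical bound and irreducible factors -/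

lemma two_mul_elimBound (l d : ℕ) : 2 * elimBound l d = (2 * d) ^ 2 ^ l := by
  induction l generalizing d with
  | zero => simp [elimBound]
  | succ l ih =>
    rw [elimBound, ih, pow_succ' 2 l, pow_mul]
    congr 1
    ring

lemma elimBound_le {l n d : ℕ} (hl : l < n) (hd : 1 < d) : elimBound l d ≤ 2 * d ^ 2 ^ n := by
  have h1 : (2 * d) ^ 2 ^ l ≤ d ^ 2 ^ n := calc
    (2 * d) ^ 2 ^ l ≤ (d ^ 2) ^ 2 ^ l := Nat.pow_le_pow_left (by nlinarith) _
    _ = d ^ 2 ^ (l + 1) := by rw [← pow_mul, pow_succ']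
    _ ≤ d ^ 2 ^ n := Nat.pow_le_pow_right (by omega) (Nat.pow_le_pow_right (by omega) hl)
  have := two_mul_elimBound l d
  omega

lemma vars_subset_of_dvd {p f : MvPolynomial σ k} (hf : f ≠ 0) (h : p ∣ f) :
    p.vars ⊆ f.vars := by
  classical
  obtain ⟨q, rfl⟩ := h
  intro i hi
  rw [mem_vars_iff_degreeOf_ne_zero] at hi ⊢
  rw [degreeOf_mul_eq (left_ne_zero_of_mul hf) (right_ne_zero_of_mul hf)]
  omega

lemma exists_irreducible_dvd_mem {I : Ideal (MvPolynomial σ k)} (hI : I ≠ ⊤) {b : ℕ}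
    (hprime : ∀ f g : MvPolynomial σ k, f.totalDegree ≤ b → g.totalDegree ≤ b →
      f * g ∈ I → f ∈ I ∨ g ∈ I)
    (f : MvPolynomial σ k) (hf0 : f ≠ 0) (hfI : f ∈ I) (hfb : f.totalDegree ≤ b) :
    ∃ p ∈ I, p ∣ f ∧ p.totalDegree ≤ b ∧ Irreducible p := by
  induction f using WfDvdMonoid.induction_on_irreducible with
  | zero => exact absurd rfl hf0
  | unit u hu => exact absurd (I.eq_top_of_isUnit_mem hfI hu) hI
  | mul a p ha hp ih =>
    rw [totalDegree_mul_of_isDomain hp.ne_zero ha] at hfb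
    rcases hprime p a (by omega) (by omega) hfI with h | h
    · exact ⟨p, h, dvd_mul_right p a, by omega, hp⟩
    · obtain ⟨q, hq, hqa, hqb, hqi⟩ := ih ha h (by omega)
      exact ⟨q, hq, hqa.mul_left p, hqb, hqi⟩

end BoundedElimination
/-- If `x₁,…,x_r` is a maximal algebraically independent set of
variables modulo `I` and `I` is prime up to `2·d^(2^n)`, then for each `j > r` there is an
irreducible `w_j ∈ I` involving only `x₁,…,x_r,x_j`, of positive `x_j`-degree and of
total degree at most `2·d^(2^n)`. -/
theorem irreducible_bounded_minimal_polynomials_exist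
    (k : Type*) [Field k] (n d r : ℕ) (hn : 1 < n) (hd : 1 < d) (hr : r ≤ n)
    (I : Ideal (MvPolynomial (Fin n) k))
    (S : Set (MvPolynomial (Fin n) k)) (hgen : I = Ideal.span S)
    (hdeg : ∀ g ∈ S, g.totalDegree ≤ d)
    (hind : ∀ f ∈ I, (∀ i ∈ MvPolynomial.vars f, (i : ℕ) < r) → f = 0)
    (hmaxind : ∀ j : Fin n, r ≤ (j : ℕ) →
      ∃ f ∈ I, f ≠ 0 ∧ ∀ i ∈ MvPolynomial.vars f, (i : ℕ) < r ∨ i = j)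
    (hprime : ∀ f g : MvPolynomial (Fin n) k,
      f.totalDegree ≤ 2 * d ^ 2 ^ n →
      g.totalDegree ≤ 2 * d ^ 2 ^ n →
      f * g ∈ I → f ∈ I ∨ g ∈ I) :
    ∀ j : Fin n, r ≤ (j : ℕ) →
      ∃ w ∈ I, (∀ i ∈ MvPolynomial.vars w, (i : ℕ) < r ∨ i = j) ∧
        0 < MvPolynomial.degreeOf j w ∧
        w.totalDegree ≤ 2 * d ^ 2 ^ n ∧
        Irreducible w := by
  classical
  intro j hj
  subst hgen
  let T : Set (Fin n) := {i | (i : ℕ) < r ∨ i = j}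
  let Z : Finset (Fin n) := Finset.univ.filter fun i => i ∉ T
  have hsupp : ∀ f : MvPolynomial (Fin n) k, f ∈ MvPolynomial.supported k T ↔
      ∀ i ∈ f.vars, (i : ℕ) < r ∨ i = j := fun f => MvPolynomial.mem_supported
  have hZ : Z.card < n := by
    have : Z ⊂ Finset.univ := Finset.ssubset_univ_iff.2 fun h => by
      have : j ∈ Z := h ▸ Finset.mem_univ j
      simp [Z, T] at this
    simpa using Finset.card_lt_card this
  obtain ⟨f, hfI, hf0, hfT⟩ := hmaxind j hj
  obtain ⟨g, hgI, hg0, hgT, hgd⟩ := BoundedElimination.exists_bounded (T := T) (Z := Z)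
    (by simp [Z]) (by omega) hdeg ⟨f, hfI, hf0, (hsupp f).2 hfT⟩
  have htop : Ideal.span S ≠ ⊤ := fun h =>
    one_ne_zero (hind 1 (h ▸ Submodule.mem_top) (by simp))
  obtain ⟨w, hwI, hwg, hwd, hw⟩ := BoundedElimination.exists_irreducible_dvd_mem htop hprime
    g hg0 hgI (hgd.trans (BoundedElimination.elimBound_le hZ hd))
  have hwT : ∀ i ∈ w.vars, (i : ℕ) < r ∨ i = j := fun i hi =>
    (hsupp g).1 hgT i (BoundedElimination.vars_subset_of_dvd hg0 hwg hi)
  refine ⟨w, hwI, hwT, Nat.pos_of_ne_zero fun h0 => ?_, hwd, hw⟩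
  -- A factor of `x_j`-degree zero would lie in `k[x₁, …, x_r]`, where `I` vanishes.
  refine hw.ne_zero (hind w hwI fun i hi => (hwT i hi).resolve_right ?_)
  rintro rfl
  exact MvPolynomial.mem_vars_iff_degreeOf_ne_zero.1 hi h0
end
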